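/- Let b > 0 and let E be a reduced minimal set of dimension d in the open ball B(0,b) ⊆ ℝⁿ, i.e., a reduced A-almost-minimal set of dimension d in B(0,b) with gauge function h = 0. Suppose there exist a ∈ [0,b) and a constant θ₀ ≥ 0 such that r^{−d} H^d(E ∩ B(0,r)) = θ₀ for all r with a < r < b. Then there is a reduced minimal cone C of dimension d in ℝⁿ, centered at the origin, such that E ∩ (B(0,b) ∖ closure(B(0,a))) = C ∩ (B(0,b) ∖ closure(B(0,a))). -/

import Mathlib

/-!
The classical proof would combine the regularity theory of minimal sets with the equality case of
the monotonicity formula. The argument below only needs rectifiability of `E`, as follows.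

*Rectifiability.* By the Besicovitch–Federer theorem (`besicovitch_federer`), almost every linear
image in `ℝᵈ` of a purely unrectifiable compact set `A` of finite `H^d` measure is null. Central
projections are linear in homogeneous coordinates, so almost all of those are null as well
(`projSet_null`). The Federer–Fleming projection onto the `d`-skeleton of a grid is built from
central projections; for a generic grid it therefore flattens `A` to a null set, up to a part near
the dual skeleton whose contribution is small on average over the position of the grid. Comparing
`E` with its deformation shows that a purely unrectifiable compact `A ⊆ E` is null
(`minimal_PU_null`), so `E` is, up to a null set, a countable union of pieces as close to
`d`-planes as desired (`exists_flat_pieces`).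

*First variation.* Write `v y` for the orthogonal projection of the position vector `y` on the
plane of the piece containing `y`. Deforming `E` by `y ↦ y + e ψ(y) y` gives, in the limit of
ever flatter pieces, `∫_E (d ψ + ⟨v, ∇ψ⟩) = 0` (`first_variation`). For a radial `ψ` whose gradient
lives in the annulus, the constant density gives `∫_E (d ψ + ⟨y, ∇ψ⟩) = 0` (`rad_stationary`). As
`∇ψ` is a multiple of `y`, the difference is a weighted integral of `‖y - v‖²`, so the normal part
of `y` vanishes almost everywhere in the annulus. Consequently `∫_E (d φ + ⟨y, ∇φ⟩) = 0` for every
`φ` supported in the annulus (`annulus_stationary`), that is, `l ^ d ∫_E φ(l y)` has zero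
derivative in `l`. Since `E` is reduced, it is invariant under dilations inside the annulus
(`ray_invariant`).

*The cone.* Let `C` be the cone over a spherical slice of `E` in the annulus (`sliceCone`). It
agrees with `E` there, and has the same measure in balls (`measure_sliceCone_eq`). By homogeneity it
suffices to test the minimality of `C` with maps `φ` that move only points of a ball of radius
`r ∈ (a, b)`. The radial map `stretch s r`, `a < s < r`, collapses `B(0, s)` to the origin and maps
`E ∩ B(0, r)` into `C ∩ B(0, r)`; hence `φ ∘ stretch s r` is a competitor for `E` whose image lies
in `φ(C)`, which yields the required inequality provided that this competitor fixes almost no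
point, as is the case for a suitable `s` (`exists_stretch_radius`, `sliceCone_minimal`).

In the degenerate cases `d = 0` and `d > n` the set `E` is empty in the annulus, and `C = ∅` works.
-/

open MeasureTheory Metric Set Filter Bornology
open scoped ENNReal NNReal Topology InnerProductSpace

noncomputable section

/-- `ℝⁿ` as a Euclidean space. -/
abbrev Euc (n : ℕ) : Type := EuclideanSpace ℝ (Fin n)

/-- The set `W_t = {x ∈ U : φ_t x ≠ x}` associated with a one-parameter family of maps. -/
def defW {n : ℕ} (U : Set (Euc n)) (φ : ℝ → Euc n → Euc n) (t : ℝ) : Set (Euc n) :=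
  {x ∈ U | φ t x ≠ x}

/-- The set `Ŵ = ⋃_{t ∈ [0,1]} (W_t ∪ φ_t(W_t))`. -/
def defWhat {n : ℕ} (U : Set (Euc n)) (φ : ℝ → Euc n → Euc n) : Set (Euc n) :=
  ⋃ t ∈ Icc (0:ℝ) 1, (defW U φ t ∪ φ t '' defW U φ t)

/-- An admissible `δ`-deformation in `U`: a one-parameter family `φ_t : U → U`,
`t ∈ [0,1]`, with `φ_0 = id`, jointly continuous, `φ_1` Lipschitz, and such that
`Ŵ` is relatively compact in `U` with `diam Ŵ < δ`. -/
def IsAdmissibleDef {n : ℕ} (U : Set (Euc n)) (δ : ℝ) (φ : ℝ → Euc n → Euc n) : Prop :=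
  (∀ t ∈ Icc (0:ℝ) 1, MapsTo (φ t) U U) ∧
  (∀ x ∈ U, φ 0 x = x) ∧
  ContinuousOn (fun p : ℝ × Euc n => φ p.1 p.2) (Icc (0:ℝ) 1 ×ˢ U) ∧
  (∃ K : ℝ≥0, LipschitzOnWith K (φ 1) U) ∧
  IsCompact (closure (defWhat U φ)) ∧
  closure (defWhat U φ) ⊆ U ∧
  Metric.diam (defWhat U φ) < δ

/-- `E` is an A-almost-minimal set of dimension `d` in the open set `U`, with gauge
function `h`: `E` is closed in `U`, has locally finite `H^d`-measure, and for every
`δ > 0` and every admissible `δ`-deformation `{φ_t}` in `U`,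
`H^d(E ∩ W₁) ≤ H^d(φ₁(E ∩ W₁)) + h(δ) δ^d`. -/
def IsAAlmostMinimal (n d : ℕ) (U E : Set (Euc n)) (h : ℝ → ℝ≥0∞) : Prop :=
  E ⊆ U ∧ closure E ∩ U ⊆ E ∧
  (∀ (x : Euc n) (r : ℝ), closedBall x r ⊆ U → μH[(d:ℝ)] (E ∩ closedBall x r) < ⊤) ∧
  ∀ δ : ℝ, 0 < δ → ∀ φ : ℝ → Euc n → Euc n, IsAdmissibleDef U δ φ →
    μH[(d:ℝ)] (E ∩ defW U φ 1) ≤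
      μH[(d:ℝ)] (φ 1 '' (E ∩ defW U φ 1)) + h δ * ENNReal.ofReal (δ ^ d)

/-- `E` is reduced: `H^d(E ∩ B(x,r)) > 0` for every `x ∈ E` and `r > 0`. -/
def IsReducedSet (n d : ℕ) (E : Set (Euc n)) : Prop :=
  ∀ x ∈ E, ∀ r : ℝ, 0 < r → 0 < μH[(d:ℝ)] (E ∩ ball x r)

/-- A (globally) minimal set of dimension `d` in `ℝⁿ` : a closed set with locally finite
`H^d`-measure such that `H^d(F ∖ φ(F)) ≤ H^d(φ(F) ∖ F)` for every Lipschitz map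
`φ : ℝⁿ → ℝⁿ` which differs from the identity only on a bounded set. -/
def IsMinimalSet (n d : ℕ) (F : Set (Euc n)) : Prop :=
  IsClosed F ∧
  (∀ R : ℝ, 0 < R → μH[(d:ℝ)] (F ∩ ball 0 R) < ⊤) ∧
  ∀ φ : Euc n → Euc n, (∃ K : ℝ≥0, LipschitzWith K φ) →
    IsBounded {x | φ x ≠ x} →
    μH[(d:ℝ)] (F \ φ '' F) ≤ μH[(d:ℝ)] (φ '' F \ F)

/-- A cone centered at the origin. -/
def IsConeAt0 {n : ℕ} (F : Set (Euc n)) : Prop :=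
  ∀ x ∈ F, ∀ l : ℝ, 0 < l → l • x ∈ F

/-! ### Hausdorff measure preliminaries -/

/-- `S` admits a bi-Lipschitz embedding into `ℝᵈ`. -/
def BiLip {n : ℕ} (d : ℕ) (S : Set (Euc n)) : Prop :=
  ∃ f : Euc n → Euc d, ∃ K : ℝ≥0, ∀ x ∈ S, ∀ y ∈ S,
    dist (f x) (f y) ≤ K * dist x y ∧ dist x y ≤ K * dist (f x) (f y)

/-- Pure unrectifiability, expressed through bi-Lipschitz pieces: every subset of `A` that embeds
bi-Lipschitzly into `ℝᵈ` is `H^d`-null. -/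
def PU {n : ℕ} (d : ℕ) (A : Set (Euc n)) : Prop :=
  ∀ S ⊆ A, BiLip d S → μH[(d : ℝ)] S = 0

lemma PU.mono {n d : ℕ} {A B : Set (Euc n)} (h : PU d A) (hBA : B ⊆ A) : PU d B :=
  fun S hS hb => h S (hS.trans hBA) hb

/-- A set of finite measure all of whose small pieces `U` carry mass at most `½ diam(U)^d` is
null: insert the hypothesis in the coverings that define the Hausdorff measure. -/
lemma null_of_small_density {n d : ℕ} {S : Set (Euc n)} (hS : μH[(d : ℝ)] S ≠ ⊤) {δ : ℝ≥0∞}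
    (hδ : 0 < δ)
    (h : ∀ U : Set (Euc n), ediam U ≤ δ →
      μH[(d : ℝ)] (S ∩ U) ≤ 2⁻¹ * ediam U ^ (d : ℝ)) : μH[(d : ℝ)] S = 0 := by
  have key : μH[(d : ℝ)] S ≤ 2⁻¹ * μH[(d : ℝ)] S := by
    have h1 : μH[(d : ℝ)] S ≤ 2⁻¹ * ⨅ (t : ℕ → Set (Euc n)) (_ : S ⊆ ⋃ n, t n)
        (_ : ∀ n, ediam (t n) ≤ δ), ∑' n, ⨆ _ : (t n).Nonempty, ediam (t n) ^ (d : ℝ) := by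
      simp_rw [ENNReal.mul_iInf_of_ne (show (2⁻¹ : ℝ≥0∞) ≠ 0 by simp)
        (show (2⁻¹ : ℝ≥0∞) ≠ ⊤ by simp)]
      refine le_iInf fun t => le_iInf fun ht => le_iInf fun htd => ?_
      calc μH[(d : ℝ)] S ≤ μH[(d : ℝ)] (⋃ k, S ∩ t k) := by
            apply measure_mono
            intro x hx
            obtain ⟨k, hk⟩ := mem_iUnion.1 (ht hx)
            exact mem_iUnion.2 ⟨k, hx, hk⟩
        _ ≤ ∑' k, μH[(d : ℝ)] (S ∩ t k) := measure_iUnion_le _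
        _ ≤ ∑' k, 2⁻¹ * ⨆ _ : (t k).Nonempty, ediam (t k) ^ (d : ℝ) := by
            refine ENNReal.tsum_le_tsum fun k => ?_
            by_cases hk : (t k).Nonempty
            · simpa [hk] using h (t k) (htd k)
            · rw [not_nonempty_iff_eq_empty.1 hk]; simp
        _ = _ := ENNReal.tsum_mul_left
    refine h1.trans ?_
    gcongr
    rw [Measure.hausdorffMeasure_apply (d : ℝ) S]
    exact le_iSup₂_of_le δ hδ le_rfl
  by_contra hne
  have : (2⁻¹ : ℝ≥0∞) * μH[(d : ℝ)] S < 1 * μH[(d : ℝ)] S := by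
    apply (ENNReal.mul_lt_mul_iff_left hne hS).2
    simp
  rw [one_mul] at this
  exact absurd key (not_le.2 this)

/-- Vitali's covering lemma with volume bookkeeping. -/
lemma vitali_sum {ι : Type*} {d : ℕ} (t : Set ι) (x : ι → Euc d) (r : ι → ℝ) (R : ℝ)
    (hr : ∀ a ∈ t, 0 < r a) (hR : ∀ a ∈ t, r a ≤ R) (Q : Set (Euc d))
    (hQ : ∀ a ∈ t, closedBall (x a) (r a) ⊆ Q) :
    ∃ u ⊆ t, u.Countable ∧ (∀ a ∈ t, ∃ b ∈ u, x a ∈ closedBall (x b) (5 * r b)) ∧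
      (∑' b : u, ENNReal.ofReal (r b ^ d)) * volume (ball (0 : Euc d) 1) ≤ volume Q := by
  obtain ⟨u, hut, hdis, hcov⟩ := Vitali.exists_disjoint_subfamily_covering_enlargement_closedBall
    t x r R hR 5 (by norm_num)
  have hc : u.Countable := by
    refine hdis.countable_of_nonempty_interior fun a ha => ?_
    exact ⟨x a, ball_subset_interior_closedBall (mem_ball_self (hr a (hut ha)))⟩
  refine ⟨u, hut, hc, fun a ha => ?_, ?_⟩
  · obtain ⟨b, hb, h⟩ := hcov a ha
    exact ⟨b, hb, h (mem_closedBall_self (hr a ha).le)⟩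
  · rw [← ENNReal.tsum_mul_right]
    calc ∑' b : u, ENNReal.ofReal (r b ^ d) * volume (ball (0 : Euc d) 1)
        = ∑' b : u, volume (closedBall (x b) (r b)) := by
          refine tsum_congr fun b => ?_
          rw [Measure.addHaar_closedBall _ _ (hr b (hut b.2)).le]
          simp
      _ = volume (⋃ b ∈ u, closedBall (x b) (r b)) :=
          (measure_biUnion hc hdis fun b _ => measurableSet_closedBall).symm
      _ ≤ volume Q := measure_mono (iUnion₂_subset fun b hb => hQ b (hut hb))

/-! ### Cones and pure unrectifiability -/

/-- If a purely unrectifiable set carries little mass in all the cones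
`{|M(y - x)| ≤ s|y - x|}` with vertex on it, it carries little mass altogether. -/
lemma cone_mass {N d : ℕ} {S : Set (Euc N)} (hPU : PU d S) (M : Euc N →L[ℝ] Euc d)
    {s δ lam : ℝ} (hs : 0 < s) (hs1 : s ≤ 1) (hlam : 0 ≤ lam)
    (h : ∀ x ∈ S, ∀ r, 0 < r → r < δ →
      μH[(d : ℝ)] (S ∩ {y | dist y x < r ∧ ‖M (y - x)‖ ≤ s * dist y x}) ≤
        ENNReal.ofReal (lam * (r * s) ^ d))
    (U : Set (Euc N)) (hU : ediam U ≤ ENNReal.ofReal (δ / 10)) (hδ : 0 < δ) :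
    μH[(d : ℝ)] (S ∩ U) ≤
      ENNReal.ofReal (2 * 40 ^ d * (‖M‖ + 1) ^ d * lam) * ediam U ^ (d : ℝ) := by
  have hUtop : ediam U ≠ ⊤ := (hU.trans_lt ENNReal.ofReal_lt_top).ne
  have hUb : IsBounded U := isBounded_iff_ediam_ne_top.2 hUtop
  have hdU : Metric.diam U ≤ δ / 10 := by
    rw [Metric.diam]; exact ENNReal.toReal_le_of_le_ofReal (by positivity) hU
  set D := Metric.diam U with hD
  have hD0 : 0 ≤ D := diam_nonneg
  set S1 := S ∩ U with hS1
  have hdist : ∀ x ∈ S1, ∀ y ∈ S1, dist y x ≤ D := fun x hx y hy =>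
    dist_le_diam_of_mem hUb hy.2 hx.2
  let T : Euc N → Set ℝ := fun x =>
    (fun y => dist y x) '' {y ∈ S1 | ‖M (y - x)‖ ≤ s / 4 * dist y x}
  let H : Euc N → ℝ := fun x => sSup (T x)
  have hTb : ∀ x ∈ S1, BddAbove (T x) := by
    rintro x hx
    refine ⟨D, ?_⟩
    rintro _ ⟨y, hy, rfl⟩
    exact hdist x hx y hy.1
  have hHle : ∀ x ∈ S1, ∀ y ∈ S1, ‖M (y - x)‖ ≤ s / 4 * dist y x → dist y x ≤ H x :=
    fun x hx y hy hc => le_csSup (hTb x hx) ⟨y, ⟨hy, hc⟩, rfl⟩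
  have hTne : ∀ x ∈ S1, (T x).Nonempty := fun x hx => ⟨dist x x, x, ⟨hx, by simp⟩, rfl⟩
  have hHD : ∀ x ∈ S1, H x ≤ D := by
    intro x hx
    refine csSup_le (hTne x hx) ?_
    rintro _ ⟨y, hy, rfl⟩
    exact hdist x hx y hy.1
  -- the points whose narrow cone is empty form a bi-Lipschitz piece
  have hzero : μH[(d : ℝ)] {x ∈ S1 | H x ≤ 0} = 0 := by
    refine hPU _ (fun x hx => hx.1.1) ⟨M, ⟨max ‖M‖ (4 / s), by positivity⟩, ?_⟩
    intro x hx y hy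
    have e : dist (M x) (M y) = ‖M (x - y)‖ := by rw [map_sub, dist_eq_norm]
    constructor
    · rw [e, dist_eq_norm]
      refine (M.le_opNorm _).trans ?_
      change _ ≤ max ‖M‖ (4 / s) * _
      gcongr; exact le_max_left _ _
    · change _ ≤ max ‖M‖ (4 / s) * _
      by_cases hxy : x = y
      · simp [hxy]
      have hpos : 0 < dist x y := dist_pos.2 hxy
      have : ¬ ‖M (x - y)‖ ≤ s / 4 * dist x y := by
        intro hc
        have := hHle y hy.1 x hx.1 hc
        linarith [hy.2]
      push Not at this
      calc dist x y = 4 / s * (s / 4 * dist x y) := by field_simp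
        _ ≤ max ‖M‖ (4 / s) * dist (M x) (M y) := by
          rw [e]; gcongr; exact le_max_right _ _
  set P := {x ∈ S1 | 0 < H x} with hP
  -- mass of a cylinder
  have hcyl : ∀ x ∈ P, μH[(d : ℝ)] (S1 ∩ {w | ‖M (w - x)‖ ≤ s * H x / 4}) ≤
      ENNReal.ofReal (2 * (lam * (2 * H x * s) ^ d)) := by
    rintro x ⟨hx, hH⟩
    obtain ⟨_, ⟨y, ⟨hy, hyc⟩, rfl⟩, hyH⟩ := exists_lt_of_lt_csSup (hTne x hx)
      (show 3 / 4 * H x < H x by linarith)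
    have hyH' : dist y x ≤ H x := hHle x hx y hy hyc
    have h2 : 2 * H x < δ := by
      have := hHD x hx
      linarith
    have hsub : S1 ∩ {w | ‖M (w - x)‖ ≤ s * H x / 4} ⊆
        (S ∩ {w | dist w x < 2 * H x ∧ ‖M (w - x)‖ ≤ s * dist w x}) ∪
        (S ∩ {w | dist w y < 2 * H x ∧ ‖M (w - y)‖ ≤ s * dist w y}) := by
      rintro w ⟨hw, hwc⟩
      simp only [mem_ofPred_eq] at hwc
      have hwH : dist w x ≤ H x := by
        by_contra hcon
        push Not at hcon
        have := hHle x hx w hw (by nlinarith)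
        linarith
      by_cases hq : H x / 4 ≤ dist w x
      · left
        exact ⟨hw.1, by linarith, by nlinarith⟩
      · right
        push Not at hq
        have t1 : dist y x ≤ dist w y + dist w x := by
          rw [dist_comm w y]; exact dist_triangle y w x
        have t2 : dist w y ≤ dist w x + dist y x := by
          rw [dist_comm y x]; exact dist_triangle w x y
        have t3 : ‖M (w - y)‖ ≤ ‖M (w - x)‖ + ‖M (y - x)‖ := by
          have : M (w - y) = M (w - x) - M (y - x) := by simp [map_sub]
          rw [this]; exact norm_sub_le _ _
        refine ⟨hw.1, by linarith, ?_⟩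
        have : s * (H x / 2) ≤ s * dist w y := by gcongr; linarith
        have : s / 4 * dist y x ≤ s / 4 * H x := by gcongr
        linarith
    have hlam2 : 0 ≤ lam * (2 * H x * s) ^ d := by positivity
    calc _ ≤ _ := measure_mono hsub
      _ ≤ _ := measure_union_le _ _
      _ ≤ ENNReal.ofReal (lam * (2 * H x * s) ^ d) + ENNReal.ofReal (lam * (2 * H x * s) ^ d) :=
          add_le_add (h x hx.1 _ (by linarith) h2) (h y hy.1 _ (by linarith) h2)
      _ = _ := by rw [← ENNReal.ofReal_add hlam2 hlam2]; ring_nf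
  -- Vitali covering in the image
  rcases S1.eq_empty_or_nonempty with hemp | ⟨x0, hx0⟩
  · rw [hemp]; simp
  obtain ⟨u, huP, huc, hcov, hsum⟩ := vitali_sum (d := d) P (fun x => M x) (fun x => s * H x / 20) D
    (fun x hx => by have := hx.2; positivity)
    (fun x hx => by have := hHD x hx.1; have := hx.2; nlinarith)
    (closedBall (M x0) ((‖M‖ + 1) * D)) (by
      intro x hx
      apply closedBall_subset_closedBall'
      have h1 : dist (M x) (M x0) ≤ ‖M‖ * D := by
        rw [dist_eq_norm, ← map_sub]
        refine (M.le_opNorm _).trans ?_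
        gcongr
        rw [← dist_eq_norm]; exact hdist _ hx0 _ hx.1
      have := hHD x hx.1
      have := hx.2
      nlinarith)
  have hPsub : P ⊆ ⋃ x ∈ u, S1 ∩ {w | ‖M (w - x)‖ ≤ s * H x / 4} := by
    intro w hw
    obtain ⟨x, hx, hwx⟩ := hcov w hw
    refine mem_iUnion₂.2 ⟨x, hx, hw.1, ?_⟩
    simp only [mem_closedBall, dist_eq_norm, ← map_sub] at hwx
    simp only [mem_ofPred_eq]
    linarith
  have hvol : (∑' b : u, ENNReal.ofReal ((s * H b / 20) ^ d)) ≤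
      ENNReal.ofReal (((‖M‖ + 1) * D) ^ d) := by
    rw [Measure.addHaar_closedBall _ _ (by positivity)] at hsum
    have hb0 : volume (ball (0 : Euc d) 1) ≠ 0 := (measure_ball_pos _ _ one_pos).ne'
    have hbt : volume (ball (0 : Euc d) 1) ≠ ⊤ := measure_ball_lt_top.ne
    have := (ENNReal.mul_le_mul_iff_left hb0 hbt).1 hsum
    simpa using this
  have hPm : μH[(d : ℝ)] P ≤ ENNReal.ofReal (2 * 40 ^ d * lam * ((‖M‖ + 1) * D) ^ d) := by
    calc μH[(d : ℝ)] P ≤ _ := measure_mono hPsub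
      _ ≤ ∑' x : u, μH[(d : ℝ)] (S1 ∩ {w | ‖M (w - x)‖ ≤ s * H x / 4}) :=
          measure_biUnion_le _ huc _
      _ ≤ ∑' x : u, ENNReal.ofReal (2 * 40 ^ d * lam) * ENNReal.ofReal ((s * H x / 20) ^ d) := by
          refine ENNReal.tsum_le_tsum fun x => ?_
          refine (hcyl x (huP x.2)).trans (le_of_eq ?_)
          rw [← ENNReal.ofReal_mul (by positivity)]
          congr 1
          rw [show 2 * H x * s = 40 * (s * H x / 20) by ring, mul_pow]
          ring
      _ = ENNReal.ofReal (2 * 40 ^ d * lam) * ∑' x : u, ENNReal.ofReal ((s * H x / 20) ^ d) :=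
          ENNReal.tsum_mul_left
      _ ≤ ENNReal.ofReal (2 * 40 ^ d * lam) * ENNReal.ofReal (((‖M‖ + 1) * D) ^ d) := by gcongr
      _ = _ := by rw [← ENNReal.ofReal_mul (by positivity)]
  have hsplit : S1 ⊆ P ∪ {x ∈ S1 | H x ≤ 0} := by
    intro x hx
    rcases lt_or_ge 0 (H x) with h0 | h0
    · exact Or.inl ⟨hx, h0⟩
    · exact Or.inr ⟨hx, h0⟩
  calc μH[(d : ℝ)] S1 ≤ _ := measure_mono hsplit
    _ ≤ _ := measure_union_le _ _
    _ ≤ ENNReal.ofReal (2 * 40 ^ d * lam * ((‖M‖ + 1) * D) ^ d) := by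
      rw [hzero, add_zero]; exact hPm
    _ = _ := by
      have : ediam U = ENNReal.ofReal D := (ENNReal.ofReal_toReal hUtop).symm
      rw [this, ENNReal.rpow_natCast, ← ENNReal.ofReal_pow hD0, ← ENNReal.ofReal_mul (by positivity),
        mul_pow]
      congr 1; ring

/-! ### A zero-infinity law for densities -/

lemma vol_diff_le_of_ratio {d : ℕ} {K : Set (Euc d)} (hK : MeasurableSet K) {z : Euc d} {r η : ℝ}
    (hr : 0 < r) (hη0 : 0 < η) (hη : η < 1)
    (h : ENNReal.ofReal (1 - η) < volume (K ∩ closedBall z r) / volume (closedBall z r)) :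
    volume (closedBall z r \ K) ≤
      ENNReal.ofReal (η * r ^ d) * volume (ball (0 : Euc d) 1) := by
  have hb0 : volume (closedBall z r) ≠ 0 := (measure_closedBall_pos _ _ hr).ne'
  have hbt : volume (closedBall z r) ≠ ⊤ := measure_closedBall_lt_top.ne
  have h1 := (ENNReal.lt_div_iff_mul_lt (Or.inl hb0) (Or.inl hbt)).1 h
  have h2 : volume (closedBall z r) = volume (K ∩ closedBall z r) + volume (closedBall z r \ K) := by
    rw [inter_comm]; exact (measure_inter_add_sdiff _ hK).symm
  have h3 : volume (closedBall z r) =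
      ENNReal.ofReal (1 - η) * volume (closedBall z r) + ENNReal.ofReal η * volume (closedBall z r) := by
    rw [← add_mul, ← ENNReal.ofReal_add (by linarith) hη0.le]; simp
  have h4 : ENNReal.ofReal (1 - η) * volume (closedBall z r) + volume (closedBall z r \ K) ≤
      ENNReal.ofReal (1 - η) * volume (closedBall z r) + ENNReal.ofReal η * volume (closedBall z r) := by
    rw [← h3]; nth_rw 2 [h2]; gcongr
  have h5 := (ENNReal.add_le_add_iff_left (ENNReal.mul_ne_top ENNReal.ofReal_ne_top hbt)).1 h4
  refine h5.trans (le_of_eq ?_)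
  rw [Measure.addHaar_closedBall _ _ hr.le, ← mul_assoc, ← ENNReal.ofReal_mul hη0.le]
  simp

/-- Measures living off a closed set `K`, with bounded density ratios at the points of `K`, have
vanishing density at almost every point of `K`. -/
lemma zero_density_of_closed {d : ℕ} (ν : ℕ → Measure (Euc d)) {Z K : Set (Euc d)}
    (hνZ : ∀ j, ν j Zᶜ = 0) (hK : IsClosed K) (hKZ : Disjoint K Z) {k : ℝ} (hk : 0 ≤ k)
    (hb : ∀ z ∈ K, ∀ s, 0 < s → s ≤ 1 → ∀ j, ν j (ball z s) ≤ ENNReal.ofReal (k * s ^ d)) :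
    ∀ᵐ z ∂(volume.restrict K), ∀ lam : ℝ, 0 < lam → ∃ s0 > 0, ∀ s, 0 < s → s < s0 → ∀ j,
      ν j (ball z s) ≤ ENNReal.ofReal (lam * s ^ d) := by
  filter_upwards [Besicovitch.ae_tendsto_measure_inter_div (volume : Measure (Euc d)) K,
    ae_restrict_mem hK.measurableSet] with z hz hzK lam hlam
  set η := min (1 / 2) (lam / (k * 20 ^ d + 1)) with hη
  have hη0 : 0 < η := by positivity
  have hη1 : η < 1 := (min_le_left _ _).trans_lt (by norm_num)
  have hη2 : k * 20 ^ d * η ≤ lam := by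
    have h1 : η ≤ lam / (k * 20 ^ d + 1) := min_le_right _ _
    rw [le_div_iff₀ (by positivity)] at h1
    nlinarith
  have hev : ∀ᶠ r in 𝓝[>] (0 : ℝ), ENNReal.ofReal (1 - η) <
      volume (K ∩ closedBall z r) / volume (closedBall z r) :=
    (tendsto_order.1 hz).1 _ (by
      rw [← ENNReal.ofReal_one]; exact (ENNReal.ofReal_lt_ofReal_iff one_pos).2 (by linarith))
  obtain ⟨r0, hr0, hr⟩ := mem_nhdsGT_iff_exists_Ioo_subset.1 hev
  simp only [mem_Ioi] at hr0
  refine ⟨min (r0 / 2) (1 / 5), by positivity, fun s hs hss j => ?_⟩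
  have hs1 : s < r0 / 2 := hss.trans_le (min_le_left _ _)
  have hs2 : s < 1 / 5 := hss.trans_le (min_le_right _ _)
  have hvol := vol_diff_le_of_ratio hK.measurableSet (show 0 < 2 * s by linarith) hη0 hη1
    (hr ⟨by linarith, by linarith⟩)
  have hKne : K.Nonempty := ⟨z, hzK⟩
  have hpos : ∀ w ∈ ball z s ∩ Z, 0 < infDist w K := fun w hw =>
    (hK.notMem_iff_infDist_pos hKne).1 fun hwK => hKZ.le_bot ⟨hwK, hw.2⟩
  have hlt : ∀ w ∈ ball z s ∩ Z, infDist w K < s := fun w hw =>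
    (infDist_le_dist_of_mem hzK).trans_lt hw.1
  obtain ⟨u, hu, huc, hcov, hsum⟩ := vitali_sum (d := d) (ball z s ∩ Z) (fun w => w)
    (fun w => infDist w K / 2) s (fun w hw => by have := hpos w hw; linarith)
    (fun w hw => by have := hlt w hw; have := hpos w hw; linarith) (closedBall z (2 * s) \ K) (by
      intro w hw y hy
      have h1 := hlt w hw
      have h2 := hpos w hw
      have h3 : dist w z < s := hw.1
      rw [mem_closedBall] at hy
      refine ⟨?_, fun hyK => ?_⟩
      · rw [mem_closedBall]; linarith [dist_triangle y w z]
      · have := infDist_le_dist_of_mem (x := w) hyK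
        rw [dist_comm] at this
        linarith)
  have hb0 : volume (ball (0 : Euc d) 1) ≠ 0 := (measure_ball_pos _ _ one_pos).ne'
  have hbt : volume (ball (0 : Euc d) 1) ≠ ⊤ := measure_ball_lt_top.ne
  have hsum' := (ENNReal.mul_le_mul_iff_left hb0 hbt).1 (hsum.trans hvol)
  have hone : ∀ b ∈ u, ν j (closedBall b (5 * (infDist b K / 2))) ≤
      ENNReal.ofReal (k * 10 ^ d) * ENNReal.ofReal ((infDist b K / 2) ^ d) := by
    intro b hbu
    have h1 := hlt b (hu hbu)
    have h2 := hpos b (hu hbu)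
    obtain ⟨q, hq, hbq⟩ := (infDist_lt_iff hKne).1 (show infDist b K < 2 * infDist b K by linarith)
    have : closedBall b (5 * (infDist b K / 2)) ⊆ ball q (10 * (infDist b K / 2)) := by
      intro y hy
      rw [mem_closedBall] at hy
      rw [mem_ball]
      linarith [dist_triangle y b q]
    refine (measure_mono this).trans ((hb q hq _ (by linarith) (by linarith) j).trans (le_of_eq ?_))
    rw [← ENNReal.ofReal_mul (by positivity), mul_pow]
    ring_nf
  calc ν j (ball z s) ≤ ν j ((ball z s ∩ Z) ∪ Zᶜ) := measure_mono fun y hy => by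
        by_cases hyZ : y ∈ Z
        · exact Or.inl ⟨hy, hyZ⟩
        · exact Or.inr hyZ
    _ ≤ ν j (ball z s ∩ Z) + ν j Zᶜ := measure_union_le _ _
    _ = ν j (ball z s ∩ Z) := by rw [hνZ, add_zero]
    _ ≤ ν j (⋃ b ∈ u, closedBall b (5 * (infDist b K / 2))) := measure_mono fun y hy => by
        obtain ⟨b, hbu, hyb⟩ := hcov y hy
        exact mem_iUnion₂.2 ⟨b, hbu, hyb⟩
    _ ≤ ∑' b : u, ν j (closedBall (b : Euc d) (5 * (infDist (b : Euc d) K / 2))) :=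
        measure_biUnion_le _ huc _
    _ ≤ ∑' b : u, ENNReal.ofReal (k * 10 ^ d) * ENNReal.ofReal ((infDist (b : Euc d) K / 2) ^ d) :=
        ENNReal.tsum_le_tsum fun b => hone b b.2
    _ = ENNReal.ofReal (k * 10 ^ d) * ∑' b : u, ENNReal.ofReal ((infDist (b : Euc d) K / 2) ^ d) :=
        ENNReal.tsum_mul_left
    _ ≤ ENNReal.ofReal (k * 10 ^ d) * ENNReal.ofReal (η * (2 * s) ^ d) := by gcongr
    _ ≤ ENNReal.ofReal (lam * s ^ d) := by
        rw [← ENNReal.ofReal_mul (by positivity)]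
        apply ENNReal.ofReal_le_ofReal
        have : k * 10 ^ d * (η * (2 * s) ^ d) = k * 20 ^ d * η * s ^ d := by
          rw [mul_pow, show (20 : ℝ) = 10 * 2 by norm_num, mul_pow]; ring
        rw [this]; gcongr

/-- For measures `ν_j` carried by `Z`, at almost every point outside `Z` the upper density of
`⨆ ν_j` is either infinite or zero. Radii run through powers of `1/2`, which keeps everything
measurable. -/
lemma zero_infty_law {d : ℕ} (ν : ℕ → Measure (Euc d)) [∀ j, IsFiniteMeasure (ν j)]
    {Z : Set (Euc d)} (hZ : MeasurableSet Z) (hνZ : ∀ j, ν j Zᶜ = 0) :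
    ∀ᵐ z, z ∈ Z ∨
      (∀ k : ℕ, ∃ m j : ℕ, ENNReal.ofReal (k * ((1 / 2) ^ m) ^ d) < ν j (ball z ((1 / 2) ^ m))) ∨
      (∀ k : ℕ, ∃ p : ℕ, ∀ v, p ≤ v → ∀ j,
        ν j (ball z ((1 / 2) ^ v)) ≤ ENNReal.ofReal (1 / (k + 1) * ((1 / 2) ^ v) ^ d)) := by
  let G : ℕ → Set (Euc d) := fun k =>
    {z | ∀ m j : ℕ, ν j (ball z ((1 / 2) ^ m)) ≤ ENNReal.ofReal (k * ((1 / 2) ^ m) ^ d)} \ Z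
  have hmeas : ∀ (j : ℕ) (s : ℝ), Measurable fun z => ν j (ball z s) := by
    intro j s
    have : MeasurableSet {p : Euc d × Euc d | dist p.2 p.1 < s} :=
      measurableSet_lt (by fun_prop) (by fun_prop)
    exact measurable_measure_prodMk_left (ν := ν j) this
  have hG : ∀ k, MeasurableSet (G k) := by
    intro k
    refine MeasurableSet.diff ?_ hZ
    simp only [ofPred_forall]
    exact MeasurableSet.iInter fun m => MeasurableSet.iInter fun j =>
      measurableSet_le (hmeas j _) measurable_const
  let P : Euc d → Prop := fun z => ∀ lam : ℝ, 0 < lam → ∃ s0 > 0, ∀ s, 0 < s → s < s0 → ∀ j,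
      ν j (ball z s) ≤ ENNReal.ofReal (lam * s ^ d)
  have hGb : ∀ k, ∀ z ∈ G k, ∀ s, 0 < s → s ≤ 1 → ∀ j,
      ν j (ball z s) ≤ ENNReal.ofReal ((k * 2 ^ d) * s ^ d) := by
    intro k z hz s hs hs1 j
    obtain ⟨m, hm1, hm2⟩ := exists_nat_pow_near_of_lt_one hs hs1 (show (0 : ℝ) < 1 / 2 by norm_num)
      (by norm_num)
    refine (measure_mono (ball_subset_ball hm2)).trans ((hz.1 m j).trans ?_)
    apply ENNReal.ofReal_le_ofReal
    rw [mul_assoc, ← mul_pow]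
    gcongr
    rw [pow_succ] at hm1
    linarith
  have hP : ∀ k q : ℕ, volume {z ∈ G k ∩ ball 0 q | ¬ P z} = 0 := by
    intro k q
    have hfin : volume (G k ∩ ball (0 : Euc d) q) ≠ ⊤ :=
      ((measure_mono inter_subset_right).trans_lt measure_ball_lt_top).ne
    refine le_antisymm (ENNReal.le_of_forall_pos_le_add fun ε hε _ => ?_) (zero_le)
    obtain ⟨K, hKs, hKc, hKε⟩ := ((hG k).inter measurableSet_ball).exists_isClosed_sdiff_lt hfin
      (show (ε : ℝ≥0∞) ≠ 0 by exact_mod_cast hε.ne')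
    have h0 := zero_density_of_closed ν hνZ hKc
      (disjoint_left.2 fun z hz hzZ => (hKs hz).1.2 hzZ) (k := k * 2 ^ d) (by positivity)
      (fun z hz => hGb k z (hKs hz).1)
    rw [ae_restrict_iff' hKc.measurableSet] at h0
    have hsub : {z ∈ G k ∩ ball 0 (q : ℝ) | ¬ P z} ⊆
        ((G k ∩ ball 0 (q : ℝ)) \ K) ∪ {z | ¬ (z ∈ K → P z)} := by
      rintro z ⟨hz, hzP⟩
      by_cases hzK : z ∈ K
      · right; exact fun h => hzP (h hzK)
      · left; exact ⟨hz, hzK⟩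
    calc _ ≤ _ := measure_mono hsub
      _ ≤ _ := measure_union_le _ _
      _ ≤ ε + 0 := add_le_add hKε.le (le_of_eq h0)
      _ = 0 + ε := by ring
  have hnull : volume (⋃ k : ℕ, ⋃ q : ℕ, {z ∈ G k ∩ ball 0 (q : ℝ) | ¬ P z}) = 0 :=
    measure_iUnion_null fun k => measure_iUnion_null fun q => hP k q
  filter_upwards [measure_eq_zero_iff_ae_notMem.1 hnull] with z hz
  by_cases hzZ : z ∈ Z
  · exact Or.inl hzZ
  right
  by_cases hinf : ∀ k : ℕ, ∃ m j : ℕ,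
      ENNReal.ofReal (k * ((1 / 2) ^ m) ^ d) < ν j (ball z ((1 / 2) ^ m))
  · exact Or.inl hinf
  right
  push Not at hinf
  obtain ⟨k, hk⟩ := hinf
  have hzG : z ∈ G k := ⟨hk, hzZ⟩
  obtain ⟨q, hq⟩ := exists_nat_gt (dist z 0)
  have hPz : P z := by
    by_contra hcon
    exact hz (mem_iUnion.2 ⟨k, mem_iUnion.2 ⟨q, ⟨hzG, hq⟩, hcon⟩⟩)
  intro k'
  obtain ⟨s0, hs0, hs⟩ := hPz (1 / (k' + 1)) (by positivity)
  obtain ⟨p, hp⟩ := exists_pow_lt_of_lt_one hs0 (show (1 / 2 : ℝ) < 1 by norm_num)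
  refine ⟨p, fun v hv j => hs _ (by positivity) (lt_of_le_of_lt ?_ hp) j⟩
  exact pow_le_pow_of_le_one (by norm_num) (by norm_num) hv

/-- Translation trick: a measurable set which meets, for every `h`, the set `h + ι(G)` in a null set
of parameters is itself null. -/
lemma null_of_translates {G H : Type*} [NormedAddCommGroup G] [NormedSpace ℝ G]
    [FiniteDimensional ℝ G] [MeasurableSpace G] [BorelSpace G]
    [NormedAddCommGroup H] [NormedSpace ℝ H]
    [FiniteDimensional ℝ H] [MeasurableSpace H] [BorelSpace H]
    (mG : Measure G) [mG.IsAddHaarMeasure] (mH : Measure H) [mH.IsAddHaarMeasure]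
    {ι : G → H} (hι : Measurable ι) {S : Set H} (hS : MeasurableSet S)
    (h : ∀ x : H, ∀ᵐ g ∂mG, x + ι g ∉ S) : mH S = 0 := by
  have hm : MeasurableSet {p : G × H | p.2 + ι p.1 ∈ S} := by
    exact hS.preimage (measurable_snd.add (hι.comp measurable_fst))
  have hm' : MeasurableSet {p : H × G | p.1 + ι p.2 ∈ S} := by
    exact hS.preimage (measurable_fst.add (hι.comp measurable_snd))
  have h2 : (mH.prod mG) {p : H × G | p.1 + ι p.2 ∈ S} = 0 := by
    rw [Measure.measure_prod_null hm']
    refine Eventually.of_forall fun x => ?_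
    have := h x
    rw [ae_iff] at this
    simpa using this
  have h1 : (mG.prod mH) {p : G × H | p.2 + ι p.1 ∈ S} = 0 := by
    rw [← Measure.prod_swap, Measure.map_apply measurable_swap hm]
    exact h2
  rw [Measure.measure_prod_null hm] at h1
  obtain ⟨g, hg⟩ := h1.exists
  have hg' : mH ((fun x => x + ι g) ⁻¹' S) = 0 := hg
  rwa [measure_preimage_add_right] at hg'

/-! ### Fibres and densities of linear images -/

lemma hausdorff_null_of_volume_null {d : ℕ} {S : Set (Euc d)} (h : volume S = 0) :
    μH[(d : ℝ)] S = 0 := by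
  exact Measure.absolutelyContinuous_isAddHaarMeasure (μH[(d : ℝ)] : Measure (Euc d)) volume h

lemma volume_null_of_hausdorff_null {d : ℕ} {S : Set (Euc d)} (h : μH[(d : ℝ)] S = 0) :
    volume S = 0 := by
  exact Measure.absolutelyContinuous_isAddHaarMeasure volume (μH[(d : ℝ)] : Measure (Euc d)) h

lemma vol_image_le {N d : ℕ} (T : Euc N →L[ℝ] Euc d) (U : Set (Euc N)) (hU : U.Nonempty)
    (hUt : ediam U ≠ ⊤) :
    volume (T '' U) ≤
      ENNReal.ofReal (‖T‖ ^ d) * volume (ball (0 : Euc d) 1) * ediam U ^ (d : ℝ) := by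
  obtain ⟨x, hx⟩ := hU
  have hb : IsBounded U := isBounded_iff_ediam_ne_top.2 hUt
  have hsub : T '' U ⊆ closedBall (T x) (‖T‖ * Metric.diam U) := by
    rintro _ ⟨y, hy, rfl⟩
    rw [mem_closedBall, dist_eq_norm, ← map_sub]
    refine (T.le_opNorm _).trans ?_
    gcongr
    rw [← dist_eq_norm]; exact dist_le_diam_of_mem hb hy hx
  refine (measure_mono hsub).trans (le_of_eq ?_)
  rw [Measure.addHaar_closedBall _ _ (mul_nonneg (norm_nonneg _) diam_nonneg),
    ← ENNReal.ofReal_toReal hUt]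
  simp only [finrank_euclideanSpace, Fintype.card_fin, ENNReal.rpow_natCast]
  rw [mul_pow, ENNReal.ofReal_mul (by positivity), ← ENNReal.ofReal_pow (by positivity), Metric.diam]
  ring

/-- Almost every fibre of a linear map on a compact set of finite `H^d` measure is finite. -/
lemma infinite_fibres_null {N d : ℕ} {A : Set (Euc N)} (hA : IsCompact A)
    (hAf : μH[(d : ℝ)] A ≠ ⊤) (T : Euc N →L[ℝ] Euc d) :
    volume {z : Euc d | (A ∩ T ⁻¹' {z}).Infinite} = 0 := by
  set C : ℝ≥0∞ := ENNReal.ofReal (‖T‖ ^ d) * volume (ball (0 : Euc d) 1) with hC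
  have hCt : C ≠ ⊤ := ENNReal.mul_ne_top ENNReal.ofReal_ne_top measure_ball_lt_top.ne
  let Z : ℕ → ℕ → Set (Euc d) := fun k p =>
    {z | ∃ F : Finset (Euc N), F.card = k ∧ (F : Set (Euc N)) ⊆ A ∩ T ⁻¹' {z} ∧
      ∀ x ∈ F, ∀ y ∈ F, x ≠ y → 1 / ((p : ℝ) + 1) < dist x y}
  have hbound : ∀ k p : ℕ, (k : ℝ≥0∞) * volume (Z k p) ≤ C * (μH[(d : ℝ)] A + 1) := by
    intro k p
    have hlt : (⨅ (t : ℕ → Set (Euc N)) (_ : A ⊆ ⋃ n, t n)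
        (_ : ∀ n, ediam (t n) ≤ ENNReal.ofReal (1 / ((p : ℝ) + 1))),
          ∑' n, ⨆ _ : (t n).Nonempty, ediam (t n) ^ (d : ℝ)) < μH[(d : ℝ)] A + 1 := by
      refine lt_of_le_of_lt ?_ (ENNReal.lt_add_right hAf one_ne_zero)
      rw [Measure.hausdorffMeasure_apply (d : ℝ) A]
      exact le_iSup₂_of_le (ENNReal.ofReal (1 / ((p : ℝ) + 1)))
        (ENNReal.ofReal_pos.2 (by positivity)) le_rfl
    simp only [iInf_lt_iff] at hlt
    obtain ⟨t, htA, htd, hts⟩ := hlt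
    let V : ℕ → Set (Euc d) := fun n => T '' (closure (t n) ∩ A)
    have hV : ∀ n, MeasurableSet (V n) := fun n =>
      ((hA.inter_left isClosed_closure).image T.continuous).isClosed.measurableSet
    let g : Euc d → ℝ≥0∞ := fun z => ∑' n, (V n).indicator (fun _ => (1 : ℝ≥0∞)) z
    have hg : Measurable g := Measurable.tsum fun n => measurable_const.indicator (hV n)
    have hZg : Z k p ⊆ {z | (k : ℝ≥0∞) ≤ g z} := by
      rintro z ⟨F, hFk, hFA, hFd⟩
      have hch : ∀ x : F, ∃ n, (x : Euc N) ∈ t n := fun x =>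
        mem_iUnion.1 (htA (hFA x.2).1)
      choose f hf using hch
      have hinj : Function.Injective f := by
        intro x y hxy
        by_contra hne
        have h1 := hFd x x.2 y y.2 (fun h => hne (Subtype.ext h))
        have h2 : edist (x : Euc N) y ≤ ENNReal.ofReal (1 / ((p : ℝ) + 1)) :=
          (edist_le_ediam_of_mem (hf x) (hxy ▸ hf y)).trans (htd _)
        rw [edist_dist, ENNReal.ofReal_le_ofReal_iff (by positivity)] at h2
        linarith
      change (k : ℝ≥0∞) ≤ g z
      calc (k : ℝ≥0∞) = ∑ n ∈ Finset.univ.image f, (1 : ℝ≥0∞) := by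
            rw [Finset.sum_const, Finset.card_image_of_injective _ hinj]
            simp [hFk]
        _ = ∑ n ∈ Finset.univ.image f, (V n).indicator (fun _ => (1 : ℝ≥0∞)) z := by
            refine Finset.sum_congr rfl fun n hn => ?_
            obtain ⟨x, -, rfl⟩ := Finset.mem_image.1 hn
            rw [indicator_of_mem]
            exact ⟨x, ⟨subset_closure (hf x), (hFA x.2).1⟩, (hFA x.2).2⟩
        _ ≤ g z := ENNReal.sum_le_tsum _
    calc (k : ℝ≥0∞) * volume (Z k p) ≤ k * volume {z | (k : ℝ≥0∞) ≤ g z} := by gcongr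
      _ ≤ ∫⁻ z, g z := mul_meas_ge_le_lintegral hg _
      _ = ∑' n, volume (V n) := by
          rw [lintegral_tsum fun n => (measurable_const.indicator (hV n)).aemeasurable]
          refine tsum_congr fun n => ?_
          rw [lintegral_indicator (hV n)]; simp
      _ ≤ ∑' n, C * ⨆ _ : (t n).Nonempty, ediam (t n) ^ (d : ℝ) := by
          refine ENNReal.tsum_le_tsum fun n => ?_
          by_cases hn : (t n).Nonempty
          · have : ediam (closure (t n)) = ediam (t n) := ediam_closure _
            calc volume (V n) ≤ volume (T '' closure (t n)) :=
                  measure_mono (image_mono inter_subset_left)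
              _ ≤ C * ediam (closure (t n)) ^ (d : ℝ) :=
                  vol_image_le T _ hn.closure
                    (by rw [this]; exact ((htd n).trans_lt ENNReal.ofReal_lt_top).ne)
              _ = _ := by rw [this]; simp [hn]
          · have : V n = ∅ := by simp [V, not_nonempty_iff_eq_empty.1 hn]
            rw [this]; simp
      _ = C * _ := ENNReal.tsum_mul_left
      _ ≤ C * (μH[(d : ℝ)] A + 1) := by gcongr
  have hmono : ∀ k, Monotone (Z k) := by
    rintro k p q hpq z ⟨F, h1, h2, h3⟩
    refine ⟨F, h1, h2, fun x hx y hy hxy => lt_of_le_of_lt ?_ (h3 x hx y hy hxy)⟩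
    have : (p : ℝ) ≤ q := by exact_mod_cast hpq
    gcongr
  have hsub : ∀ k, {z : Euc d | (A ∩ T ⁻¹' {z}).Infinite} ⊆ ⋃ p, Z k p := by
    intro k z hz
    obtain ⟨F, hF, hFk⟩ := Set.Infinite.exists_subset_card_eq hz k
    have : ∀ᶠ p : ℕ in atTop, ∀ x ∈ F, ∀ y ∈ F, x ≠ y → 1 / ((p : ℝ) + 1) < dist x y := by
      rw [Filter.eventually_all_finset]; intro x hx
      rw [Filter.eventually_all_finset]; intro y hy
      by_cases hxy : x = y
      · simp [hxy]
      · filter_upwards [(tendsto_order.1 tendsto_one_div_add_atTop_nhds_zero_nat).2 _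
          (dist_pos.2 hxy)] with p hp _ using hp
    obtain ⟨p, hp⟩ := this.exists
    exact mem_iUnion.2 ⟨p, F, hFk, hF, hp⟩
  have hle : ∀ k : ℕ, (k : ℝ≥0∞) * volume {z : Euc d | (A ∩ T ⁻¹' {z}).Infinite} ≤
      C * (μH[(d : ℝ)] A + 1) := by
    intro k
    calc _ ≤ (k : ℝ≥0∞) * volume (⋃ p, Z k p) := by gcongr; exact hsub k
      _ = ⨆ p, (k : ℝ≥0∞) * volume (Z k p) := by
          rw [(hmono k).measure_iUnion, ENNReal.mul_iSup]
      _ ≤ _ := iSup_le (hbound k)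
  by_contra hne
  have hfin : C * (μH[(d : ℝ)] A + 1) ≠ ⊤ := ENNReal.mul_ne_top hCt (by simp [hAf])
  obtain ⟨k, hk⟩ := ENNReal.exists_nat_mul_gt hne hfin
  exact absurd (hle k) (not_le.2 hk)

/-- A finite measure on `ℝᵈ` has infinite density only on a Lebesgue-null set. -/
lemma infinite_density_null {d : ℕ} (ν : Measure (Euc d)) [IsFiniteMeasure ν] :
    volume {z : Euc d | ∀ k : ℕ, ∃ m : ℕ,
      ENNReal.ofReal (k * ((1 / 2) ^ m) ^ d) < ν (ball z ((1 / 2) ^ m))} = 0 := by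
  rw [measure_eq_zero_iff_ae_notMem]
  filter_upwards [Besicovitch.ae_tendsto_rnDeriv ν volume, ν.rnDeriv_lt_top volume] with z hz hlt hbad
  set L := ν.rnDeriv volume z
  have hev : ∀ᶠ r in 𝓝[>] (0 : ℝ), ν (closedBall z r) / volume (closedBall z r) < L + 1 :=
    (tendsto_order.1 hz).2 _ (ENNReal.lt_add_right hlt.ne one_ne_zero)
  obtain ⟨r0, hr0, hr⟩ := mem_nhdsGT_iff_exists_Ioo_subset.1 hev
  simp only [mem_Ioi] at hr0
  obtain ⟨m0, hm0⟩ := exists_pow_lt_of_lt_one hr0 (show (1 / 2 : ℝ) < 1 by norm_num)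
  set ω := volume (ball (0 : Euc d) 1)
  have hω : ω ≠ ⊤ := measure_ball_lt_top.ne
  have hL : (L + 1) * ω + ν univ * ENNReal.ofReal ((2 ^ m0) ^ d) ≠ ⊤ := by
    refine ENNReal.add_ne_top.2 ⟨ENNReal.mul_ne_top ?_ hω, ENNReal.mul_ne_top ?_ ?_⟩
    · exact ENNReal.add_ne_top.2 ⟨hlt.ne, ENNReal.one_ne_top⟩
    · exact measure_ne_top _ _
    · exact ENNReal.ofReal_ne_top
  obtain ⟨k, hk⟩ := ENNReal.exists_nat_gt hL
  obtain ⟨m, hm⟩ := hbad k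
  have hpos : (0 : ℝ) < (1 / 2) ^ m := by positivity
  refine absurd hm (not_lt.2 ?_)
  rw [ENNReal.ofReal_mul (by positivity), ENNReal.ofReal_natCast]
  refine le_trans ?_ (mul_le_mul_left hk.le _)
  rw [add_mul]
  rcases le_or_gt m0 m with hmm | hmm
  · have h1 : (1 / 2 : ℝ) ^ m < r0 :=
      (pow_le_pow_of_le_one (by norm_num) (by norm_num) hmm).trans_lt hm0
    have h2 := hr ⟨hpos, h1⟩
    have h3 := (ENNReal.div_lt_iff (Or.inl (measure_closedBall_pos _ _ hpos).ne')
      (Or.inl measure_closedBall_lt_top.ne)).1 h2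
    rw [Measure.addHaar_closedBall volume _ hpos.le] at h3
    simp only [finrank_euclideanSpace, Fintype.card_fin] at h3
    refine (measure_mono ball_subset_closedBall).trans (h3.le.trans ?_)
    refine le_trans (le_of_eq ?_) (le_self_add)
    ring
  · refine le_trans ?_ (le_add_self)
    refine (measure_mono (subset_univ _)).trans ?_
    rw [mul_assoc, ← ENNReal.ofReal_mul (by positivity), ← mul_pow]
    have : (1 : ℝ) ≤ (2 ^ m0 * (1 / 2) ^ m) ^ d := by
      apply one_le_pow₀
      have h4 : (1 / 2 : ℝ) ^ m0 ≤ (1 / 2) ^ m :=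
        pow_le_pow_of_le_one (by norm_num) (by norm_num) hmm.le
      calc (1 : ℝ) = 2 ^ m0 * (1 / 2) ^ m0 := by rw [← mul_pow]; norm_num
        _ ≤ _ := by gcongr
    calc ν univ = ν univ * ENNReal.ofReal 1 := by simp
      _ ≤ _ := by gcongr

/-! ### The Besicovitch–Federer projection theorem -/

/-- The linear map `ℝᴺ → ℝᵈ` with columns `M`. -/
def lin {N d : ℕ} (M : Fin N → Euc d) : Euc N →L[ℝ] Euc d :=
  ∑ i, (EuclideanSpace.proj i : Euc N →L[ℝ] ℝ).smulRight (M i)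

lemma lin_apply {N d : ℕ} (M : Fin N → Euc d) (y : Euc N) : lin M y = ∑ i, y i • M i := by
  simp [lin]

lemma lin_add_single {N d : ℕ} (M : Fin N → Euc d) (i : Fin N) (z : Euc d) (y : Euc N) :
    lin (M + Pi.single i z) y = lin M y + y i • z := by
  simp only [lin_apply, Pi.add_apply, smul_add, Finset.sum_add_distrib]
  congr 1
  rw [Finset.sum_eq_single i]
  · simp
  · intro j _ hj; simp [Pi.single_eq_of_ne hj]
  · simp

@[fun_prop]
lemma continuous_lin {N d : ℕ} {X : Type*} [TopologicalSpace X] {f : X → Fin N → Euc d}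
    {g : X → Euc N} (hf : Continuous f) (hg : Continuous g) :
    Continuous fun p => lin (f p) (g p) := by
  simp only [lin_apply]
  fun_prop

lemma exists_coord {N : ℕ} (w : Euc N) (hw : w ≠ 0) : ∃ i, ‖w‖ ≤ N * |w i| := by
  by_contra hcon
  push Not at hcon
  have h1 : ‖w‖ ≤ ∑ i, |w i| := by
    have h := (EuclideanSpace.basisFun (Fin N) ℝ).sum_repr w
    calc ‖w‖ = ‖∑ i, (EuclideanSpace.basisFun (Fin N) ℝ).repr w i •
          EuclideanSpace.basisFun (Fin N) ℝ i‖ := by rw [h]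
      _ ≤ _ := norm_sum_le _ _
      _ = ∑ i, |w i| := by simp [norm_smul]
  have hN : (0 : ℝ) < N := by
    rcases Nat.eq_zero_or_pos N with h0 | h0
    · subst h0; exact absurd (Subsingleton.elim w 0) hw
    · exact_mod_cast h0
  have h2 : (N : ℝ) * ∑ i, |w i| < N * ‖w‖ := by
    rw [Finset.mul_sum]
    calc ∑ i, N * |w i| < ∑ _i : Fin N, ‖w‖ := by
          apply Finset.sum_lt_sum_of_nonempty
          · have : Nonempty (Fin N) := ⟨⟨0, by exact_mod_cast hN⟩⟩
            exact Finset.univ_nonempty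
          · intro i _; exact hcon i
      _ = N * ‖w‖ := by simp
  have := lt_of_mul_lt_mul_left h2 hN.le
  linarith

/-- `x` is an accumulation point of `A ∩ (x + ker M)`. -/
def FibreAcc {N d : ℕ} (A : Set (Euc N)) (x : Euc N) (M : Fin N → Euc d) : Prop :=
  ∀ q : ℕ, ∃ l : ℕ, ∃ y ∈ A, 1 / ((l : ℝ) + 1) ≤ dist y x ∧ dist y x ≤ (1 / 2) ^ q ∧
    lin M (y - x) = 0

/-- The image of `μ` under `M` has infinite upper density at `M x`. -/
def TubeInf {N d : ℕ} (μ : Measure (Euc N)) (x : Euc N) (M : Fin N → Euc d) : Prop :=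
  ∀ k : ℕ, ∃ m : ℕ, ENNReal.ofReal (k * ((1 / 2) ^ m) ^ d) <
    μ {y | ‖lin M (y - x)‖ < (1 / 2) ^ m}

/-- The part of a truncated cone around `ker M` with vertex `x` in which the `i`-th coordinate
dominates. -/
def coneSet {N d : ℕ} (i : Fin N) (x : Euc N) (M : Fin N → Euc d) (u v : ℕ) : Set (Euc N) :=
  {y | 0 < dist y x ∧ dist y x < (1 / 2) ^ u ∧ dist y x ≤ N * |y i - x i| ∧
    ‖lin M (y - x)‖ ≤ (1 / 2) ^ v * dist y x}

/-- The `i`-th part of the cones at `x` around `ker M` has vanishing density. -/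
def ConeZero {N d : ℕ} (μ : Measure (Euc N)) (i : Fin N) (x : Euc N) (M : Fin N → Euc d) : Prop :=
  ∀ k : ℕ, ∃ p : ℕ, ∀ u, p ≤ u → ∀ v, p ≤ v →
    μ (coneSet i x M u v) ≤ ENNReal.ofReal (1 / (k + 1) * ((1 / 2) ^ u * (1 / 2) ^ v) ^ d)

lemma isClosed_and {X : Type*} [TopologicalSpace X] {p q : X → Prop} (hp : IsClosed {x | p x})
    (hq : IsClosed {x | q x}) : IsClosed {x | p x ∧ q x} := hp.inter hq

lemma measurableSet_and {X : Type*} [MeasurableSpace X] {p q : X → Prop}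
    (hp : MeasurableSet {x | p x}) (hq : MeasurableSet {x | q x}) :
    MeasurableSet {x | p x ∧ q x} := hp.inter hq

lemma isClosed_exists_mem_compact {P Y : Type*} [TopologicalSpace P] [TopologicalSpace Y]
    {K : Set Y} (hK : IsCompact K) {C : Set (P × Y)} (hC : IsClosed C) :
    IsClosed {p | ∃ y ∈ K, (p, y) ∈ C} := by
  have : CompactSpace K := isCompact_iff_compactSpace.1 hK
  have h1 : IsClosed ((fun q : P × K => (q.1, (q.2 : Y))) ⁻¹' C) :=
    hC.preimage (by fun_prop)
  have h2 := isClosedMap_fst_of_compactSpace (X := P) (Y := K) _ h1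
  convert h2 using 1
  ext p
  constructor
  · rintro ⟨y, hy, h⟩; exact ⟨(p, ⟨y, hy⟩), h, rfl⟩
  · rintro ⟨⟨p', y⟩, h, rfl⟩; exact ⟨y, y.2, h⟩

lemma measurable_FibreAcc {N d : ℕ} {A : Set (Euc N)} (hA : IsCompact A) :
    MeasurableSet {p : Euc N × (Fin N → Euc d) | FibreAcc A p.1 p.2} := by
  have : {p : Euc N × (Fin N → Euc d) | FibreAcc A p.1 p.2} = ⋂ q : ℕ, ⋃ l : ℕ,
      {p | ∃ y ∈ A, (p, y) ∈ {r : (Euc N × (Fin N → Euc d)) × Euc N |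
        1 / ((l : ℝ) + 1) ≤ dist r.2 r.1.1 ∧ dist r.2 r.1.1 ≤ (1 / 2) ^ q ∧
        lin r.1.2 (r.2 - r.1.1) = 0}} := by
    ext p; simp [FibreAcc]
  rw [this]
  refine MeasurableSet.iInter fun q => MeasurableSet.iUnion fun l =>
    (isClosed_exists_mem_compact hA ?_).measurableSet
  refine isClosed_and ?_ (isClosed_and ?_ ?_)
  · exact isClosed_le (by fun_prop) (by fun_prop)
  · exact isClosed_le (by fun_prop) (by fun_prop)
  · exact isClosed_eq (by fun_prop) (by fun_prop)

lemma measurable_TubeInf {N d : ℕ} (μ : Measure (Euc N)) [IsFiniteMeasure μ] :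
    MeasurableSet {p : Euc N × (Fin N → Euc d) | TubeInf μ p.1 p.2} := by
  have h : ∀ m : ℕ, Measurable fun p : Euc N × (Fin N → Euc d) =>
      μ {y | ‖lin p.2 (y - p.1)‖ < (1 / 2) ^ m} := by
    intro m
    have : MeasurableSet {r : (Euc N × (Fin N → Euc d)) × Euc N |
        ‖lin r.1.2 (r.2 - r.1.1)‖ < (1 / 2) ^ m} :=
      (isOpen_lt (by fun_prop) (by fun_prop)).measurableSet
    exact measurable_measure_prodMk_left this
  have e : {p : Euc N × (Fin N → Euc d) | TubeInf μ p.1 p.2} = ⋂ k : ℕ, ⋃ m : ℕ,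
      {p | ENNReal.ofReal (k * ((1 / 2) ^ m) ^ d) < μ {y | ‖lin p.2 (y - p.1)‖ < (1 / 2) ^ m}} := by
    ext p; simp [TubeInf]
  rw [e]
  exact MeasurableSet.iInter fun k => MeasurableSet.iUnion fun m =>
    measurableSet_lt measurable_const (h m)

lemma measurable_coneSet_rel {N d : ℕ} (i : Fin N) (u v : ℕ) :
    MeasurableSet {r : (Euc N × (Fin N → Euc d)) × Euc N | r.2 ∈ coneSet i r.1.1 r.1.2 u v} := by
  unfold coneSet
  refine measurableSet_and ?_ (measurableSet_and ?_ (measurableSet_and ?_ ?_))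
  · exact (isOpen_lt (by fun_prop) (by fun_prop)).measurableSet
  · exact (isOpen_lt (by fun_prop) (by fun_prop)).measurableSet
  · exact (isClosed_le (by fun_prop) (by fun_prop)).measurableSet
  · exact (isClosed_le (by fun_prop) (by fun_prop)).measurableSet

lemma measurable_ConeZero {N d : ℕ} (μ : Measure (Euc N)) [IsFiniteMeasure μ] (i : Fin N) :
    MeasurableSet {p : Euc N × (Fin N → Euc d) | ConeZero μ i p.1 p.2} := by
  have h : ∀ u v : ℕ, Measurable fun p : Euc N × (Fin N → Euc d) =>
      μ (coneSet i p.1 p.2 u v) := fun u v =>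
    measurable_measure_prodMk_left (measurable_coneSet_rel i u v)
  have e : {p : Euc N × (Fin N → Euc d) | ConeZero μ i p.1 p.2} = ⋂ k : ℕ, ⋃ p' : ℕ,
      ⋂ u : ℕ, ⋂ _ : p' ≤ u, ⋂ v : ℕ, ⋂ _ : p' ≤ v, {p | μ (coneSet i p.1 p.2 u v) ≤
        ENNReal.ofReal (1 / (k + 1) * ((1 / 2) ^ u * (1 / 2) ^ v) ^ d)} := by
    ext p; simp [ConeZero]
  rw [e]
  exact MeasurableSet.iInter fun k => MeasurableSet.iUnion fun p' => MeasurableSet.iInter fun u =>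
    MeasurableSet.iInter fun _ => MeasurableSet.iInter fun v => MeasurableSet.iInter fun _ =>
    measurableSet_le (h u v) measurable_const

lemma trichotomy_aux {N d k k' u w : ℕ} (hk' : ((2 : ℝ) ^ N) ^ d * (k + 1) ≤ k') :
    ((1 / 2 : ℝ) ^ u) ^ d * (1 / (k' + 1) * ((1 / 2) ^ w) ^ d) ≤
      1 / (k + 1) * ((1 / 2) ^ u * (1 / 2) ^ (w + N)) ^ d := by
  have e : ((1 / 2 : ℝ) ^ w) ^ d = (2 ^ N) ^ d * ((1 / 2) ^ (w + N)) ^ d := by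
    rw [← mul_pow, pow_add]
    congr 1
    have htwo : ((2 : ℝ) ^ N) * (1 / 2) ^ N = 1 := by rw [← mul_pow]; norm_num
    linear_combination (-(1 / 2 : ℝ) ^ w) * htwo
  rw [e, mul_pow]
  have h8 : 1 / ((k' : ℝ) + 1) * (2 ^ N) ^ d ≤ 1 / (k + 1) := by
    rw [div_mul_eq_mul_div, div_le_div_iff₀ (by positivity) (by positivity)]
    linarith
  generalize ((1 / 2 : ℝ) ^ (w + N)) ^ d = X at *
  have hu : 0 ≤ ((1 / 2 : ℝ) ^ u) ^ d := by positivity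
  have hX : 0 ≤ X := by
    have h : (0 : ℝ) ≤ ((1 / 2 : ℝ) ^ w) ^ d := by positivity
    rw [e] at h
    exact nonneg_of_mul_nonneg_right h (by positivity)
  generalize ((1 / 2 : ℝ) ^ u) ^ d = Y at *
  have := mul_le_mul_of_nonneg_right h8 (mul_nonneg hu hX)
  linarith

lemma trichotomy_aux2 {N d k k' u w : ℕ} {X : ℝ≥0∞} (hk' : ((2 : ℝ) ^ N) ^ d * (k + 1) ≤ k')
    (hX : ENNReal.ofReal ((2 ^ u) ^ d) * X ≤ ENNReal.ofReal (1 / (k' + 1) * ((1 / 2) ^ w) ^ d)) :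
    X ≤ ENNReal.ofReal (1 / (k + 1) * ((1 / 2) ^ u * (1 / 2) ^ (w + N)) ^ d) := by
  have hone : ENNReal.ofReal (((1 / 2) ^ u) ^ d) * ENNReal.ofReal ((2 ^ u) ^ d) = 1 := by
    rw [← ENNReal.ofReal_mul (by positivity), ← mul_pow, ← mul_pow]; norm_num
  calc X = ENNReal.ofReal (((1 / 2) ^ u) ^ d) * (ENNReal.ofReal ((2 ^ u) ^ d) * X) := by
        rw [← mul_assoc, hone, one_mul]
    _ ≤ ENNReal.ofReal (((1 / 2) ^ u) ^ d) *
        ENNReal.ofReal (1 / (k' + 1) * ((1 / 2) ^ w) ^ d) := mul_le_mul_right hX _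
    _ ≤ _ := by
        rw [← ENNReal.ofReal_mul (by positivity)]
        exact ENNReal.ofReal_le_ofReal (trichotomy_aux hk')

set_option maxHeartbeats 400000 in
/-- Varying one column of `M` moves `-(y_i - x_i)⁻¹ M(y - x)` through `ℝᵈ`; the zero-infinity law
for the image measures gives the basic trichotomy. -/
lemma trichotomy {N d : ℕ} {A : Set (Euc N)} (hA : IsCompact A) (μ : Measure (Euc N))
    [IsFiniteMeasure μ] (hμA : μ Aᶜ = 0) (x : Euc N) (i : Fin N) (M : Fin N → Euc d) :
    ∀ᵐ z : Euc d, FibreAcc A x (M + Pi.single i z) ∨ TubeInf μ x (M + Pi.single i z) ∨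
      ConeZero μ i x (M + Pi.single i z) := by
  let ζ : Euc N → Euc d := fun y => -((y i - x i)⁻¹ • lin M (y - x))
  have hζ : Measurable ζ := by
    have h1 : Measurable fun y : Euc N => (y i - x i)⁻¹ :=
      (Continuous.measurable (by fun_prop : Continuous fun y : Euc N => y i - x i)).inv
    have h2 : Measurable fun y : Euc N => lin M (y - x) := by
      exact Continuous.measurable (by fun_prop)
    exact (h1.smul h2).neg
  have hkey : ∀ z y, y i - x i ≠ 0 →
      ‖lin (M + Pi.single i z) (y - x)‖ = |y i - x i| * dist (ζ y) z := by
    intro z y hy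
    have : lin (M + Pi.single i z) (y - x) = -((y i - x i) • (ζ y - z)) := by
      rw [lin_add_single, smul_sub, smul_neg, smul_smul, mul_inv_cancel₀ hy]
      simp; abel
    rw [this, norm_neg, norm_smul, dist_eq_norm, Real.norm_eq_abs]
  let D : ℕ → Set (Euc N) := fun u =>
    {y | 0 < dist y x ∧ dist y x < (1 / 2) ^ u ∧ dist y x ≤ N * |y i - x i|}
  have hD : ∀ u, MeasurableSet (D u) := by
    intro u
    refine measurableSet_and ?_ (measurableSet_and ?_ ?_)
    · exact (isOpen_lt (by fun_prop) (by fun_prop)).measurableSet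
    · exact (isOpen_lt (by fun_prop) (by fun_prop)).measurableSet
    · exact (isClosed_le (by fun_prop) (by fun_prop)).measurableSet
  have hne : ∀ y, 0 < dist y x → dist y x ≤ N * |y i - x i| → y i - x i ≠ 0 := by
    intro y h1 h2 h3
    rw [h3] at h2; simp at h2
    rw [h2] at h1; simp at h1
  have hcoord : ∀ y, |y i - x i| ≤ dist y x := by
    intro y
    rw [dist_eq_norm]
    exact PiLp.norm_apply_le (y - x) i
  let ν : ℕ → ℕ → Measure (Euc d) := fun q j =>
    ENNReal.ofReal ((2 ^ (j + q)) ^ d) • (μ.restrict (D (j + q))).map ζ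
  have : ∀ q j, IsFiniteMeasure (ν q j) := fun q j => by
    have : IsFiniteMeasure ((μ.restrict (D (j + q))).map ζ) :=
      Measure.isFiniteMeasure_map _ _
    exact Measure.smul_finite _ ENNReal.ofReal_ne_top
  have hνapp : ∀ q j S, MeasurableSet S → ν q j S =
      ENNReal.ofReal ((2 ^ (j + q)) ^ d) * μ (ζ ⁻¹' S ∩ D (j + q)) := by
    intro q j S hS
    simp only [ν, Measure.smul_apply, smul_eq_mul]
    rw [Measure.map_apply hζ hS, Measure.restrict_apply (hζ hS)]
  let Z : ℕ → Set (Euc d) := fun q => ⋃ l : ℕ, ζ '' (A ∩ {y | 1 / ((l : ℝ) + 1) ≤ dist y x ∧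
    dist y x ≤ (1 / 2) ^ q ∧ dist y x ≤ N * |y i - x i|})
  have hZ : ∀ q, MeasurableSet (Z q) := by
    intro q
    refine MeasurableSet.iUnion fun l => IsClosed.measurableSet (IsCompact.isClosed ?_)
    refine IsCompact.image_of_continuousOn (hA.inter_right ?_) ?_
    · refine isClosed_and ?_ (isClosed_and ?_ ?_)
      · exact isClosed_le (by fun_prop) (by fun_prop)
      · exact isClosed_le (by fun_prop) (by fun_prop)
      · exact isClosed_le (by fun_prop) (by fun_prop)
    · have h0 : ∀ y ∈ A ∩ {y | 1 / ((l : ℝ) + 1) ≤ dist y x ∧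
          dist y x ≤ (1 / 2) ^ q ∧ dist y x ≤ N * |y i - x i|}, y i - x i ≠ 0 := fun y hy =>
        hne y (lt_of_lt_of_le (by positivity) hy.2.1) hy.2.2.2
      refine ContinuousOn.neg (ContinuousOn.smul (ContinuousOn.inv₀ ?_ h0) ?_)
      · exact Continuous.continuousOn (by fun_prop)
      · exact Continuous.continuousOn (by fun_prop)
  have hνZ : ∀ q j, ν q j (Z q)ᶜ = 0 := by
    intro q j
    rw [hνapp q j _ (hZ q).compl]
    have : μ (ζ ⁻¹' (Z q)ᶜ ∩ D (j + q)) = 0 := by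
      refine measure_mono_null ?_ hμA
      rintro y ⟨hy1, hy2⟩ hyA
      apply hy1
      obtain ⟨l, hl⟩ := exists_nat_one_div_lt hy2.1
      refine mem_iUnion.2 ⟨l, y, ⟨hyA, hl.le, hy2.2.1.le.trans ?_, hy2.2.2⟩, rfl⟩
      exact pow_le_pow_of_le_one (by norm_num) (by norm_num) (by omega)
    rw [this, mul_zero]
  have hall : ∀ q : ℕ, ∀ᵐ z : Euc d, z ∈ Z q ∨
      (∀ k : ℕ, ∃ m j : ℕ, ENNReal.ofReal (k * ((1 / 2) ^ m) ^ d) < ν q j (ball z ((1 / 2) ^ m))) ∨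
      (∀ k : ℕ, ∃ p : ℕ, ∀ v, p ≤ v → ∀ j,
        ν q j (ball z ((1 / 2) ^ v)) ≤ ENNReal.ofReal (1 / (k + 1) * ((1 / 2) ^ v) ^ d)) :=
    fun q => zero_infty_law (ν q) (hZ q) (hνZ q)
  have htwo : ∀ u : ℕ, ((2 : ℝ) ^ u) * (1 / 2) ^ u = 1 := fun u => by
    rw [← mul_pow]; norm_num
  filter_upwards [ae_all_iff.2 hall] with z hz
  by_cases hF : ∀ q, z ∈ Z q
  · left
    intro q
    obtain ⟨l, y, ⟨hyA, hy1, hy2, hy3⟩, hyz⟩ := mem_iUnion.1 (hF q)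
    refine ⟨l, y, hyA, hy1, hy2, ?_⟩
    rw [← norm_eq_zero, hkey z y (hne y (lt_of_lt_of_le (by positivity) hy1) hy3), hyz]
    simp
  right
  push Not at hF
  obtain ⟨q, hq⟩ := hF
  rcases hz q with h | h | h
  · exact absurd h hq
  · left
    intro k
    obtain ⟨m, j, hmj⟩ := h k
    refine ⟨m + (j + q), ?_⟩
    by_contra hcon
    push Not at hcon
    refine absurd hmj (not_lt.2 ?_)
    rw [hνapp _ _ _ measurableSet_ball]
    have hsub : ζ ⁻¹' ball z ((1 / 2) ^ m) ∩ D (j + q) ⊆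
        {y | ‖lin (M + Pi.single i z) (y - x)‖ < (1 / 2) ^ (m + (j + q))} := by
      rintro y ⟨hy1, hy2⟩
      change ‖_‖ < _
      rw [hkey z y (hne y hy2.1 hy2.2.2), pow_add, mul_comm]
      have h1 : dist (ζ y) z < (1 / 2) ^ m := hy1
      have h2 : |y i - x i| < (1 / 2) ^ (j + q) := (hcoord y).trans_lt hy2.2.1
      exact mul_lt_mul'' h1 h2 dist_nonneg (abs_nonneg _)
    calc ENNReal.ofReal ((2 ^ (j + q)) ^ d) * μ (ζ ⁻¹' ball z ((1 / 2) ^ m) ∩ D (j + q))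
        ≤ ENNReal.ofReal ((2 ^ (j + q)) ^ d) *
          ENNReal.ofReal (k * ((1 / 2) ^ (m + (j + q))) ^ d) := by
          gcongr; exact (measure_mono hsub).trans hcon
      _ = ENNReal.ofReal (k * ((1 / 2) ^ m) ^ d) := by
          rw [← ENNReal.ofReal_mul (by positivity)]
          congr 1
          rw [pow_add, mul_pow]
          have : ((2 : ℝ) ^ (j + q)) ^ d * (((1 / 2) ^ (j + q)) ^ d) = 1 := by
            rw [← mul_pow, htwo, one_pow]
          linear_combination (k * ((1 / 2 : ℝ) ^ m) ^ d) * this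
  · right
    intro k
    obtain ⟨k', hk'⟩ := exists_nat_ge (((2 : ℝ) ^ N) ^ d * (k + 1))
    obtain ⟨p, hp⟩ := h k'
    refine ⟨max q (p + N), fun u hu v hv => ?_⟩
    have hu' : q ≤ u := (le_max_left _ _).trans hu
    have hv' : p + N ≤ v := (le_max_right _ _).trans hv
    obtain ⟨j, rfl⟩ := Nat.exists_eq_add_of_le' hu'
    obtain ⟨w, rfl⟩ : ∃ w, v = w + N := ⟨v - N, by omega⟩
    have hb := hp w (by omega) j
    rw [hνapp _ _ _ measurableSet_ball] at hb
    have hsub : coneSet i x (M + Pi.single i z) (j + q) (w + N) ⊆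
        ζ ⁻¹' ball z ((1 / 2) ^ w) ∩ D (j + q) := by
      rintro y ⟨hy1, hy2, hy3, hy4⟩
      refine ⟨?_, hy1, hy2, hy3⟩
      have hn := hne y hy1 hy3
      rw [hkey z y hn] at hy4
      have hpos : 0 < |y i - x i| := abs_pos.2 hn
      have h5 : |y i - x i| * dist (ζ y) z ≤ |y i - x i| * ((1 / 2) ^ (w + N) * N) := by
        refine hy4.trans ?_
        calc _ ≤ (1 / 2 : ℝ) ^ (w + N) * (N * |y i - x i|) := by gcongr
          _ = _ := by ring
      have h6 := le_of_mul_le_mul_left h5 hpos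
      change dist (ζ y) z < _
      refine h6.trans_lt ?_
      rw [pow_add, mul_assoc]
      have h7 : (1 / 2 : ℝ) ^ N * N < 1 := by
        have : (N : ℝ) < 2 ^ N := by exact_mod_cast Nat.lt_two_pow_self
        calc (1 / 2 : ℝ) ^ N * N < (1 / 2) ^ N * 2 ^ N := by gcongr
          _ = 1 := by rw [mul_comm]; exact htwo N
      have : (0 : ℝ) < (1 / 2) ^ w := by positivity
      exact mul_lt_of_lt_one_right this h7
    exact (measure_mono hsub).trans (trichotomy_aux2 hk' hb)

/-- In the cone-density-zero alternative the set is null. -/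
lemma coneZero_null {N d : ℕ} (hd : 1 ≤ d) {A : Set (Euc N)} (hAf : μH[(d : ℝ)] A ≠ ⊤)
    (hPU : PU d A) (M : Fin N → Euc d) :
    μH[(d : ℝ)] {x ∈ A | ∀ i, ConeZero (μH[(d : ℝ)].restrict A) i x M} = 0 := by
  have : NullSingletonClass (μH[(d : ℝ)] : Measure (Euc N)) :=
    Measure.nullSingletonClass_hausdorff _ (by exact_mod_cast hd)
  set C : ℝ := 2 * 40 ^ d * (‖lin M‖ + 1) ^ d with hC
  obtain ⟨k, hk⟩ := exists_nat_ge (2 * (C * (N * 2 ^ d)))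
  let S : ℕ → Set (Euc N) := fun p => {x ∈ A | ∀ i, ∀ u, p ≤ u → ∀ v, p ≤ v →
    (μH[(d : ℝ)].restrict A) (coneSet i x M u v) ≤
      ENNReal.ofReal (1 / (k + 1) * ((1 / 2) ^ u * (1 / 2) ^ v) ^ d)}
  have hsub : {x ∈ A | ∀ i, ConeZero (μH[(d : ℝ)].restrict A) i x M} ⊆ ⋃ p, S p := by
    rintro x ⟨hx, h⟩
    choose p hp using fun i => h i k
    refine mem_iUnion.2 ⟨Finset.univ.sup p, hx, fun i u hu v hv => ?_⟩
    have : p i ≤ Finset.univ.sup p := Finset.le_sup (Finset.mem_univ i)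
    exact hp i u (this.trans hu) v (this.trans hv)
  refine measure_mono_null hsub (measure_iUnion_null fun p => ?_)
  have hSA : S p ⊆ A := fun x hx => hx.1
  refine null_of_small_density (δ := ENNReal.ofReal ((1 / 2) ^ p / 10))
    ((measure_mono hSA).trans_lt hAf.lt_top).ne (ENNReal.ofReal_pos.2 (by positivity)) ?_
  intro U hU
  have hlam : 0 ≤ (N : ℝ) * 2 ^ d / (k + 1) := by positivity
  refine (cone_mass (hPU.mono hSA) (lin M) (s := (1 / 2) ^ p) (δ := (1 / 2) ^ p)
    (lam := N * 2 ^ d / (k + 1)) (by positivity) (pow_le_one₀ (by norm_num) (by norm_num)) hlam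
    ?_ U hU (by positivity)).trans ?_
  · intro x hx r hr hrp
    obtain ⟨u, hu1, hu2⟩ := exists_nat_pow_near_of_lt_one hr
      (hrp.le.trans (pow_le_one₀ (by norm_num) (by norm_num))) (show (0 : ℝ) < 1 / 2 by norm_num)
      (by norm_num)
    have hpu : p ≤ u := by
      have := (pow_lt_pow_iff_right_of_lt_one₀ (show (0 : ℝ) < 1 / 2 by norm_num)
        (by norm_num)).1 (hu1.trans hrp)
      omega
    have hs2 : S p ∩ {y | dist y x < r ∧ ‖lin M (y - x)‖ ≤ (1 / 2) ^ p * dist y x} ⊆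
        {x} ∪ ⋃ i, (coneSet i x M u p ∩ A) := by
      rintro y ⟨hyS, hy1, hy2⟩
      by_cases hyx : y = x
      · left; exact hyx
      right
      obtain ⟨i, hi⟩ := exists_coord (y - x) (sub_ne_zero.2 hyx)
      refine mem_iUnion.2 ⟨i, ⟨dist_pos.2 hyx, hy1.trans_le hu2, ?_, hy2⟩, hyS.1⟩
      rw [dist_eq_norm]; simpa using hi
    calc _ ≤ _ := measure_mono hs2
      _ ≤ _ := measure_union_le _ _
      _ ≤ 0 + ∑ i, μH[(d : ℝ)] (coneSet i x M u p ∩ A) := by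
          exact add_le_add (measure_singleton x).le (measure_iUnion_fintype_le _ _)
      _ ≤ 0 + ∑ _i : Fin N, ENNReal.ofReal (1 / (k + 1) * ((1 / 2) ^ u * (1 / 2) ^ p) ^ d) := by
          gcongr with i _
          exact (Measure.le_restrict_apply _ _).trans (hx.2 i u hpu p le_rfl)
      _ = ENNReal.ofReal (N * (1 / (k + 1) * ((1 / 2) ^ u * (1 / 2) ^ p) ^ d)) := by
          rw [zero_add, Finset.sum_const, Finset.card_univ, Fintype.card_fin, nsmul_eq_mul,
            ENNReal.ofReal_mul (p := (N : ℝ)) (by positivity), ENNReal.ofReal_natCast]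
      _ ≤ _ := by
          apply ENNReal.ofReal_le_ofReal
          have h1 : (1 / 2 : ℝ) ^ u ≤ 2 * r := by rw [pow_succ] at hu1; linarith
          calc (N : ℝ) * (1 / (k + 1) * ((1 / 2) ^ u * (1 / 2) ^ p) ^ d)
              ≤ N * (1 / (k + 1) * (2 * r * (1 / 2) ^ p) ^ d) := by gcongr
            _ = _ := by rw [mul_assoc 2 r, mul_pow 2]; ring
  · gcongr
    have : (2⁻¹ : ℝ≥0∞) = ENNReal.ofReal (2⁻¹) := by
      rw [ENNReal.ofReal_inv_of_pos (by norm_num)]; simp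
    rw [this]
    apply ENNReal.ofReal_le_ofReal
    rw [← hC, ← mul_div_assoc, div_le_iff₀ (by positivity)]
    linarith

/-- **Besicovitch–Federer.** Almost every linear image in `ℝᵈ` of a purely unrectifiable compact
set of finite `H^d` measure is null. -/
theorem besicovitch_federer {N d : ℕ} (hd : 1 ≤ d) {A : Set (Euc N)} (hA : IsCompact A)
    (hAf : μH[(d : ℝ)] A ≠ ⊤) (hPU : PU d A) :
    ∀ᵐ M : Fin N → Euc d, μH[(d : ℝ)] (lin M '' A) = 0 := by
  set μ : Measure (Euc N) := μH[(d : ℝ)].restrict A with hμ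
  have : IsFiniteMeasure μ := ⟨by rw [hμ, Measure.restrict_apply_univ]; exact hAf.lt_top⟩
  have hμA : μ Aᶜ = 0 := by
    rw [hμ, Measure.restrict_apply hA.isClosed.measurableSet.compl]; simp
  let good : Euc N → (Fin N → Euc d) → Prop := fun x M =>
    ∀ i, FibreAcc A x M ∨ TubeInf μ x M ∨ ConeZero μ i x M
  have hmeasi : ∀ i, MeasurableSet {p : Euc N × (Fin N → Euc d) |
      FibreAcc A p.1 p.2 ∨ TubeInf μ p.1 p.2 ∨ ConeZero μ i p.1 p.2} := fun i =>
    (measurable_FibreAcc hA).union ((measurable_TubeInf μ).union (measurable_ConeZero μ i))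
  have hmeas : MeasurableSet {p : Euc N × (Fin N → Euc d) | good p.1 p.2} := by
    have : {p : Euc N × (Fin N → Euc d) | good p.1 p.2} = ⋂ i, {p : Euc N × (Fin N → Euc d) |
      FibreAcc A p.1 p.2 ∨ TubeInf μ p.1 p.2 ∨ ConeZero μ i p.1 p.2} := by
      ext p; simp [good]
    rw [this]
    exact MeasurableSet.iInter hmeasi
  have hx : ∀ x, ∀ᵐ M : Fin N → Euc d, good x M := by
    intro x
    rw [ae_all_iff]
    intro i
    rw [ae_iff]
    refine null_of_translates (volume : Measure (Euc d)) volume (ι := fun z => Pi.single i z)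
      (measurable_pi_iff.2 fun j => ?_) ?_ ?_
    · by_cases hj : j = i
      · subst hj; simp only [Pi.single_eq_same]; exact measurable_id
      · simp [Pi.single_eq_of_ne hj]
    · exact ((hmeasi i).preimage (measurable_prodMk_left (x := x))).compl
    · intro M
      filter_upwards [trichotomy hA μ hμA x i M] with z hz hz2
      exact hz2 hz
  have hM : ∀ᵐ M : Fin N → Euc d, ∀ᵐ x ∂μ, good x M :=
    (Measure.ae_ae_comm hmeas).1 (Eventually.of_forall hx)
  filter_upwards [hM] with M hM
  have hLip := (lin M).lipschitz
  have himg : ∀ S, μH[(d : ℝ)] S = 0 → μH[(d : ℝ)] (lin M '' S) = 0 := by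
    intro S hS
    have := hLip.hausdorffMeasure_image_le (d := d) (by positivity) S
    rw [hS, mul_zero] at this
    exact le_antisymm this (zero_le)
  have hbad : μH[(d : ℝ)] {x ∈ A | ¬ good x M} = 0 := by
    rw [hμ, ae_restrict_iff' hA.isClosed.measurableSet, ae_iff] at hM
    convert hM using 2
    ext x; simp [good]
  have hsub : lin M '' A ⊆ lin M '' {x ∈ A | ¬ good x M} ∪
      lin M '' {x ∈ A | ∀ i, ConeZero μ i x M} ∪
      {z | (A ∩ lin M ⁻¹' {z}).Infinite} ∪
      {z | ∀ k : ℕ, ∃ m : ℕ, ENNReal.ofReal (k * ((1 / 2) ^ m) ^ d) <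
        (μ.map (lin M)) (ball z ((1 / 2) ^ m))} := by
    rintro _ ⟨x, hx, rfl⟩
    by_cases hg : good x M
    swap
    · exact Or.inl (Or.inl (Or.inl ⟨x, ⟨hx, hg⟩, rfl⟩))
    by_cases h1 : FibreAcc A x M
    · left; right
      intro hfin
      -- a finite fibre keeps a positive distance from `x`
      have hfin' : ((A ∩ lin M ⁻¹' {lin M x}) \ {x}).Finite := hfin.subset sdiff_subset
      obtain ⟨ε, hε, hdis⟩ : ∃ ε > 0, ∀ y ∈ (A ∩ lin M ⁻¹' {lin M x}) \ {x}, ε ≤ dist y x := by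
        have hcl := hfin'.isClosed
        have hxn : x ∈ ((A ∩ lin M ⁻¹' {lin M x}) \ {x})ᶜ := by simp
        obtain ⟨ε, hε, hb⟩ := Metric.isOpen_iff.1 hcl.isOpen_compl x hxn
        refine ⟨ε, hε, fun y hy => ?_⟩
        by_contra hcon
        push Not at hcon
        exact hb hcon hy
      obtain ⟨q, hq⟩ := exists_pow_lt_of_lt_one hε (show (1 / 2 : ℝ) < 1 by norm_num)
      obtain ⟨l, y, hyA, hy1, hy2, hy3⟩ := h1 q
      have hyx : y ≠ x := by
        rintro rfl
        have : (0 : ℝ) < 1 / (l + 1) := by positivity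
        simp at hy1
        linarith
      have := hdis y ⟨⟨hyA, by simpa [sub_eq_zero] using hy3⟩, hyx⟩
      linarith
    by_cases h2 : TubeInf μ x M
    · right
      intro k
      obtain ⟨m, hm⟩ := h2 k
      refine ⟨m, hm.trans_le (le_of_eq ?_)⟩
      rw [Measure.map_apply (lin M).continuous.measurable measurableSet_ball]
      congr 1
      ext y
      simp [dist_eq_norm]
    · left; left; right
      refine ⟨x, ⟨hx, fun i => ?_⟩, rfl⟩
      rcases hg i with h | h | h
      · exact absurd h h1
      · exact absurd h h2
      · exact h
  refine measure_mono_null hsub (measure_union_null (measure_union_null (measure_union_null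
    (himg _ hbad) (himg _ (coneZero_null hd hAf hPU M))) ?_) ?_)
  · exact hausdorff_null_of_volume_null (infinite_fibres_null hA hAf (lin M))
  · have : IsFiniteMeasure (μ.map (lin M)) := Measure.isFiniteMeasure_map _ _
    exact hausdorff_null_of_volume_null (infinite_density_null (μ.map (lin M)))

/-! ### Generic central projections -/

/-- The affine function `y ↦ ⟨B_i, y⟩ - v_i` attached to the parameter `p = (B, v)`. -/
def aff {n : ℕ} (p : (Fin n → Euc n) × (Fin n → ℝ)) (i : Fin n) (y : Euc n) : ℝ :=
  (∑ k, p.1 i k * y k) - p.2 i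

@[fun_prop]
lemma continuous_aff {n : ℕ} {X : Type*} [TopologicalSpace X]
    {f : X → (Fin n → Euc n) × (Fin n → ℝ)} {g : X → Euc n} (hf : Continuous f)
    (hg : Continuous g) (i : Fin n) : Continuous fun x => aff (f x) i (g x) := by
  unfold aff
  fun_prop

/-- The lift `y ↦ (1, y)` to homogeneous coordinates. -/
def lift1 {n : ℕ} (y : Euc n) : Euc (n + 1) := WithLp.toLp 2 (Fin.cons 1 (fun i => y i))

lemma lift1_zero {n : ℕ} (y : Euc n) : lift1 y 0 = 1 := rfl
lemma lift1_succ {n : ℕ} (y : Euc n) (i : Fin n) : lift1 y i.succ = y i := rfl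

@[fun_prop]
lemma continuous_lift1 {n : ℕ} : Continuous (lift1 : Euc n → Euc (n + 1)) := by
  refine (PiLp.continuous_toLp 2 _).comp (continuous_pi fun i => ?_)
  refine Fin.cases ?_ (fun i => ?_) i
  · exact continuous_const
  · simp only [Fin.cons_succ]; fun_prop

lemma dist_lift1 {n : ℕ} (y z : Euc n) : dist (lift1 y) (lift1 z) = dist y z := by
  rw [EuclideanSpace.dist_eq, EuclideanSpace.dist_eq, Fin.sum_univ_succ]
  simp [lift1_zero, lift1_succ]

lemma norm_smul_sub_smul_le {V : Type*} [NormedAddCommGroup V] [NormedSpace ℝ V] (a b : ℝ)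
    (p q : V) : ‖a • p - b • q‖ ≤ |a| * ‖p - q‖ + |a - b| * ‖q‖ := by
  have : a • p - b • q = a • (p - q) + (a - b) • q := by
    rw [smul_sub, sub_smul]; abel
  rw [this]
  refine (norm_add_le _ _).trans ?_
  rw [norm_smul, norm_smul, Real.norm_eq_abs, Real.norm_eq_abs]

lemma aff_sub_le {n : ℕ} (p : (Fin n → Euc n) × (Fin n → ℝ)) (i : Fin n) (y z : Euc n) :
    |aff p i y - aff p i z| ≤ ‖p.1 i‖ * dist y z := by
  have : aff p i y - aff p i z = ⟪p.1 i, y - z⟫_ℝ := by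
    simp only [aff, PiLp.inner_apply, inner_sub_right]
    simp [mul_comm]
  rw [this, dist_eq_norm]
  exact abs_real_inner_le_norm _ _

/-- The image of a purely unrectifiable set under the projective change of coordinates
`y ↦ (1, y) / α(y)` is purely unrectifiable. -/
lemma PU_projective {n d : ℕ} {A : Set (Euc n)} (hA : IsCompact A) (hPU : PU d A)
    (hAf : μH[(d : ℝ)] A ≠ ⊤)
    (p : (Fin n → Euc n) × (Fin n → ℝ)) (i : Fin n) {c : ℝ} (hc : 0 < c) :
    let g : Euc n → Euc (n + 1) := fun y => (aff p i y)⁻¹ • lift1 y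
    let A' := A ∩ {y | c ≤ |aff p i y|}
    IsCompact (g '' A') ∧ PU d (g '' A') ∧ μH[(d : ℝ)] (g '' A') ≠ ⊤ := by
  intro g A'
  have hA' : IsCompact A' := hA.inter_right (isClosed_le (by fun_prop) (by fun_prop))
  have hne : ∀ y ∈ A', aff p i y ≠ 0 := fun y hy h0 => by
    have := hy.2
    rw [Set.mem_ofPred_eq, h0, abs_zero] at this
    linarith
  have hgc : ContinuousOn g A' :=
    ContinuousOn.smul (ContinuousOn.inv₀ (Continuous.continuousOn (by fun_prop)) hne)
      (Continuous.continuousOn (by fun_prop))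
  obtain ⟨R, hR⟩ := (hA.image (continuous_lift1 (n := n))).isBounded.exists_norm_le
  obtain ⟨Q, hQ⟩ := (hA'.image_of_continuousOn hgc).isBounded.exists_norm_le
  obtain ⟨T, hT⟩ := (hA.image (by fun_prop : Continuous fun y => aff p i y)).isBounded.exists_norm_le
  have hlip1 : ∀ y ∈ A', ∀ z ∈ A',
      dist (g y) (g z) ≤ (c⁻¹ + c⁻¹ * c⁻¹ * ‖p.1 i‖ * |R|) * dist y z := by
    intro y hy z hz
    rw [dist_eq_norm]
    refine (norm_smul_sub_smul_le _ _ _ _).trans ?_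
    have h1 : |(aff p i y)⁻¹| ≤ c⁻¹ := by
      rw [abs_inv]; exact inv_anti₀ hc hy.2
    have h1' : |(aff p i z)⁻¹| ≤ c⁻¹ := by
      rw [abs_inv]; exact inv_anti₀ hc hz.2
    have h2 : |(aff p i y)⁻¹ - (aff p i z)⁻¹| ≤ c⁻¹ * c⁻¹ * (‖p.1 i‖ * dist y z) := by
      have : (aff p i y)⁻¹ - (aff p i z)⁻¹ =
          (aff p i y)⁻¹ * (aff p i z)⁻¹ * (aff p i z - aff p i y) := by
        have := hne y hy; have := hne z hz
        field_simp
      rw [this, abs_mul, abs_mul]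
      gcongr
      rw [abs_sub_comm]; exact aff_sub_le p i y z
    have h3 : ‖lift1 z‖ ≤ |R| := (hR _ ⟨z, hz.1, rfl⟩).trans (le_abs_self _)
    have h4 : ‖lift1 y - lift1 z‖ = dist y z := by rw [← dist_eq_norm, dist_lift1]
    calc _ ≤ c⁻¹ * dist y z + c⁻¹ * c⁻¹ * (‖p.1 i‖ * dist y z) * |R| := by
          rw [h4]; gcongr
      _ = _ := by ring
  have hlip2 : ∀ y ∈ A', ∀ z ∈ A',
      dist y z ≤ (|T| + |T| * |T| * |Q|) * dist (g y) (g z) := by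
    intro y hy z hz
    have e : ∀ x ∈ A', lift1 x = aff p i x • g x := fun x hx => by
      simp only [g]; rw [smul_smul, mul_inv_cancel₀ (hne x hx), one_smul]
    rw [← dist_lift1, dist_eq_norm, e y hy, e z hz]
    refine (norm_smul_sub_smul_le _ _ _ _).trans ?_
    have h1 : |aff p i y| ≤ |T| := (hT _ ⟨y, hy.1, rfl⟩).trans (le_abs_self _)
    have h1' : |aff p i z| ≤ |T| := (hT _ ⟨z, hz.1, rfl⟩).trans (le_abs_self _)
    have h2 : |aff p i y - aff p i z| ≤ |T| * |T| * dist (g y) (g z) := by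
      have h5 : |g y 0 - g z 0| ≤ dist (g y) (g z) := by
        rw [dist_eq_norm]; exact PiLp.norm_apply_le (g y - g z) 0
      have h6 : aff p i y - aff p i z = aff p i y * aff p i z * -(g y 0 - g z 0) := by
        have := hne y hy; have := hne z hz
        simp only [g, PiLp.smul_apply, lift1_zero, smul_eq_mul]
        field_simp
        ring
      rw [h6, abs_mul, abs_mul, abs_neg]
      gcongr
    have h3 : ‖g z‖ ≤ |Q| := (hQ _ ⟨z, hz, rfl⟩).trans (le_abs_self _)
    calc _ ≤ |T| * dist (g y) (g z) + |T| * |T| * dist (g y) (g z) * |Q| := by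
          rw [← dist_eq_norm]; gcongr
      _ = _ := by ring
  set K1 : ℝ≥0 := Real.toNNReal (c⁻¹ + c⁻¹ * c⁻¹ * ‖p.1 i‖ * |R|) with hK1
  set K2 : ℝ≥0 := Real.toNNReal (|T| + |T| * |T| * |Q|) with hK2
  have hK1' : (K1 : ℝ) = c⁻¹ + c⁻¹ * c⁻¹ * ‖p.1 i‖ * |R| := Real.coe_toNNReal _ (by positivity)
  have hK2' : (K2 : ℝ) = |T| + |T| * |T| * |Q| := Real.coe_toNNReal _ (by positivity)
  have hL : LipschitzOnWith K1 g A' := LipschitzOnWith.of_dist_le_mul fun y hy z hz => by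
    rw [hK1']; exact hlip1 y hy z hz
  refine ⟨hA'.image_of_continuousOn hgc, ?_, ?_⟩
  · rintro S hS ⟨f, K, hf⟩
    let S' := A' ∩ g ⁻¹' S
    have hSS : S = g '' S' := by
      ext s; constructor
      · intro hs
        obtain ⟨y, hy, rfl⟩ := hS hs
        exact ⟨y, ⟨hy, hs⟩, rfl⟩
      · rintro ⟨y, hy, rfl⟩; exact hy.2
    have h0 : μH[(d : ℝ)] S' = 0 := by
      refine hPU S' (fun y hy => hy.1.1) ⟨f ∘ g, max (K * K1) (K2 * K), fun y hy z hz => ?_⟩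
      obtain ⟨h1, h2⟩ := hf _ hy.2 _ hz.2
      have h3 := hlip1 y hy.1 z hz.1
      have h4 := hlip2 y hy.1 z hz.1
      rw [← hK1'] at h3
      rw [← hK2'] at h4
      have m1 : (K * K1 : ℝ) ≤ (max (K * K1) (K2 * K) : ℝ≥0) := by
        exact_mod_cast le_max_left (K * K1) (K2 * K)
      have m2 : (K2 * K : ℝ) ≤ (max (K * K1) (K2 * K) : ℝ≥0) := by
        exact_mod_cast le_max_right (K * K1) (K2 * K)
      constructor
      · calc dist (f (g y)) (f (g z)) ≤ K * (K1 * dist y z) := h1.trans (by gcongr)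
          _ = (K * K1) * dist y z := by ring
          _ ≤ _ := by gcongr
      · calc dist y z ≤ K2 * (K * dist (f (g y)) (f (g z))) := h4.trans (by gcongr)
          _ = (K2 * K) * dist (f (g y)) (f (g z)) := by ring
          _ ≤ _ := by gcongr; rfl
    rw [hSS]
    have := (hL.mono (fun y hy => hy.1 : S' ⊆ A')).hausdorffMeasure_image_le (d := d) (by positivity)
    rw [h0, mul_zero] at this
    exact le_antisymm this zero_le
  · have := hL.hausdorffMeasure_image_le (d := d) (by positivity)
    refine (this.trans_lt (ENNReal.mul_lt_top (by simp) ?_)).ne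
    exact (measure_mono (fun y hy => hy.1)).trans_lt hAf.lt_top

/-- The image of `A` under the projection `y ↦ (α_{J j}(y) / α_{i₀}(y))_j`. -/
def projSet {n d : ℕ} (A : Set (Euc n)) (J : Fin d → Fin n) (i₀ : Fin n)
    (p : (Fin n → Euc n) × (Fin n → ℝ)) : Set (Euc d) :=
  {z | ∃ y ∈ A, aff p i₀ y ≠ 0 ∧ ∀ j, aff p (J j) y = z j * aff p i₀ y}

/-- Adds `M` to the rows of the parameter indexed by the range of `J`. -/
def rowIncl {n d : ℕ} (J : Fin d → Fin n) (M : Fin (n + 1) → Euc d) :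
    (Fin n → Euc n) × (Fin n → ℝ) :=
  (fun i => WithLp.toLp 2 fun k => ∑ j, if J j = i then M k.succ j else 0,
    fun i => -∑ j, if J j = i then M 0 j else 0)

lemma measurable_rowIncl {n d : ℕ} (J : Fin d → Fin n) : Measurable (rowIncl J) := by
  apply Continuous.measurable
  unfold rowIncl
  refine Continuous.prodMk (continuous_pi fun i => (PiLp.continuous_toLp 2 _).comp
    (continuous_pi fun k => continuous_finsetSum _ fun j _ => ?_)) (continuous_pi fun i =>
    (continuous_finsetSum _ fun j _ => ?_).neg)
  all_goals split_ifs <;> fun_prop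

lemma aff_rowIncl_range {n d : ℕ} {J : Fin d → Fin n} (hJ : Function.Injective J)
    (p : (Fin n → Euc n) × (Fin n → ℝ)) (M : Fin (n + 1) → Euc d) (j : Fin d) (y : Euc n) :
    aff (p + rowIncl J M) (J j) y = aff p (J j) y + (lin M (lift1 y)) j := by
  have h : ∀ f : Fin d → ℝ, (∑ j', if J j' = J j then f j' else 0) = f j := by
    intro f
    rw [Finset.sum_eq_single j]
    · simp
    · intro b _ hb; rw [if_neg (fun h => hb (hJ h))]
    · simp
  simp only [aff, rowIncl, Prod.fst_add, Prod.snd_add, Pi.add_apply, PiLp.add_apply, h]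
  rw [lin_apply, Fin.sum_univ_succ]
  simp only [lift1_zero, lift1_succ, PiLp.add_apply, one_smul, WithLp.ofLp_sum, Finset.sum_apply,
    PiLp.smul_apply, smul_eq_mul, add_mul, Finset.sum_add_distrib]
  have : ∑ x, (M x.succ).ofLp j * y.ofLp x = ∑ x, y.ofLp x * (M x.succ).ofLp j :=
    Finset.sum_congr rfl fun _ _ => mul_comm _ _
  rw [this]
  ring

lemma aff_rowIncl_of_notMem {n d : ℕ} {J : Fin d → Fin n} {i : Fin n} (hi : i ∉ range J)
    (p : (Fin n → Euc n) × (Fin n → ℝ)) (M : Fin (n + 1) → Euc d) (y : Euc n) :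
    aff (p + rowIncl J M) i y = aff p i y := by
  have h : ∀ f : Fin d → ℝ, (∑ j', if J j' = i then f j' else 0) = 0 := by
    intro f
    exact Finset.sum_eq_zero fun j _ => if_neg fun h => hi ⟨j, h⟩
  simp [aff, rowIncl, h]

lemma exists_columns {n d : ℕ} (J : Fin d → Fin n) (p : (Fin n → Euc n) × (Fin n → ℝ)) :
    ∃ M : Fin (n + 1) → Euc d, ∀ j y, (lin M (lift1 y)) j = aff p (J j) y := by
  refine ⟨Fin.cons (WithLp.toLp 2 fun j => -p.2 (J j)) fun k => WithLp.toLp 2 fun j => p.1 (J j) k,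
    fun j y => ?_⟩
  rw [lin_apply, Fin.sum_univ_succ]
  simp [lift1_zero, lift1_succ, aff]
  rw [add_comm, sub_eq_add_neg]
  congr 1
  exact Finset.sum_congr rfl fun _ _ => mul_comm _ _

/-- For almost every parameter, the central projections of a purely unrectifiable compact set are
null. In homogeneous coordinates they are linear images, so the projection theorem applies. -/
lemma projSet_null {n d : ℕ} (hd : 1 ≤ d) {A : Set (Euc n)} (hA : IsCompact A)
    (hAf : μH[(d : ℝ)] A ≠ ⊤) (hPU : PU d A) {J : Fin d → Fin n} (hJ : Function.Injective J)
    {i₀ : Fin n} (hi : i₀ ∉ range J) :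
    ∀ᵐ p : (Fin n → Euc n) × (Fin n → ℝ), μH[(d : ℝ)] (projSet A J i₀ p) = 0 := by
  let Z : ℕ → (Fin n → Euc n) × (Fin n → ℝ) → Set (Euc d) := fun l p =>
    {z | ∃ y ∈ A, 1 / ((l : ℝ) + 1) ≤ |aff p i₀ y| ∧ ∀ j, aff p (J j) y = z j * aff p i₀ y}
  have hcl : ∀ l, IsClosed {q : ((Fin n → Euc n) × (Fin n → ℝ)) × Euc d | q.2 ∈ Z l q.1} := by
    intro l
    have h1 : IsClosed {r : (((Fin n → Euc n) × (Fin n → ℝ)) × Euc d) × Euc n |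
        1 / ((l : ℝ) + 1) ≤ |aff r.1.1 i₀ r.2| ∧
        ∀ j, aff r.1.1 (J j) r.2 = r.1.2 j * aff r.1.1 i₀ r.2} := by
      refine isClosed_and (isClosed_le (by fun_prop) (by fun_prop)) ?_
      rw [Set.ofPred_forall]
      exact isClosed_iInter fun j => isClosed_eq (by fun_prop) (by fun_prop)
    exact isClosed_exists_mem_compact hA h1
  have hZ : ∀ l, ∀ᵐ p : (Fin n → Euc n) × (Fin n → ℝ), volume (Z l p) = 0 := by
    intro l
    have hm : Measurable fun p : (Fin n → Euc n) × (Fin n → ℝ) => volume (Z l p) :=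
      measurable_measure_prodMk_left (hcl l).measurableSet
    rw [ae_iff]
    have : (volume : Measure ((Fin n → Euc n) × (Fin n → ℝ))).IsAddHaarMeasure :=
      Measure.prod.instIsAddHaarMeasure _ _
    refine null_of_translates (volume : Measure (Fin (n + 1) → Euc d)) volume
      (measurable_rowIncl J) ((hm (measurableSet_singleton 0)).compl) ?_
    intro p
    obtain ⟨hc, hpu, hf⟩ := PU_projective hA hPU hAf p i₀ (c := 1 / ((l : ℝ) + 1)) (by positivity)
    obtain ⟨M0, hM0⟩ := exists_columns J p
    have hbf := besicovitch_federer hd hc hf hpu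
    have hbf' := (measurePreserving_add_left (volume : Measure (Fin (n + 1) → Euc d))
      M0).quasiMeasurePreserving.ae hbf
    filter_upwards [hbf'] with M hM hbad
    apply hbad
    refine measure_mono_null ?_ (volume_null_of_hausdorff_null hM)
    rintro z ⟨y, hy, h1, h2⟩
    rw [aff_rowIncl_of_notMem hi] at h1
    refine ⟨_, ⟨y, ⟨hy, h1⟩, rfl⟩, ?_⟩
    have hne : aff p i₀ y ≠ 0 := by
      intro h0
      rw [h0, abs_zero] at h1
      have : (0 : ℝ) < 1 / (l + 1) := by positivity
      linarith
    ext j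
    have h3 := h2 j
    rw [aff_rowIncl_range hJ, aff_rowIncl_of_notMem hi, ← hM0] at h3
    have h4 : lin (M0 + M) (lift1 y) = lin M0 (lift1 y) + lin M (lift1 y) := by
      simp [lin_apply, Finset.sum_add_distrib]
    rw [map_smul, h4, PiLp.smul_apply, PiLp.add_apply, h3, smul_eq_mul]
    field_simp
  filter_upwards [ae_all_iff.2 hZ] with p hp
  apply hausdorff_null_of_volume_null
  refine measure_mono_null ?_ (measure_iUnion_null hp)
  rintro z ⟨y, hy, h1, h2⟩
  obtain ⟨l, hl⟩ := exists_nat_one_div_lt (abs_pos.2 h1)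
  exact mem_iUnion.2 ⟨l, y, hy, hl.le, h2⟩

/-! ### A retraction onto the `d`-skeleton of a cubical grid -/

/-- The signed distance from `t` to the nearest even integer. -/
def evf (t : ℝ) : ℝ := t - 2 * round (t / 2)

lemma abs_evf_le (t : ℝ) (k : ℤ) : |evf t| ≤ |t - 2 * k| := by
  have h := round_le (t / 2) k
  have e1 : evf t = 2 * (t / 2 - round (t / 2)) := by unfold evf; ring
  have e2 : t - 2 * k = 2 * (t / 2 - k) := by ring
  rw [e1, e2, abs_mul, abs_mul]
  gcongr

lemma abs_evf_le_one (t : ℝ) : |evf t| ≤ 1 := by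
  have h := abs_sub_round (t / 2)
  have e1 : evf t = 2 * (t / 2 - round (t / 2)) := by unfold evf; ring
  rw [e1, abs_mul, abs_two]
  linarith

lemma abs_evf_lip (s t : ℝ) : |evf s| ≤ |evf t| + |s - t| := by
  have h := abs_evf_le s (round (t / 2))
  have e : s - 2 * (round (t / 2) : ℤ) = evf t + (s - t) := by unfold evf; ring
  rw [e] at h
  exact h.trans (abs_add_le _ _)

/-- The nondecreasing map of the line which commutes with the translation by `2`, stretches
`[-M, M]` onto `[-1, 1]` and is constant on `[M, 2 - M]`. -/
def rho (M t : ℝ) : ℝ := 2 * round (t / 2) + max (-1) (min 1 (evf t / M))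

lemma rho_eq (M t : ℝ) : rho M t = t - evf t + max (-1) (min 1 (evf t / M)) := by
  unfold rho evf; ring

lemma rho_le (M t : ℝ) : rho M t ≤ 2 * round (t / 2) + 1 := by
  unfold rho
  gcongr
  exact max_le (by norm_num) (min_le_left _ _)

lemma le_rho (M t : ℝ) : 2 * round (t / 2) - 1 ≤ rho M t := by
  unfold rho
  have := le_max_left (-1) (min 1 (evf t / M))
  linarith

lemma rho_lip_aux {M : ℝ} (hM : 0 < M) (hM1 : M ≤ 1) {s t : ℝ} (hst : s ≤ t) :
    |rho M s - rho M t| ≤ (t - s) / M := by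
  have hle : round (s / 2) ≤ round (t / 2) := by
    rw [round_eq, round_eq]; exact Int.floor_mono (by linarith)
  have hMi : 1 ≤ 1 / M := by rw [le_div_iff₀ hM]; linarith
  rcases hle.eq_or_lt with h | h
  · have e : rho M s - rho M t = max (-1) (min 1 (evf s / M)) - max (-1) (min 1 (evf t / M)) := by
      unfold rho; rw [h]; ring
    rw [e]
    rw [max_comm (-1), max_comm (-1), min_comm 1, min_comm 1]
    refine (abs_max_sub_max_le_abs (min (evf s / M) 1) (min (evf t / M) 1) (-1)).trans ?_
    have h1 : |min (evf s / M) 1 - min (evf t / M) 1| ≤ |evf s / M - evf t / M| := by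
      have := abs_min_sub_min_le_max (evf s / M) 1 (evf t / M) 1
      simpa using this
    refine h1.trans (le_of_eq ?_)
    have e2 : evf s / M - evf t / M = -((t - s) / M) := by
      unfold evf; rw [h]; ring
    rw [e2, abs_neg, abs_of_nonneg (div_nonneg (by linarith) hM.le)]
  · have h' : (round (s / 2) : ℝ) + 1 ≤ round (t / 2) := by exact_mod_cast h
    have h1 := rho_le M s
    have h2 := le_rho M t
    have hs := (abs_le.1 (abs_evf_le_one s)).2
    have ht := (abs_le.1 (abs_evf_le_one t)).1
    have a1 : 2 * (round (s / 2) : ℝ) + 1 - rho M s ≤ (1 - evf s) / M := by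
      have : min 1 (evf s / M) ≤ max (-1) (min 1 (evf s / M)) := le_max_right _ _
      have h3 : 1 - (1 - evf s) / M ≤ min 1 (evf s / M) := by
        apply le_min
        · have : 0 ≤ (1 - evf s) / M := div_nonneg (by linarith) hM.le
          linarith
        · have : 1 - (1 - evf s) / M = (1 - 1 / M) + evf s / M := by ring
          linarith
      unfold rho; linarith
    have a2 : rho M t - (2 * (round (t / 2) : ℝ) - 1) ≤ (1 + evf t) / M := by
      have h3 : max (-1) (min 1 (evf t / M)) ≤ (1 + evf t) / M - 1 := by
        apply max_le
        · have : 0 ≤ (1 + evf t) / M := div_nonneg (by linarith) hM.le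
          linarith
        · refine (min_le_right _ _).trans ?_
          have : (1 + evf t) / M - 1 = (1 / M - 1) + evf t / M := by ring
          linarith
      unfold rho; linarith
    have a3 : (2 * (round (t / 2) : ℝ) - 1) - (2 * (round (s / 2) : ℝ) + 1) ≤
        ((2 * (round (t / 2) : ℝ) - 1) - (2 * (round (s / 2) : ℝ) + 1)) / M := by
      rw [le_div_iff₀ hM]
      nlinarith
    rw [abs_sub_comm, abs_of_nonneg (by linarith)]
    have e : (t - s) / M = (1 - evf s) / M + (1 + evf t) / M +
        ((2 * (round (t / 2) : ℝ) - 1) - (2 * (round (s / 2) : ℝ) + 1)) / M := by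
      unfold evf; ring
    linarith

lemma rho_lip {M : ℝ} (hM : 0 < M) (hM1 : M ≤ 1) (s t : ℝ) :
    |rho M s - rho M t| ≤ |s - t| / M := by
  rcases le_total s t with h | h
  · rw [abs_sub_comm s t, abs_of_nonneg (sub_nonneg.2 h)]
    exact rho_lip_aux hM hM1 h
  · rw [abs_sub_comm, abs_of_nonneg (sub_nonneg.2 h)]
    exact rho_lip_aux hM hM1 h

lemma clamp_div_aux {M M' f : ℝ} (hM : 0 < M) (hMM : M ≤ M') (hf : 0 ≤ f) :
    |max (-1) (min 1 (f / M)) - max (-1) (min 1 (f / M'))| ≤ (M' - M) / M := by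
  have hM' : 0 < M' := hM.trans_le hMM
  have e1 : max (-1) (min 1 (f / M)) = min 1 (f / M) :=
    max_eq_right (le_min (by norm_num) (le_trans (by norm_num) (div_nonneg hf hM.le)))
  have e2 : max (-1) (min 1 (f / M')) = min 1 (f / M') :=
    max_eq_right (le_min (by norm_num) (le_trans (by norm_num) (div_nonneg hf hM'.le)))
  have hle : f / M' ≤ f / M := div_le_div_of_nonneg_left hf hM hMM
  have h0 : 0 ≤ (M' - M) / M := div_nonneg (by linarith) hM.le
  rw [e1, e2, abs_of_nonneg (sub_nonneg.2 (min_le_min_left _ hle))]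
  rcases le_total 1 (f / M') with h | h
  · rw [min_eq_left h]
    have := min_le_left 1 (f / M)
    linarith
  · rw [min_eq_right h]
    have h5 : (M' - M) / M = M' / M - 1 := by field_simp
    rcases le_total f M with h2 | h2
    · have h3 : f / M - f / M' = f / M' * ((M' - M) / M) := by field_simp
      have : f / M' * ((M' - M) / M) ≤ 1 * ((M' - M) / M) := by gcongr
      have := min_le_right 1 (f / M)
      linarith
    · have h3 : M / M' ≤ f / M' := by gcongr
      have := min_le_left 1 (f / M)
      have h4 : 1 - M / M' = (M' - M) / M' := by field_simp
      have h6 : (M' - M) / M' ≤ (M' - M) / M :=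
        div_le_div_of_nonneg_left (by linarith) hM hMM
      linarith

lemma clamp_neg (x : ℝ) : max (-1) (min 1 (-x)) = -max (-1) (min 1 x) := by
  rcases le_total x (-1) with h | h
  · rw [min_eq_left (by linarith), min_eq_right (by linarith), max_eq_left h]; norm_num
  rcases le_total 1 x with h2 | h2
  · rw [min_eq_right (by linarith), min_eq_left h2, max_eq_left (by linarith)]; norm_num
  · rw [min_eq_right (by linarith), min_eq_right h2, max_eq_right h, max_eq_right (by linarith)]

lemma clamp_div_aux' {M M' : ℝ} (f : ℝ) (hM : 0 < M) (hMM : M ≤ M') :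
    |max (-1) (min 1 (f / M)) - max (-1) (min 1 (f / M'))| ≤ (M' - M) / M := by
  rcases le_total 0 f with h | h
  · exact clamp_div_aux hM hMM h
  · have := clamp_div_aux (f := -f) hM hMM (by linarith)
    rw [neg_div, neg_div, clamp_neg, clamp_neg, neg_sub_neg, abs_sub_comm] at this
    exact this

lemma rho_lip_M {M M' τ : ℝ} (hτ : 0 < τ) (hM : τ ≤ M) (hM' : τ ≤ M') (t : ℝ) :
    |rho M t - rho M' t| ≤ |M - M'| / τ := by
  have key : ∀ {M M' : ℝ}, τ ≤ M → M ≤ M' → |rho M t - rho M' t| ≤ |M - M'| / τ := by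
    intro M M' h1 h2
    have e : rho M t - rho M' t =
        max (-1) (min 1 (evf t / M)) - max (-1) (min 1 (evf t / M')) := by
      unfold rho; ring
    rw [e, abs_sub_comm M, abs_of_nonneg (sub_nonneg.2 h2)]
    refine (clamp_div_aux' _ (hτ.trans_le h1) h2).trans ?_
    exact div_le_div_of_nonneg_left (by linarith) hτ h1
  rcases le_total M M' with h | h
  · exact key hM h
  · rw [abs_sub_comm, abs_sub_comm M]; exact key hM' h

lemma rho_sub {M : ℝ} (hM : 0 < M) (hM1 : M ≤ 1) (t : ℝ) : |rho M t - t| ≤ 1 := by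
  have hf := abs_le.1 (abs_evf_le_one t)
  have e : rho M t - t = max (-1) (min 1 (evf t / M)) - evf t := by rw [rho_eq]; ring
  rw [e, abs_le]
  rcases le_total 0 (evf t) with h | h
  · have h1 : evf t ≤ evf t / M := by rw [le_div_iff₀ hM]; nlinarith
    have h2 : evf t ≤ max (-1) (min 1 (evf t / M)) := le_max_of_le_right (le_min hf.2 h1)
    have h3 : max (-1) (min 1 (evf t / M)) ≤ 1 := max_le (by norm_num) (min_le_left _ _)
    constructor <;> linarith
  · have h1 : evf t / M ≤ evf t := by rw [div_le_iff₀ hM]; nlinarith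
    have h2 : max (-1) (min 1 (evf t / M)) ≤ evf t := max_le hf.1 ((min_le_right _ _).trans h1)
    have h3 : -1 ≤ max (-1) (min 1 (evf t / M)) := le_max_left _ _
    constructor <;> linarith

/-- The `(d+1)`-st smallest among the distances of the coordinates of `w` to the even integers. -/
def mth {n : ℕ} (d : ℕ) (w : Fin n → ℝ) : ℝ :=
  ((⨅ T : {T : Finset (Fin n) // T.card = d + 1}, T.1.sup fun i => ‖evf (w i)‖₊ : ℝ≥0) : ℝ)

lemma mth_nonneg {n d : ℕ} (w : Fin n → ℝ) : 0 ≤ mth d w := NNReal.coe_nonneg _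

lemma mth_spec {n d : ℕ} (h : d + 1 ≤ n) (w : Fin n → ℝ) :
    ∃ T : Finset (Fin n), T.card = d + 1 ∧ ∀ i ∈ T, |evf (w i)| ≤ mth d w := by
  obtain ⟨T0, -, hT0⟩ := Finset.exists_subset_card_eq (s := (Finset.univ : Finset (Fin n)))
    (n := d + 1) (by simpa using h)
  have : Nonempty {T : Finset (Fin n) // T.card = d + 1} := ⟨⟨T0, hT0⟩⟩
  obtain ⟨T, hT⟩ := exists_eq_ciInf_of_finite
    (f := fun T : {T : Finset (Fin n) // T.card = d + 1} => T.1.sup fun i => ‖evf (w i)‖₊)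
  refine ⟨T.1, T.2, fun i hi => ?_⟩
  have h1 : ‖evf (w i)‖₊ ≤ T.1.sup fun i => ‖evf (w i)‖₊ := Finset.le_sup (f := fun i => ‖evf (w i)‖₊) hi
  rw [hT] at h1
  exact_mod_cast h1

lemma mth_le {n d : ℕ} {w : Fin n → ℝ} {T : Finset (Fin n)} (hT : T.card = d + 1) {t : ℝ}
    (h : ∀ i ∈ T, |evf (w i)| ≤ t) : mth d w ≤ t := by
  obtain ⟨i, hi⟩ : T.Nonempty := Finset.card_pos.1 (by omega)
  have ht : 0 ≤ t := (abs_nonneg _).trans (h i hi)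
  lift t to ℝ≥0 using ht
  unfold mth
  rw [NNReal.coe_le_coe]
  refine (ciInf_le' _ (⟨T, hT⟩ : {T : Finset (Fin n) // T.card = d + 1})).trans ?_
  exact Finset.sup_le fun i hi => by exact_mod_cast h i hi

lemma mth_le_one {n d : ℕ} (h : d + 1 ≤ n) (w : Fin n → ℝ) : mth d w ≤ 1 := by
  obtain ⟨T, hT, -⟩ := mth_spec h w
  exact mth_le hT fun i _ => abs_evf_le_one _

lemma mth_lip {n d : ℕ} (h : d + 1 ≤ n) (w w' : Fin n → ℝ) : |mth d w - mth d w'| ≤ dist w w' := by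
  have key : ∀ w w' : Fin n → ℝ, mth d w ≤ mth d w' + dist w w' := by
    intro w w'
    obtain ⟨T, hT, hT2⟩ := mth_spec h w'
    refine mth_le hT fun i hi => (abs_evf_lip (w i) (w' i)).trans ?_
    have := hT2 i hi
    have h2 : |w i - w' i| ≤ dist w w' := by
      rw [← Real.dist_eq]; exact dist_le_pi_dist w w' i
    linarith
  have h1 := key w w'
  have h2 := key w' w
  rw [dist_comm] at h2
  rw [abs_le]; constructor <;> linarith

lemma continuous_mth {n d : ℕ} (h : d + 1 ≤ n) : Continuous (mth d : (Fin n → ℝ) → ℝ) :=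
  (LipschitzWith.of_dist_le_mul (K := 1) fun w w' => by
    rw [Real.dist_eq, NNReal.coe_one, one_mul]; exact mth_lip h w w').continuous

/-- The grid retraction, made Lipschitz by the cut-off `t₀`. -/
def retr {n : ℕ} (d : ℕ) (t₀ : ℝ) (w : Fin n → ℝ) : Fin n → ℝ :=
  fun i => rho (max (mth d w) t₀) (w i)

lemma retr_lip {n d : ℕ} (h : d + 1 ≤ n) {t₀ τ : ℝ} (ht1 : t₀ ≤ 1) (hτ : 0 < τ)
    {w w' : Fin n → ℝ} (hw : τ ≤ max (mth d w) t₀) (hw' : τ ≤ max (mth d w') t₀) :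
    dist (retr d t₀ w) (retr d t₀ w') ≤ 2 / τ * dist w w' := by
  rw [dist_pi_le_iff (by positivity)]
  intro i
  have h2 : |w i - w' i| ≤ dist w w' := by
    rw [← Real.dist_eq]; exact dist_le_pi_dist w w' i
  have h3 : |max (mth d w) t₀ - max (mth d w') t₀| ≤ dist w w' :=
    (abs_max_sub_max_le_abs _ _ _).trans (mth_lip h w w')
  have h4 := rho_lip (hτ.trans_le hw) (max_le (mth_le_one h w) ht1) (w i) (w' i)
  have h5 := rho_lip_M hτ hw hw' (w' i)
  rw [Real.dist_eq]
  calc |retr d t₀ w i - retr d t₀ w' i|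
      ≤ |rho (max (mth d w) t₀) (w i) - rho (max (mth d w) t₀) (w' i)| +
        |rho (max (mth d w) t₀) (w' i) - rho (max (mth d w') t₀) (w' i)| := abs_sub_le _ _ _
    _ ≤ dist w w' / τ + dist w w' / τ := by
        refine add_le_add (h4.trans ?_) (h5.trans ?_)
        · gcongr
        · gcongr
    _ = _ := by ring

lemma retr_sub {n d : ℕ} (h : d + 1 ≤ n) {t₀ : ℝ} (ht : 0 < t₀) (ht1 : t₀ ≤ 1) (w : Fin n → ℝ) :
    ‖retr d t₀ w - w‖ ≤ 1 := by
  rw [pi_norm_le_iff_of_nonneg zero_le_one]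
  intro i
  exact rho_sub (lt_max_of_lt_right ht) (max_le (mth_le_one h w) ht1) (w i)

lemma rho_of_le {M t : ℝ} (hM : 0 < M) (h : M ≤ |evf t|) :
    ∃ c : ℤ, rho M t = c := by
  rcases le_total 0 (evf t) with h0 | h0
  · refine ⟨2 * round (t / 2) + 1, ?_⟩
    rw [abs_of_nonneg h0] at h
    have : 1 ≤ evf t / M := by rw [le_div_iff₀ hM]; linarith
    unfold rho
    rw [min_eq_left this, max_eq_right (by norm_num)]; push_cast; ring
  · refine ⟨2 * round (t / 2) - 1, ?_⟩
    rw [abs_of_nonpos h0] at h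
    have : evf t / M ≤ -1 := by rw [div_le_iff₀ hM]; linarith
    unfold rho
    rw [min_eq_right (by linarith), max_eq_left (by linarith)]; push_cast; ring

lemma rho_of_ge {M t : ℝ} (hM : 0 < M) (h : |evf t| ≤ M) :
    rho M t = 2 * round (t / 2) + evf t / M := by
  have h1 := abs_le.1 h
  have h2 : evf t / M ≤ 1 := by rw [div_le_iff₀ hM]; linarith
  have h3 : -1 ≤ evf t / M := by rw [le_div_iff₀ hM]; linarith
  unfold rho
  rw [min_eq_right h2, max_eq_right h3]

/-- Where the retraction is not truncated its image lies in a countable union of affine images of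
central projections. -/
lemma retr_structure {n d : ℕ} (h : d + 1 ≤ n) {t₀ : ℝ} (ht : 0 < t₀) {w : Fin n → ℝ}
    (hw : t₀ ≤ mth d w) :
    ∃ (J : Fin d → Fin n) (i₀ : Fin n) (k c : Fin n → ℤ) (σ : ℤ) (z : Fin d → ℝ),
      Function.Injective J ∧ i₀ ∉ range J ∧ w i₀ - 2 * k i₀ ≠ 0 ∧
      (∀ j, w (J j) - 2 * k (J j) = z j * (w i₀ - 2 * k i₀)) ∧
      ∀ i, retr d t₀ w i = c i + σ * ∑ j, if J j = i then z j else 0 := by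
  classical
  set m := mth d w with hm
  have hm0 : 0 < m := ht.trans_le hw
  have hmax : max m t₀ = m := max_eq_left hw
  obtain ⟨T, hT, hT2⟩ := mth_spec h w
  let Jl : Finset (Fin n) := Finset.univ.filter fun i => |evf (w i)| < m
  let Je : Finset (Fin n) := Finset.univ.filter fun i => |evf (w i)| ≤ m
  have hJlcard : Jl.card ≤ d := by
    by_contra hcon
    push Not at hcon
    obtain ⟨T', hT', hT'c⟩ := Finset.exists_subset_card_eq (s := Jl) (n := d + 1) hcon
    obtain ⟨i, hi⟩ : T'.Nonempty := Finset.card_pos.1 (by omega)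
    obtain ⟨i1, hi1, hmax1⟩ := T'.exists_max_image (fun i => |evf (w i)|) ⟨i, hi⟩
    have h1 : m ≤ |evf (w i1)| := mth_le hT'c hmax1
    have h2 : |evf (w i1)| < m := (Finset.mem_filter.1 (hT' hi1)).2
    linarith
  have hTe : T ⊆ Je := fun i hi => Finset.mem_filter.2 ⟨Finset.mem_univ _, hT2 i hi⟩
  have hJecard : d + 1 ≤ Je.card := hT ▸ Finset.card_le_card hTe
  have hle : Jl ⊆ Je := fun i hi =>
    Finset.mem_filter.2 ⟨Finset.mem_univ _, (Finset.mem_filter.1 hi).2.le⟩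
  obtain ⟨J0, hJ1, hJ2, hJc⟩ := Finset.exists_subsuperset_card_eq hle hJlcard (by omega)
  obtain ⟨i₀, hi0e, hi0⟩ : ∃ i ∈ Je, i ∉ J0 := by
    by_contra hcon
    push Not at hcon
    have := Finset.card_le_card (fun i hi => hcon i hi : Je ⊆ J0)
    omega
  have habs : |evf (w i₀)| = m := by
    refine le_antisymm (Finset.mem_filter.1 hi0e).2 ?_
    by_contra hcon
    push Not at hcon
    exact hi0 (hJ1 (Finset.mem_filter.2 ⟨Finset.mem_univ _, hcon⟩))
  have hev0 : evf (w i₀) ≠ 0 := by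
    intro h0; rw [h0, abs_zero] at habs; linarith
  obtain ⟨σ, hσ⟩ : ∃ σ : ℤ, 1 / m = σ / evf (w i₀) := by
    rcases le_total 0 (evf (w i₀)) with h0 | h0
    · rw [abs_of_nonneg h0] at habs
      exact ⟨1, by rw [habs]; norm_num⟩
    · rw [abs_of_nonpos h0] at habs
      exact ⟨-1, by rw [← habs]; push_cast; rw [div_neg, neg_div]⟩
  let J : Fin d → Fin n := fun j => J0.orderEmbOfFin hJc j
  have hJinj : Function.Injective J := (J0.orderEmbOfFin hJc).injective
  have hJr : range J = J0 := Finset.range_orderEmbOfFin J0 hJc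
  have hc : ∀ i, i ∉ J0 → ∃ c : ℤ, rho m (w i) = c := by
    intro i hi
    apply rho_of_le hm0
    by_contra hcon
    push Not at hcon
    exact hi (hJ1 (Finset.mem_filter.2 ⟨Finset.mem_univ _, hcon⟩))
  choose! c hc using hc
  refine ⟨J, i₀, fun i => round (w i / 2), fun i => if i ∈ J0 then 2 * round (w i / 2) else c i, σ,
    fun j => evf (w (J j)) / evf (w i₀), hJinj, ?_, hev0, ?_, ?_⟩
  · rw [hJr]; exact hi0
  · intro j
    change evf _ = _ * evf _
    field_simp
  · intro i
    change rho (max m t₀) (w i) = _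
    rw [hmax]
    beta_reduce
    by_cases hi : i ∈ J0
    · obtain ⟨j, rfl⟩ : i ∈ range J := by rw [hJr]; exact hi
      rw [Finset.sum_eq_single j, if_pos rfl, if_pos hi,
        rho_of_ge hm0 (Finset.mem_filter.1 (hJ2 hi)).2, div_eq_mul_one_div (evf (w (J j))) m, hσ]
      · push_cast; ring
      · intro b _ hb; rw [if_neg (fun h => hb (hJinj h))]
      · simp
    · rw [if_neg hi, hc i hi, Finset.sum_eq_zero]
      · simp
      · intro j _
        rw [if_neg]
        rintro rfl
        exact hi (by rw [← Finset.mem_coe, ← hJr]; exact ⟨j, rfl⟩)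

/-! ### Averaging over the position of the grid -/

lemma volume_slab_le (x t : ℝ) :
    volume {s ∈ Icc (0 : ℝ) 2 | |evf (x - s)| ≤ t} ≤ ENNReal.ofReal (4 * t) := by
  have hsub : {s ∈ Icc (0 : ℝ) 2 | |evf (x - s)| ≤ t} ⊆
      Icc (x - 2 * round (x / 2) - t) (x - 2 * round (x / 2) + t) ∪
      Icc (x - 2 * (round (x / 2) - 1) - t) (x - 2 * (round (x / 2) - 1) + t) := by
    rintro s ⟨⟨h0, h2⟩, hs⟩
    have h1 : round ((x - s) / 2) ≤ round (x / 2) := by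
      rw [round_eq, round_eq]; exact Int.floor_mono (by linarith)
    have h3 : round (x / 2) - 1 ≤ round ((x - s) / 2) := by
      rw [← round_sub_one, round_eq, round_eq]; exact Int.floor_mono (by linarith)
    have hk : round ((x - s) / 2) = round (x / 2) ∨ round ((x - s) / 2) = round (x / 2) - 1 := by
      omega
    have hs' := abs_le.1 hs
    unfold evf at hs'
    rcases hk with h | h
    · left; rw [h] at hs'; constructor <;> linarith [hs'.1, hs'.2]
    · right; rw [h] at hs'; push_cast at hs'; constructor <;> linarith [hs'.1, hs'.2]
  refine (measure_mono hsub).trans ((measure_union_le _ _).trans ?_)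
  rw [Real.volume_Icc, Real.volume_Icc]
  rcases le_total 0 t with ht | ht
  · rw [← ENNReal.ofReal_add (by linarith) (by linarith)]
    apply le_of_eq; congr 1; ring
  · rw [ENNReal.ofReal_of_nonpos (by linarith), ENNReal.ofReal_of_nonpos (by linarith)]; simp

/-- The box over which the position of the grid is averaged. -/
def box (n : ℕ) : Set (Fin n → ℝ) := Set.pi univ fun _ => Icc 0 2

lemma measurableSet_box (n : ℕ) : MeasurableSet (box n) :=
  MeasurableSet.univ_pi fun _ => measurableSet_Icc

lemma volume_box (n : ℕ) : volume (box n) = 2 ^ n := by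
  rw [box, volume_pi_pi]; simp

/-- Positions of the grid for which a given point `u` is within `t` of the dual skeleton: `d + 1`
coordinates have to be within `t` of an even integer, which costs a factor `t ^ (d + 1)`. -/
lemma volume_box_mth_le (n d : ℕ) (h : d + 1 ≤ n) : ∃ C : ℝ≥0∞, C ≠ ⊤ ∧ ∀ (u : Fin n → ℝ) (t : ℝ),
    volume (box n ∩ {v | mth d (u - v) ≤ t}) ≤ C * ENNReal.ofReal t ^ (d + 1) := by
  refine ⟨∑ _T : Finset (Fin n), 4 ^ (d + 1) * 2 ^ n,
    ENNReal.sum_ne_top.2 fun _ _ => by finiteness, ?_⟩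
  intro u t
  have hsub : box n ∩ {v | mth d (u - v) ≤ t} ⊆ ⋃ T : Finset (Fin n), if T.card = d + 1 then
      Set.pi univ (fun i => if i ∈ T then {s ∈ Icc (0 : ℝ) 2 | |evf (u i - s)| ≤ t} else Icc 0 2)
      else ∅ := by
    rintro v ⟨hv, hm⟩
    obtain ⟨T, hT, hT2⟩ := mth_spec h (u - v)
    refine mem_iUnion.2 ⟨T, ?_⟩
    rw [if_pos hT]
    intro i _
    beta_reduce
    split_ifs with hi
    · exact ⟨hv i trivial, (hT2 i hi).trans hm⟩
    · exact hv i trivial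
  refine (measure_mono hsub).trans ((measure_iUnion_fintype_le _ _).trans ?_)
  rw [Finset.sum_mul]
  refine Finset.sum_le_sum fun T _ => ?_
  split_ifs with hT
  · rw [volume_pi_pi]
    calc _ ≤ ∏ i : Fin n, (if i ∈ T then ENNReal.ofReal (4 * t) else 1) * 2 := by
          refine Finset.prod_le_prod' fun i _ => ?_
          split_ifs with hi
          · refine (volume_slab_le _ _).trans ?_
            exact le_mul_of_one_le_right zero_le (by norm_num)
          · simp
      _ = (∏ i : Fin n, (if i ∈ T then ENNReal.ofReal (4 * t) else 1)) * 2 ^ n := by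
          rw [Finset.prod_mul_distrib]; simp
      _ = ENNReal.ofReal (4 * t) ^ (d + 1) * 2 ^ n := by
          rw [Finset.prod_ite_mem, Finset.univ_inter, Finset.prod_const, hT]
      _ = _ := by
          rw [ENNReal.ofReal_mul (by norm_num), mul_pow]
          simp; ring
  · simp

/-- Fubini: on average over the position of the grid, only a small part of `ν` lies near the dual
skeleton. -/
lemma avg_measure_le {n d : ℕ} (h : d + 1 ≤ n) {C : ℝ≥0∞}
    (hC : ∀ (u : Fin n → ℝ) (t : ℝ),
      volume (box n ∩ {v | mth d (u - v) ≤ t}) ≤ C * ENNReal.ofReal t ^ (d + 1))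
    (ν : Measure (Euc n)) [IsFiniteMeasure ν] {u : Euc n → Fin n → ℝ} (hu : Continuous u) (t : ℝ) :
    ∫⁻ v in box n, ν {y | mth d (u y - v) ≤ t} ≤ C * ENNReal.ofReal t ^ (d + 1) * ν univ := by
  have hcl : MeasurableSet {q : (Fin n → ℝ) × Euc n | mth d (u q.2 - q.1) ≤ t} := by
    have hc := continuous_mth h
    refine (isClosed_le (hc.comp ?_) (by fun_prop)).measurableSet
    fun_prop
  have h1 := Measure.prod_apply (μ := volume.restrict (box n)) (ν := ν) hcl
  have h2 := Measure.prod_apply_symm (μ := volume.restrict (box n)) (ν := ν) hcl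
  calc ∫⁻ v in box n, ν {y | mth d (u y - v) ≤ t}
      = ∫⁻ y, volume.restrict (box n) {v | mth d (u y - v) ≤ t} ∂ν := h1.symm.trans h2
    _ ≤ ∫⁻ _y, C * ENNReal.ofReal t ^ (d + 1) ∂ν := by
        refine lintegral_mono fun y => ?_
        rw [Measure.restrict_apply' (measurableSet_box n), inter_comm]
        exact hC _ _
    _ = _ := by rw [lintegral_const]

/-! ### The Federer–Fleming deformation -/

/-- Grid coordinates of `y`. -/
def gridc {n : ℕ} (Q : Euc n ≃L[ℝ] (Fin n → ℝ)) (ε : ℝ) (v : Fin n → ℝ) (y : Euc n) : Fin n → ℝ :=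
  ε⁻¹ • Q y - v

/-- The displacement (up to the factor `ε`) of the grid retraction. -/
def displ {n : ℕ} (d : ℕ) (t₀ : ℝ) (Q : Euc n ≃L[ℝ] (Fin n → ℝ)) (ε : ℝ) (v : Fin n → ℝ)
    (y : Euc n) : Euc n :=
  Q.symm (retr d t₀ (gridc Q ε v y) - gridc Q ε v y)


lemma norm_displ_le {n d : ℕ} (h : d + 1 ≤ n) {t₀ ε : ℝ} (ht : 0 < t₀) (ht1 : t₀ ≤ 1)
    (Q : Euc n ≃L[ℝ] (Fin n → ℝ)) (v : Fin n → ℝ) (y : Euc n) :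
    ‖displ d t₀ Q ε v y‖ ≤ ‖(Q.symm : (Fin n → ℝ) →L[ℝ] Euc n)‖ := by
  refine ((Q.symm : (Fin n → ℝ) →L[ℝ] Euc n).le_opNorm _).trans ?_
  exact mul_le_of_le_one_right (norm_nonneg _) (retr_sub h ht ht1 _)

lemma dist_displ_le {n d : ℕ} (h : d + 1 ≤ n) {t₀ ε : ℝ} (ht : 0 < t₀) (ht1 : t₀ ≤ 1) (hε : 0 < ε)
    (Q : Euc n ≃L[ℝ] (Fin n → ℝ)) (v : Fin n → ℝ) (y z : Euc n) :
    ‖displ d t₀ Q ε v y - displ d t₀ Q ε v z‖ ≤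
      ‖(Q.symm : (Fin n → ℝ) →L[ℝ] Euc n)‖ * (3 / t₀ * (ε⁻¹ * (‖(Q : Euc n →L[ℝ] (Fin n → ℝ))‖ * dist y z))) := by
  have hg : dist (gridc Q ε v y) (gridc Q ε v z) ≤
      ε⁻¹ * (‖(Q : Euc n →L[ℝ] (Fin n → ℝ))‖ * dist y z) := by
    unfold gridc
    rw [dist_sub_right, dist_smul₀, Real.norm_eq_abs, abs_of_pos (inv_pos.2 hε)]
    gcongr
    rw [dist_eq_norm, dist_eq_norm, ← map_sub]
    exact (Q : Euc n →L[ℝ] (Fin n → ℝ)).le_opNorm _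
  unfold displ
  rw [← map_sub]
  refine ((Q.symm : (Fin n → ℝ) →L[ℝ] Euc n).le_opNorm _).trans ?_
  gcongr
  have h1 := retr_lip h ht1 ht (w := gridc Q ε v y) (w' := gridc Q ε v z) (le_max_right _ _)
    (le_max_right _ _)
  set D := dist (gridc Q ε v y) (gridc Q ε v z)
  calc _ = ‖(retr d t₀ (gridc Q ε v y) - retr d t₀ (gridc Q ε v z)) -
        (gridc Q ε v y - gridc Q ε v z)‖ := by congr 1; abel
    _ ≤ 2 / t₀ * D + D := by
        refine (norm_sub_le _ _).trans ?_
        rw [← dist_eq_norm, ← dist_eq_norm]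
        gcongr
    _ ≤ 3 / t₀ * D := by
        have : 1 ≤ 1 / t₀ := by rw [le_div_iff₀ ht]; linarith
        have h2 : 3 / t₀ * D = 2 / t₀ * D + 1 / t₀ * D := by ring
        have h3 : 1 * D ≤ 1 / t₀ * D := by gcongr
        linarith
    _ ≤ _ := by gcongr

/-- The images of the part of `A` on which the retraction is not truncated lie in a countable union
of affine images of central projections. -/
lemma skeleton_image_null {n d : ℕ} (h : d + 1 ≤ n) {t₀ ε : ℝ} (ht : 0 < t₀) (hε : 0 < ε)
    (Q : Euc n ≃L[ℝ] (Fin n → ℝ)) (B : Fin n → Euc n) (hQ : ∀ y i, Q y i = ∑ k, B i k * y k)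
    (v : Fin n → ℝ) {A : Set (Euc n)}
    (hgood : ∀ (k : Fin n → ℤ) (J : Fin d → Fin n) (i₀ : Fin n), Function.Injective J →
      i₀ ∉ range J → μH[(d : ℝ)] (projSet A J i₀ (B, fun i => ε * (v i + 2 * k i))) = 0) :
    μH[(d : ℝ)] ((fun y => y + ε • displ d t₀ Q ε v y) '' (A ∩ {y | t₀ ≤ mth d (gridc Q ε v y)}))
      = 0 := by
  classical
  let F : (Fin d → Fin n) → (Fin n → ℤ) → ℤ → Euc d → Euc n := fun J c σ z =>
    ε • Q.symm ((fun i => c i + σ * ∑ j, if J j = i then z j else 0) + v)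
  have hF : ∀ J c σ, ∃ K, LipschitzWith K (F J c σ) := by
    intro J c σ
    let T : Euc d →ₗ[ℝ] (Fin n → ℝ) :=
      { toFun := fun z i => σ * ∑ j, if J j = i then z j else 0
        map_add' := by
          intro x y; ext i; simp only [PiLp.add_apply, Pi.add_apply, ← mul_add]
          rw [← Finset.sum_add_distrib]; congr 1
          exact Finset.sum_congr rfl fun j _ => by split_ifs <;> simp
        map_smul' := by
          intro a x; ext i
          simp only [PiLp.smul_apply, Pi.smul_apply, smul_eq_mul, RingHom.id_apply]
          have e : (∑ j, if J j = i then a * x j else 0) = a * ∑ j, if J j = i then x j else 0 := by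
            rw [Finset.mul_sum]
            exact Finset.sum_congr rfl fun j _ => by split_ifs <;> simp
          rw [e]; ring }
    let T' : Euc d →L[ℝ] Euc n :=
      ε • ((Q.symm : (Fin n → ℝ) →L[ℝ] Euc n).comp (LinearMap.toContinuousLinearMap T))
    refine ⟨‖T'‖₊, ?_⟩
    have e : F J c σ = fun z => T' z + ε • Q.symm ((fun i => (c i : ℝ)) + v) := by
      ext1 z
      change ε • Q.symm _ = ε • Q.symm (T z) + _
      rw [← smul_add, ← map_add]
      congr 2
      ext i; simp [T]; ring
    rw [e]
    have h2 := T'.lipschitz.add (LipschitzWith.const (ε • Q.symm ((fun i => (c i : ℝ)) + v)))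
    simpa using h2
  have hsub : (fun y => y + ε • displ d t₀ Q ε v y) '' (A ∩ {y | t₀ ≤ mth d (gridc Q ε v y)}) ⊆
      ⋃ (k : Fin n → ℤ), ⋃ (J : Fin d → Fin n), ⋃ (i₀ : Fin n), ⋃ (c : Fin n → ℤ), ⋃ (σ : ℤ),
        ⋃ (_ : Function.Injective J ∧ i₀ ∉ range J),
        F J c σ '' projSet A J i₀ (B, fun i => ε * (v i + 2 * k i)) := by
    rintro _ ⟨y, ⟨hyA, hy⟩, rfl⟩
    obtain ⟨J, i₀, k, c, σ, z, hJ, hi, hne, hz, hr⟩ := retr_structure h ht hy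
    simp only [mem_iUnion]
    have haff : ∀ i, aff (B, fun i => ε * (v i + 2 * k i)) i y =
        ε * (gridc Q ε v y i - 2 * k i) := by
      intro i
      simp only [aff, gridc, Pi.sub_apply, Pi.smul_apply, smul_eq_mul, ← hQ]
      field_simp
      ring
    refine ⟨k, J, i₀, c, σ, ⟨hJ, hi⟩, WithLp.toLp 2 z, ⟨y, hyA, ?_, fun j => ?_⟩, ?_⟩
    · rw [haff]; exact mul_ne_zero hε.ne' hne
    · rw [haff, haff, hz j]
      simp only []
      ring
    · have e : (fun i => (c i : ℝ) + σ * ∑ j, if J j = i then (WithLp.toLp 2 z : Euc d) j else 0) =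
          retr d t₀ (gridc Q ε v y) := by
        ext i; rw [hr i]
      simp only [F]
      rw [e]
      have hy2 : y = ε • Q.symm (gridc Q ε v y + v) := by
        unfold gridc
        rw [sub_add_cancel, map_smul, smul_smul, mul_inv_cancel₀ hε.ne', one_smul]; simp
      calc ε • Q.symm (retr d t₀ (gridc Q ε v y) + v)
          = ε • Q.symm (gridc Q ε v y + v) +
            ε • Q.symm (retr d t₀ (gridc Q ε v y) - gridc Q ε v y) := by
              rw [← smul_add, ← map_add]; congr 2; abel
        _ = y + ε • displ d t₀ Q ε v y := by rw [← hy2]; rfl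
  refine measure_mono_null hsub ?_
  simp only [measure_iUnion_null_iff]
  rintro k J i₀ c σ ⟨hJ, hi⟩
  obtain ⟨K, hK⟩ := hF J c σ
  have := hK.hausdorffMeasure_image_le (d := d) (by positivity)
    (projSet A J i₀ (B, fun i => ε * (v i + 2 * k i)))
  rw [hgood k J i₀ hJ hi, mul_zero] at this
  exact le_antisymm this zero_le

/-! ### Minimal sets are rectifiable -/

/-- Minimality tested on a Lipschitz map preserving a smaller ball, via the linear homotopy. -/
lemma minimal_apply {n d : ℕ} {b r : ℝ} {E : Set (Euc n)}
    (hE : IsAAlmostMinimal n d (ball 0 b) E (fun _ => 0)) (hr : r < b)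
    {Φ : Euc n → Euc n} {K : ℝ≥0} (hΦ : LipschitzWith K Φ)
    (hid : ∀ x, x ∉ closedBall (0 : Euc n) r → Φ x = x)
    (hmap : MapsTo Φ (closedBall 0 r) (closedBall 0 r)) :
    μH[(d : ℝ)] (E ∩ {x | Φ x ≠ x}) ≤ μH[(d : ℝ)] (Φ '' (E ∩ {x | Φ x ≠ x})) := by
  let φ : ℝ → Euc n → Euc n := fun t x => x + t • (Φ x - x)
  have hφ1 : φ 1 = Φ := by ext1 x; simp [φ]
  have hseg : ∀ t ∈ Icc (0:ℝ) 1, ∀ x ∈ closedBall (0 : Euc n) r, φ t x ∈ closedBall 0 r := by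
    intro t ht x hx
    exact (convex_closedBall (0 : Euc n) r).add_smul_sub_mem hx (hmap hx) ht
  have hidt : ∀ t, ∀ x, x ∉ closedBall (0 : Euc n) r → φ t x = x := by
    intro t x hx; simp [φ, hid x hx]
  have hW : defWhat (ball 0 b) φ ⊆ closedBall 0 r := by
    intro y hy
    simp only [defWhat, mem_iUnion] at hy
    obtain ⟨t, ht, hy⟩ := hy
    have h1 : ∀ x ∈ defW (ball 0 b) φ t, x ∈ closedBall (0 : Euc n) r := by
      intro x hx; by_contra h; exact hx.2 (hidt t x h)
    rcases hy with hy | ⟨x, hx, rfl⟩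
    · exact h1 _ hy
    · exact hseg t ht x (h1 x hx)
  have hcl : closure (defWhat (ball 0 b) φ) ⊆ closedBall 0 r :=
    closure_minimal hW isClosed_closedBall
  have hsub : closedBall (0 : Euc n) r ⊆ ball 0 b := closedBall_subset_ball hr
  have hadm : IsAdmissibleDef (ball 0 b) (Metric.diam (defWhat (ball 0 b) φ) + 1) φ := by
    refine ⟨fun t ht x hx => ?_, fun x _ => by simp [φ], ?_, ⟨K, ?_⟩, ?_, hcl.trans hsub, by linarith⟩
    · by_cases h : x ∈ closedBall (0 : Euc n) r
      · exact hsub (hseg t ht x h)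
      · rw [hidt t x h]; exact hx
    · have := hΦ.continuous
      exact Continuous.continuousOn (by fun_prop)
    · rw [hφ1]; exact hΦ.lipschitzOnWith
    · exact (isCompact_closedBall (0 : Euc n) r).of_isClosed_subset isClosed_closure hcl
  have h := hE.2.2.2 _ (by linarith [Metric.diam_nonneg (s := defWhat (ball 0 b) φ)]) φ hadm
  have hEW : E ∩ defW (ball 0 b) φ 1 = E ∩ {x | Φ x ≠ x} := by
    ext x
    constructor
    · rintro ⟨h1, h2⟩; exact ⟨h1, by rw [← hφ1]; exact h2.2⟩
    · rintro ⟨h1, h2⟩; exact ⟨h1, hE.1 h1, by rw [hφ1]; exact h2⟩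
  rw [hEW, hφ1] at h
  simpa using h

lemma exists_closedBall_of_compact {n : ℕ} {b : ℝ} (hb : 0 < b) {K : Set (Euc n)}
    (hK : IsCompact K) (hKb : K ⊆ ball 0 b) : ∃ r, 0 < r ∧ r < b ∧ K ⊆ closedBall 0 r := by
  rcases K.eq_empty_or_nonempty with rfl | hne
  · exact ⟨b / 2, by linarith, by linarith, empty_subset _⟩
  obtain ⟨x, hx, hmax⟩ := hK.exists_isMaxOn hne continuous_norm.continuousOn
  have hxb : ‖x‖ < b := by simpa using hKb hx
  refine ⟨(‖x‖ + b) / 2, by positivity, by linarith, fun y hy => ?_⟩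
  have : ‖y‖ ≤ ‖x‖ := hmax hy
  rw [mem_closedBall_zero_iff]; linarith

lemma finite_of_compact {n d : ℕ} {b : ℝ} (hb : 0 < b) {E : Set (Euc n)} {h : ℝ → ℝ≥0∞}
    (hE : IsAAlmostMinimal n d (ball 0 b) E h) {K : Set (Euc n)} (hK : IsCompact K)
    (hKb : K ⊆ ball 0 b) : μH[(d : ℝ)] (E ∩ K) < ⊤ := by
  obtain ⟨r, _, hr, hKr⟩ := exists_closedBall_of_compact hb hK hKb
  exact (measure_mono (inter_subset_inter_right _ hKr)).trans_lt
    (hE.2.2.1 0 r (closedBall_subset_ball hr))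

/-- There are linearly independent grid directions `B` such that, for almost every shift `v`, all the
relevant central projections of `A` are null. This is Fubini applied to `projSet_null`. -/
lemma exists_good_matrix {n d : ℕ} (hd : 1 ≤ d) {A : Set (Euc n)} (hA : IsCompact A)
    (hAf : μH[(d : ℝ)] A ≠ ⊤) (hPU : PU d A) :
    ∃ (B : Fin n → Euc n) (Q : Euc n ≃L[ℝ] (Fin n → ℝ)), (∀ y i, Q y i = ∑ k, B i k * y k) ∧
      ∀ᵐ v : Fin n → ℝ, ∀ (J : Fin d → Fin n) (i₀ : Fin n), Function.Injective J →
        i₀ ∉ range J → μH[(d : ℝ)] (projSet A J i₀ (B, v)) = 0 := by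
  have h1 : ∀ᵐ p : (Fin n → Euc n) × (Fin n → ℝ), ∀ (J : Fin d → Fin n) (i₀ : Fin n),
      Function.Injective J → i₀ ∉ range J → μH[(d : ℝ)] (projSet A J i₀ p) = 0 := by
    rw [ae_all_iff]; intro J
    rw [ae_all_iff]; intro i₀
    by_cases hJ : Function.Injective J
    · by_cases hi : i₀ ∈ range J
      · exact Eventually.of_forall fun p _ h => absurd hi h
      · filter_upwards [projSet_null hd hA hAf hPU hJ hi] with p hp _ _ using hp
    · exact Eventually.of_forall fun p h => absurd h hJ
  have h2 := Measure.ae_ae_of_ae_prod h1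
  let D : Set (Fin n → Euc n) := {B | (Matrix.of fun i k => B i k).det ≠ 0}
  have hDo : IsOpen D := by
    refine isOpen_ne_fun ?_ continuous_const
    apply Continuous.matrix_det
    refine continuous_matrix fun i j => ?_
    simp only [Matrix.of_apply]
    fun_prop
  have hDn : D.Nonempty := by
    refine ⟨fun i => EuclideanSpace.single i 1, ?_⟩
    change Matrix.det _ ≠ 0
    have : (Matrix.of fun i k => (EuclideanSpace.single i (1:ℝ) : Euc n) k) = 1 := by
      ext i k
      simp [Matrix.one_apply, eq_comm]
    rw [this, Matrix.det_one]; exact one_ne_zero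
  have hpos : volume D ≠ 0 := (hDo.measure_pos volume hDn).ne'
  obtain ⟨B, hBD, hB⟩ : ∃ B ∈ D, ∀ᵐ v : Fin n → ℝ, ∀ (J : Fin d → Fin n) (i₀ : Fin n),
      Function.Injective J → i₀ ∉ range J → μH[(d : ℝ)] (projSet A J i₀ (B, v)) = 0 := by
    by_contra hcon
    exact hpos (measure_mono_null (fun B hB hB2 => hcon ⟨B, hB, hB2⟩) h2)
  let L : Euc n →ₗ[ℝ] (Fin n → ℝ) :=
    (Matrix.toLin' (Matrix.of fun i k => B i k)).comp (WithLp.linearEquiv 2 ℝ (Fin n → ℝ)).toLinearMap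
  have hL : ∀ y i, L y i = ∑ k, B i k * y k := by
    intro y i
    simp [L, Matrix.mulVec, dotProduct]
  have hinj : Function.Injective L := by
    rw [← LinearMap.ker_eq_bot, LinearMap.ker_eq_bot']
    intro y hy
    have := Matrix.eq_zero_of_mulVec_eq_zero hBD (v := fun k => y k) (by
      ext i; have := congrFun hy i; rw [hL] at this; simpa [Matrix.mulVec, dotProduct] using this)
    ext k; exact congrFun this k
  let Q := (LinearEquiv.ofInjectiveOfFinrankEq L hinj (by simp)).toContinuousLinearEquiv
  refine ⟨B, Q, fun y i => ?_, hB⟩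
  rw [← hL]; rfl

/-- A property of almost every shift holds simultaneously for all centres of cells of almost every
grid of mesh `ε`. -/
lemma good_shift {n : ℕ} {P : (Fin n → ℝ) → Prop} (hP : ∀ᵐ v, P v) {ε : ℝ} (hε : 0 < ε) :
    ∀ᵐ v : Fin n → ℝ, ∀ k : Fin n → ℤ, P (fun i => ε * (v i + 2 * k i)) := by
  rw [ae_all_iff]
  intro k
  have h1 : ∀ᵐ v : Fin n → ℝ, P (ε • v) := by
    rw [ae_iff] at hP ⊢
    have := Measure.addHaar_preimage_smul (volume : Measure (Fin n → ℝ)) hε.ne' {v | ¬ P v}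
    rw [hP, mul_zero] at this
    exact this
  have h2 : ∀ᵐ v : Fin n → ℝ, P (ε • (v + fun i => 2 * (k i : ℝ))) :=  by
    rw [ae_iff] at h1 ⊢
    have := measure_preimage_add_right (volume : Measure (Fin n → ℝ)) (fun i => 2 * (k i : ℝ))
      {v | ¬ P (ε • v)}
    rw [h1] at this
    exact this
  exact h2

/-- One Federer–Fleming deformation of a purely unrectifiable `A ⊆ E`: the part of `A` away from the
dual skeleton of the grid is flattened to a null set, and the rest expands by at most `(C/t₀)^d`. -/
lemma ff_step {n d : ℕ} (h : d + 1 ≤ n) {b r r' t₀ ε : ℝ} {E A : Set (Euc n)}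
    (hE : IsAAlmostMinimal n d (ball 0 b) E (fun _ => 0)) (hr : r < b)
    (hAr : A ⊆ closedBall 0 r') (hA : A.Nonempty) (hAE : A ⊆ E)
    (ht : 0 < t₀) (ht1 : t₀ ≤ 1) (hε : 0 < ε)
    (Q : Euc n ≃L[ℝ] (Fin n → ℝ)) (B : Fin n → Euc n) (hQ : ∀ y i, Q y i = ∑ k, B i k * y k)
    (hεr : r' + ε * (1 + ‖(Q.symm : (Fin n → ℝ) →L[ℝ] Euc n)‖) ≤ r)
    (v : Fin n → ℝ)
    (hgood : ∀ (k : Fin n → ℤ) (J : Fin d → Fin n) (i₀ : Fin n), Function.Injective J →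
      i₀ ∉ range J → μH[(d : ℝ)] (projSet A J i₀ (B, fun i => ε * (v i + 2 * k i))) = 0)
    {K : ℝ≥0} (hK : 1 + ‖(Q.symm : (Fin n → ℝ) →L[ℝ] Euc n)‖ + 
      3 / t₀ * (‖(Q.symm : (Fin n → ℝ) →L[ℝ] Euc n)‖ * ‖(Q : Euc n →L[ℝ] (Fin n → ℝ))‖) ≤ K) :
    μH[(d : ℝ)] A ≤ (K : ℝ≥0∞) ^ d * μH[(d : ℝ)] ((E ∩ thickening ε A) \ A) +
      (1 + (K : ℝ≥0∞) ^ d) * μH[(d : ℝ)] (A ∩ {y | mth d (gridc Q ε v y) ≤ t₀}) := by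
  set α := ‖(Q.symm : (Fin n → ℝ) →L[ℝ] Euc n)‖ with hα
  set β := ‖(Q : Euc n →L[ℝ] (Fin n → ℝ))‖ with hβ
  have hα0 : 0 ≤ α := norm_nonneg _
  have hβ0 : 0 ≤ β := norm_nonneg _
  let χ : Euc n → ℝ := fun y => max 0 (1 - infDist y A / ε)
  have hχ0 : ∀ y, 0 ≤ χ y := fun y => le_max_left _ _
  have hχ1 : ∀ y, χ y ≤ 1 := fun y => max_le zero_le_one (by
    have : 0 ≤ infDist y A / ε := div_nonneg infDist_nonneg hε.le
    linarith)
  have hχA : ∀ y ∈ A, χ y = 1 := fun y hy => by simp [χ, infDist_zero_of_mem hy]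
  have hχN : ∀ y, y ∉ thickening ε A → χ y = 0 := by
    intro y hy
    rw [mem_thickening_iff_infDist_lt hA, not_lt] at hy
    exact max_eq_left (by rw [sub_nonpos, le_div_iff₀ hε]; linarith)
  have hχl : ∀ y z, |χ y - χ z| ≤ ε⁻¹ * dist y z := by
    intro y z
    have h0 := abs_max_sub_max_le_abs (1 - infDist y A / ε) (1 - infDist z A / ε) 0
    rw [max_comm, max_comm _ (0 : ℝ)] at h0
    refine h0.trans ?_
    have : (1 - infDist y A / ε) - (1 - infDist z A / ε) = ε⁻¹ * (infDist z A - infDist y A) := by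
      ring
    rw [this, abs_mul, abs_of_pos (inv_pos.2 hε)]
    gcongr
    have := (lipschitz_infDist_pt A).dist_le_mul z y
    rw [Real.dist_eq] at this
    simpa [dist_comm] using this
  let Φ : Euc n → Euc n := fun y => y + (χ y * ε) • displ d t₀ Q ε v y
  have hΦ : LipschitzWith K Φ := by
    refine LipschitzWith.of_dist_le_mul fun y z => ?_
    have h1 := norm_smul_sub_smul_le (χ y * ε) (χ z * ε) (displ d t₀ Q ε v y) (displ d t₀ Q ε v z)
    have h2 := dist_displ_le h ht ht1 hε Q v y z
    have h3 := norm_displ_le h (ε := ε) ht ht1 Q v z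
    have h4 : |χ y * ε| ≤ ε := by
      rw [abs_of_nonneg (mul_nonneg (hχ0 y) hε.le)]
      exact mul_le_of_le_one_left hε.le (hχ1 y)
    have h5 : |χ y * ε - χ z * ε| ≤ dist y z := by
      rw [← sub_mul, abs_mul, abs_of_pos hε]
      calc _ ≤ ε⁻¹ * dist y z * ε := by gcongr; exact hχl y z
        _ = dist y z := by field_simp
    calc dist (Φ y) (Φ z) = ‖(y - z) + ((χ y * ε) • displ d t₀ Q ε v y -
          (χ z * ε) • displ d t₀ Q ε v z)‖ := by rw [dist_eq_norm]; congr 1; simp only [Φ]; abel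
      _ ≤ dist y z + (ε * (α * (3 / t₀ * (ε⁻¹ * (β * dist y z)))) + dist y z * α) := by
          refine (norm_add_le _ _).trans ?_
          rw [← dist_eq_norm]
          refine add_le_add le_rfl (h1.trans ?_)
          gcongr
      _ = (1 + α + 3 / t₀ * (α * β)) * dist y z := by field_simp; ring
      _ ≤ K * dist y z := by gcongr
  have hΦN : ∀ y, y ∉ thickening ε A → Φ y = y := fun y hy => by simp [Φ, hχN y hy]
  have hN : ∀ y ∈ thickening ε A, ‖y‖ ≤ r' + ε := by
    intro y hy
    obtain ⟨z, hz, hyz⟩ := mem_thickening_iff.1 hy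
    have h1 : ‖z‖ ≤ r' := by simpa using hAr hz
    have h2 : ‖y‖ ≤ ‖z‖ + dist y z := by
      rw [dist_eq_norm]; simpa using norm_add_le z (y - z)
    linarith
  have hmin := minimal_apply hE hr hΦ (fun x hx => hΦN x fun hx2 => hx (by
      rw [mem_closedBall_zero_iff]; have := hN x hx2; nlinarith)) (by
    intro y hy
    by_cases hyN : y ∈ thickening ε A
    · rw [mem_closedBall_zero_iff]
      have h1 := hN y hyN
      have h2 : ‖(χ y * ε) • displ d t₀ Q ε v y‖ ≤ ε * α := by
        rw [norm_smul, Real.norm_eq_abs, abs_of_nonneg (mul_nonneg (hχ0 y) hε.le)]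
        gcongr
        · exact mul_le_of_le_one_left hε.le (hχ1 y)
        · exact norm_displ_le h ht ht1 Q v y
      refine (norm_add_le _ _).trans ?_
      linarith
    · rw [hΦN y hyN]; exact hy)
  set Kill := A ∩ {y | t₀ ≤ mth d (gridc Q ε v y)}
  set Bad := A ∩ {y | mth d (gridc Q ε v y) ≤ t₀}
  set S := (E ∩ thickening ε A) \ A
  have hΦA : ∀ y ∈ A, Φ y = y + ε • displ d t₀ Q ε v y := fun y hy => by simp [Φ, hχA y hy]
  have hkill : μH[(d : ℝ)] (Φ '' Kill) = 0 := by
    have := skeleton_image_null h ht hε Q B hQ v hgood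
    rw [← this]; congr 1
    exact image_congr fun y hy => hΦA y hy.1
  have hW : Φ '' (E ∩ {x | Φ x ≠ x}) ⊆ Φ '' Kill ∪ (Φ '' Bad ∪ Φ '' S) := by
    rw [← image_union, ← image_union]
    apply image_mono
    rintro y ⟨hy, hy2⟩
    have hyN : y ∈ thickening ε A := by by_contra hc; exact hy2 (hΦN y hc)
    by_cases hyA : y ∈ A
    · rcases le_total t₀ (mth d (gridc Q ε v y)) with hm | hm
      · exact Or.inl ⟨hyA, hm⟩
      · exact Or.inr (Or.inl ⟨hyA, hm⟩)
    · exact Or.inr (Or.inr ⟨⟨hy, hyN⟩, hyA⟩)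
  have hAsub : A ⊆ (E ∩ {x | Φ x ≠ x}) ∪ (Φ '' Kill ∪ Bad) := by
    intro y hy
    by_cases hf : Φ y = y
    · rcases le_total t₀ (mth d (gridc Q ε v y)) with hm | hm
      · exact Or.inr (Or.inl ⟨y, ⟨hy, hm⟩, hf⟩)
      · exact Or.inr (Or.inr ⟨hy, hm⟩)
    · exact Or.inl ⟨hAE hy, hf⟩
  have hL : ∀ T, μH[(d : ℝ)] (Φ '' T) ≤ (K : ℝ≥0∞) ^ d * μH[(d : ℝ)] T := by
    intro T
    have := hΦ.hausdorffMeasure_image_le (d := d) (by positivity) T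
    simpa using this
  calc μH[(d : ℝ)] A ≤ μH[(d : ℝ)] (E ∩ {x | Φ x ≠ x}) + (μH[(d : ℝ)] (Φ '' Kill) + μH[(d : ℝ)] Bad) :=
        (measure_mono hAsub).trans ((measure_union_le _ _).trans (add_le_add le_rfl (measure_union_le _ _)))
    _ ≤ ((K : ℝ≥0∞) ^ d * μH[(d : ℝ)] Bad + (K : ℝ≥0∞) ^ d * μH[(d : ℝ)] S) + μH[(d : ℝ)] Bad := by
        rw [hkill, zero_add]
        refine add_le_add (hmin.trans ((measure_mono hW).trans ((measure_union_le _ _).trans ?_))) le_rfl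
        rw [hkill, zero_add]
        exact (measure_union_le _ _).trans (add_le_add (hL _) (hL _))
    _ = _ := by ring

/-- Purely unrectifiable compact subsets of a minimal set are null. In `ff_step`, the mass of
`E` near but outside `A` tends to `0` with the mesh of the grid, and averaging over its position
bounds the part of `A` near the dual skeleton by a multiple of `t₀ ^ (d + 1)`; this beats the
expansion factor of order `t₀ ^ (-d)`. -/
theorem minimal_PU_null {n d : ℕ} (hd : 1 ≤ d) (hdn : d + 1 ≤ n) {b : ℝ} (hb : 0 < b)
    {E A : Set (Euc n)} (hE : IsAAlmostMinimal n d (ball 0 b) E (fun _ => 0))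
    (hAc : IsCompact A) (hAE : A ⊆ E) (hPU : PU d A) : μH[(d : ℝ)] A = 0 := by
  rcases A.eq_empty_or_nonempty with rfl | hA
  · simp
  obtain ⟨r', hr'0, hr'b, hAr⟩ := exists_closedBall_of_compact hb hAc (hAE.trans hE.1)
  obtain ⟨r, hr'r, hrb⟩ := exists_between hr'b
  have hAf : μH[(d : ℝ)] A ≠ ⊤ := by
    have := finite_of_compact hb hE hAc (hAE.trans hE.1)
    rw [inter_eq_self_of_subset_right hAE] at this
    exact this.ne
  obtain ⟨B, Q, hQ, hgood⟩ := exists_good_matrix hd hAc hAf hPU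
  obtain ⟨C, hC, hCv⟩ := volume_box_mth_le n d hdn
  set α := ‖(Q.symm : (Fin n → ℝ) →L[ℝ] Euc n)‖ with hα
  set β := ‖(Q : Euc n →L[ℝ] (Fin n → ℝ))‖ with hβ
  have hα0 : 0 ≤ α := norm_nonneg _
  have hβ0 : 0 ≤ β := norm_nonneg _
  let C1 : ℝ≥0 := ⟨1 + α + 3 * (α * β), by positivity⟩
  have key : ∀ q : ℕ, 2 ^ n * μH[(d : ℝ)] A ≤
      (1 + ((C1 * 2 ^ q : ℝ≥0) : ℝ≥0∞) ^ d) * (C * ENNReal.ofReal ((1 / 2) ^ q) ^ (d + 1) * μH[(d : ℝ)] A) := by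
    intro q
    set t₀ : ℝ := (1 / 2) ^ q with ht₀
    have ht : 0 < t₀ := by positivity
    have ht1 : t₀ ≤ 1 := pow_le_one₀ (by norm_num) (by norm_num)
    set K : ℝ≥0 := C1 * 2 ^ q with hKdef
    have hK : 1 + α + 3 / t₀ * (α * β) ≤ K := by
      have e : (K : ℝ) = (1 + α + 3 * (α * β)) * (1 / t₀) := by
        rw [hKdef, ht₀]; push_cast
        have : (C1 : ℝ) = 1 + α + 3 * (α * β) := rfl
        rw [this]; congr 1; simp
      rw [e]
      have h1 : 1 ≤ 1 / t₀ := by rw [le_div_iff₀ ht]; linarith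
      have h2 : (1 + α) * 1 ≤ (1 + α) * (1 / t₀) := by gcongr
      calc _ = (1 + α) * 1 + 3 * (α * β) * (1 / t₀) := by ring
        _ ≤ _ := by rw [add_mul (1 + α)]; linarith
    have step : ∀ ε : ℝ, 0 < ε → r' + ε * (1 + α) ≤ r →
        2 ^ n * μH[(d : ℝ)] A ≤ 2 ^ n * ((K : ℝ≥0∞) ^ d * μH[(d : ℝ)] ((E ∩ thickening ε A) \ A)) +
        (1 + (K : ℝ≥0∞) ^ d) * (C * ENNReal.ofReal t₀ ^ (d + 1) * μH[(d : ℝ)] A) := by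
      intro ε hε hεr
      have hg := good_shift hgood hε
      have hpt : ∀ᵐ v ∂(volume.restrict (box n)), μH[(d : ℝ)] A ≤
          (K : ℝ≥0∞) ^ d * μH[(d : ℝ)] ((E ∩ thickening ε A) \ A) +
          (1 + (K : ℝ≥0∞) ^ d) *
            (μH[(d : ℝ)].restrict A) {y | mth d (gridc Q ε v y) ≤ t₀} := by
        refine ae_restrict_of_ae ?_
        filter_upwards [hg] with v hv
        rw [Measure.restrict_apply' hAc.measurableSet, inter_comm _ A]
        exact ff_step hdn hE hrb hAr hA hAE ht ht1 hε Q B hQ hεr v hv hK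
      have hlint := lintegral_mono_ae hpt
      rw [lintegral_const, Measure.restrict_apply_univ, volume_box,
        lintegral_add_left measurable_const, lintegral_const, Measure.restrict_apply_univ,
        volume_box, lintegral_const_mul' _ _ (by finiteness), mul_comm, mul_comm _ (2 ^ n : ℝ≥0∞)]
        at hlint
      refine hlint.trans (add_le_add le_rfl (mul_le_mul_right ?_ _))
      have : IsFiniteMeasure (μH[(d : ℝ)].restrict A) := ⟨by simpa using hAf.lt_top⟩
      have hav := avg_measure_le hdn hCv (μH[(d : ℝ)].restrict A) (u := fun y => ε⁻¹ • Q y)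
        (by fun_prop) t₀
      rwa [Measure.restrict_apply_univ] at hav
    -- the mass of `E` near but off `A` tends to zero
    have hthick : Tendsto (fun ε => μH[(d : ℝ)] ((E ∩ thickening ε A) \ A)) (𝓝[>] 0) (𝓝 0) := by
      have hfin : (μH[(d : ℝ)].restrict E) (thickening (r - r') A) ≠ ⊤ := by
        rw [Measure.restrict_apply isOpen_thickening.measurableSet, inter_comm]
        refine ((measure_mono (inter_subset_inter_right _ fun y hy => ?_)).trans_lt
          (hE.2.2.1 0 r (closedBall_subset_ball hrb))).ne
        obtain ⟨z, hz, hyz⟩ := mem_thickening_iff.1 hy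
        have h1 : ‖z‖ ≤ r' := by simpa using hAr hz
        have h2 : ‖y‖ ≤ ‖z‖ + dist y z := by
          rw [dist_eq_norm]; simpa using norm_add_le z (y - z)
        rw [mem_closedBall_zero_iff]; linarith
      have h1 := tendsto_measure_thickening_of_isClosed (μ := μH[(d : ℝ)].restrict E)
        ⟨r - r', by linarith, hfin⟩ hAc.isClosed
      have hAE' : (μH[(d : ℝ)].restrict E) A ≠ ⊤ := by
        rw [Measure.restrict_apply hAc.measurableSet, inter_eq_self_of_subset_left hAE]; exact hAf
      have h2 := ENNReal.Tendsto.sub h1 (tendsto_const_nhds (x := (μH[(d : ℝ)].restrict E) A))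
        (Or.inl hAE')
      rw [tsub_self] at h2
      refine h2.congr' ?_
      filter_upwards [self_mem_nhdsWithin] with ε hε
      rw [← measure_sdiff (self_subset_thickening hε A) hAc.measurableSet.nullMeasurableSet hAE',
        Measure.restrict_apply (isOpen_thickening.measurableSet.diff hAc.measurableSet)]
      congr 1
      ext y; simp only [mem_inter_iff, Set.mem_sdiff]; tauto
    have hlim : Tendsto (fun ε => 2 ^ n * ((K : ℝ≥0∞) ^ d * μH[(d : ℝ)] ((E ∩ thickening ε A) \ A)) +
        (1 + (K : ℝ≥0∞) ^ d) * (C * ENNReal.ofReal t₀ ^ (d + 1) * μH[(d : ℝ)] A)) (𝓝[>] 0)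
        (𝓝 (2 ^ n * ((K : ℝ≥0∞) ^ d * 0) +
        (1 + (K : ℝ≥0∞) ^ d) * (C * ENNReal.ofReal t₀ ^ (d + 1) * μH[(d : ℝ)] A))) := by
      refine Tendsto.add (ENNReal.Tendsto.const_mul (ENNReal.Tendsto.const_mul hthick
        (Or.inr (by finiteness))) (Or.inr (by finiteness))) tendsto_const_nhds
    rw [mul_zero, mul_zero, zero_add] at hlim
    refine ge_of_tendsto hlim ?_
    have hpos : 0 < (r - r') / (1 + α) := div_pos (by linarith) (by linarith)
    filter_upwards [Ioo_mem_nhdsGT hpos] with ε hε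
    refine step ε hε.1 ?_
    have := (lt_div_iff₀ (by linarith)).1 hε.2
    linarith
  have key2 : ∀ q : ℕ, 2 ^ n * μH[(d : ℝ)] A ≤
      ((1 + (C1 : ℝ≥0∞) ^ d) * (C * μH[(d : ℝ)] A)) * (2⁻¹ : ℝ≥0∞) ^ q := by
    intro q
    refine (key q).trans ?_
    have hx : ENNReal.ofReal ((1 / 2 : ℝ) ^ q) = (2⁻¹ : ℝ≥0∞) ^ q := by
      rw [ENNReal.ofReal_pow (by norm_num)]; congr 1
      rw [one_div, ENNReal.ofReal_inv_of_pos (by norm_num)]; simp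
    rw [hx]
    set x := (2⁻¹ : ℝ≥0∞) ^ q with hxd
    have hx1 : x ≤ 1 := pow_le_one₀ zero_le (by simp)
    have h2x : (2 : ℝ≥0∞) ^ q * x = 1 := by
      rw [hxd, ← mul_pow, ENNReal.mul_inv_cancel (by simp) (by simp), one_pow]
    have e : (1 + ((C1 * 2 ^ q : ℝ≥0) : ℝ≥0∞) ^ d) * x ^ (d + 1) =
        (x ^ d + (C1 : ℝ≥0∞) ^ d * (2 ^ q * x) ^ d) * x := by
      push_cast; rw [mul_pow, mul_pow, pow_succ]; ring
    calc _ = (1 + ((C1 * 2 ^ q : ℝ≥0) : ℝ≥0∞) ^ d) * x ^ (d + 1) * (C * μH[(d : ℝ)] A) := by ring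
      _ = (x ^ d + (C1 : ℝ≥0∞) ^ d) * x * (C * μH[(d : ℝ)] A) := by rw [e, h2x, one_pow, mul_one]
      _ ≤ (1 + (C1 : ℝ≥0∞) ^ d) * x * (C * μH[(d : ℝ)] A) := by
          gcongr; exact pow_le_one₀ zero_le hx1
      _ = _ := by ring
  have hlim : Tendsto (fun q : ℕ => ((1 + (C1 : ℝ≥0∞) ^ d) * (C * μH[(d : ℝ)] A)) * (2⁻¹ : ℝ≥0∞) ^ q)
      atTop (𝓝 (((1 + (C1 : ℝ≥0∞) ^ d) * (C * μH[(d : ℝ)] A)) * 0)) :=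
    ENNReal.Tendsto.const_mul (ENNReal.tendsto_pow_atTop_nhds_zero_of_lt_one (by simp))
      (Or.inr (by finiteness))
  rw [mul_zero] at hlim
  have := ge_of_tendsto' hlim key2
  simpa using this

/-! ### Almost flat pieces -/

/-- The adjoint of a linear isometry, i.e. the coordinates of the orthogonal projection. -/
def coordAt {n d : ℕ} (L : Euc d →ₗᵢ[ℝ] Euc n) : Euc n →L[ℝ] Euc d :=
  ContinuousLinearMap.adjoint L.toContinuousLinearMap

lemma coordAt_inner {n d : ℕ} (L : Euc d →ₗᵢ[ℝ] Euc n) (x : Euc n) (z : Euc d) :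
    inner ℝ (coordAt L x) z = inner ℝ x (L z) := by
  simp [coordAt, ContinuousLinearMap.adjoint_inner_left]

lemma coordAt_apply {n d : ℕ} (L : Euc d →ₗᵢ[ℝ] Euc n) (z : Euc d) : coordAt L (L z) = z := by
  apply ext_inner_right ℝ
  intro w
  rw [coordAt_inner, L.inner_map_map]

lemma norm_coordAt_le {n d : ℕ} (L : Euc d →ₗᵢ[ℝ] Euc n) (x : Euc n) : ‖coordAt L x‖ ≤ ‖x‖ := by
  by_cases h : ‖coordAt L x‖ = 0
  · rw [h]; exact norm_nonneg _
  have h1 : ‖coordAt L x‖ * ‖coordAt L x‖ ≤ ‖x‖ * ‖coordAt L x‖ := by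
    rw [← real_inner_self_eq_norm_mul_norm, coordAt_inner]
    refine (real_inner_le_norm _ _).trans ?_
    rw [L.norm_map]
  exact le_of_mul_le_mul_right h1 (lt_of_le_of_ne (norm_nonneg _) (Ne.symm h))

/-- Pythagoras for the projection onto the range of `L`. -/
lemma norm_sub_proj_le {n d : ℕ} (L : Euc d →ₗᵢ[ℝ] Euc n) (x : Euc n) (z : Euc d) :
    ‖x - L (coordAt L x)‖ ≤ ‖x - L z‖ := by
  have e : x - L z = (x - L (coordAt L x)) + L (coordAt L x - z) := by rw [map_sub]; abel
  have ho : inner ℝ (x - L (coordAt L x)) (L (coordAt L x - z)) = (0 : ℝ) := by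
    rw [← coordAt_inner, map_sub, coordAt_apply, sub_self, inner_zero_left]
  have := norm_add_sq_eq_norm_sq_add_norm_sq_of_inner_eq_zero _ _ ho
  rw [e]
  have h2 := mul_self_nonneg ‖L (coordAt L x - z)‖
  exact abs_le_of_sq_le_sq' (by nlinarith) (norm_nonneg _) |>.2

lemma inner_sub_proj {n d : ℕ} (L : Euc d →ₗᵢ[ℝ] Euc n) (x : Euc n) :
    inner ℝ (x - L (coordAt L x)) x = ‖x - L (coordAt L x)‖ ^ 2 := by
  have ho : inner ℝ (x - L (coordAt L x)) (L (coordAt L x)) = (0 : ℝ) := by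
    rw [← coordAt_inner, map_sub, coordAt_apply, sub_self, inner_zero_left]
  rw [← real_inner_self_eq_norm_sq, inner_sub_right _ x, ho, sub_zero]

/-- The range of a linear map of rank possibly less than `d` is still contained in a `d`-plane. -/
lemma exists_isometry_range {n d : ℕ} (hdn : d ≤ n) (A : Euc d →L[ℝ] Euc n) :
    ∃ L : Euc d →ₗᵢ[ℝ] Euc n, ∀ z, ∃ w, A z = L w := by
  obtain ⟨m, rfl⟩ := Nat.exists_eq_add_of_le hdn
  let f : Fin (d + m) → Euc (d + m) := Fin.append (fun i => A (EuclideanSpace.single i 1)) 0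
  let bs := InnerProductSpace.gramSchmidtOrthonormalBasis (𝕜 := ℝ) (by simp) f
  let e : Euc d →ₗ[ℝ] Euc (d + m) :=
    { toFun := fun z => WithLp.toLp 2 (Fin.append z 0)
      map_add' := by
        intro x y; ext i
        refine Fin.addCases (fun j => ?_) (fun j => ?_) i <;> simp
      map_smul' := by
        intro a x; ext i
        refine Fin.addCases (fun j => ?_) (fun j => ?_) i <;> simp }
  have he : ∀ z, ‖e z‖ = ‖z‖ := by
    intro z
    rw [EuclideanSpace.norm_eq, EuclideanSpace.norm_eq, Fin.sum_univ_add]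
    simp [e]
  let ei : Euc d →ₗᵢ[ℝ] Euc (d + m) := ⟨e, he⟩
  let L : Euc d →ₗᵢ[ℝ] Euc (d + m) := bs.repr.symm.toLinearIsometry.comp ei
  refine ⟨L, fun z => ⟨WithLp.toLp 2 fun i => bs.repr (A z) (Fin.castAdd m i), ?_⟩⟩
  change A z = bs.repr.symm (e _)
  rw [LinearIsometryEquiv.eq_symm_apply]
  ext i
  refine Fin.addCases (fun j => ?_) (fun j => ?_) i
  · simp [e]
  · have hz : z = ∑ k, z k • EuclideanSpace.single k (1:ℝ) := by
      ext k; simp [Finset.sum_apply, Pi.single_apply]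
    have h0 : ∀ k : Fin d, inner ℝ (bs (Fin.natAdd d j)) (A (EuclideanSpace.single k 1)) = (0 : ℝ) := by
      intro k
      have := InnerProductSpace.gramSchmidtOrthonormalBasis_inv_triangular (𝕜 := ℝ)
        (by simp : Module.finrank ℝ (Euc (d + m)) = Fintype.card (Fin (d + m))) f
        (i := Fin.castAdd m k) (j := Fin.natAdd d j) (by rw [Fin.lt_def]; simp; omega)
      simpa [f] using this
    rw [OrthonormalBasis.repr_apply_apply, hz, map_sum, inner_sum]
    simp [e, h0, inner_smul_right]

/-- `S` has diameter at most `η` and all its secants make an angle of order `η` with a fixed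
`d`-plane. -/
def Flat {n : ℕ} (d : ℕ) (η : ℝ) (S : Set (Euc n)) (L : Euc d →ₗᵢ[ℝ] Euc n) : Prop :=
  ∀ x ∈ S, ∀ y ∈ S, ‖(x - y) - L (coordAt L (x - y))‖ ≤ η * dist x y ∧ dist x y ≤ η

/-- `S` is covered, up to an `H^d`-null set, by countably many almost flat pieces. -/
def FlatCov {n : ℕ} (d : ℕ) (η : ℝ) (S : Set (Euc n)) : Prop :=
  ∃ T : ℕ → Set (Euc n), (∀ m, MeasurableSet (T m) ∧ ∃ L, Flat d η (T m) L) ∧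
    μH[(d : ℝ)] (S \ ⋃ m, T m) = 0

lemma FlatCov.iUnion {n d : ℕ} {η : ℝ} {S : ℕ → Set (Euc n)} (h : ∀ k, FlatCov d η (S k)) :
    FlatCov d η (⋃ k, S k) := by
  choose T hT hT0 using h
  refine ⟨fun m => T m.unpair.1 m.unpair.2, fun m => hT _ _, ?_⟩
  refine measure_mono_null (t := ⋃ k, S k \ ⋃ m, T k m) ?_ (measure_iUnion_null hT0)
  rintro x ⟨hx, hx2⟩
  obtain ⟨k, hk⟩ := mem_iUnion.1 hx
  refine mem_iUnion.2 ⟨k, hk, fun hc => hx2 ?_⟩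
  obtain ⟨m, hm⟩ := mem_iUnion.1 hc
  exact mem_iUnion.2 ⟨Nat.pair k m, by simpa using hm⟩

lemma FlatCov.of_null_diff {n d : ℕ} {η : ℝ} {S T : Set (Euc n)} (h : FlatCov d η S)
    (hT : μH[(d : ℝ)] (T \ S) = 0) : FlatCov d η T := by
  obtain ⟨R, hR, hR0⟩ := h
  refine ⟨R, hR, measure_mono_null (t := (T \ S) ∪ (S \ ⋃ m, R m)) ?_ (measure_union_null hT hR0)⟩
  rintro x ⟨hx, hx2⟩
  by_cases hS : x ∈ S
  · exact Or.inr ⟨hS, hx2⟩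
  · exact Or.inl ⟨hx, hS⟩

/-- Rademacher's theorem turns bi-Lipschitz pieces into almost flat ones. -/
lemma flatCov_of_biLip {n d : ℕ} (hdn : d ≤ n) {S : Set (Euc n)} (hS : IsClosed S)
    (hb : BiLip d S) {η : ℝ} (hη : 0 < η) : FlatCov d η S := by
  obtain ⟨f₀, K, hf₀⟩ := hb
  obtain ⟨f, hfL, hff⟩ := (LipschitzOnWith.of_dist_le_mul fun x hx y hy => (hf₀ x hx y hy).1 :
    LipschitzOnWith K f₀ S).extend_finite_dimension
  have hf1 : ∀ x ∈ S, ∀ y ∈ S, dist (f x) (f y) ≤ K * dist x y := fun x hx y hy => by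
    rw [← hff hx, ← hff hy]; exact (hf₀ x hx y hy).1
  have hf2 : ∀ x ∈ S, ∀ y ∈ S, dist x y ≤ K * dist (f x) (f y) := fun x hx y hy => by
    rw [← hff hx, ← hff hy]; exact (hf₀ x hx y hy).2
  have hinj : InjOn f S := fun x hx y hy h => by
    have := hf2 x hx y hy
    rw [h, dist_self, mul_zero] at this
    exact dist_le_zero.1 this
  have hg0 : LipschitzOnWith K (Function.invFunOn f S) (f '' S) := by
    refine LipschitzOnWith.of_dist_le_mul ?_
    rintro _ ⟨x, hx, rfl⟩ _ ⟨y, hy, rfl⟩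
    rw [hinj.leftInvOn_invFunOn hx, hinj.leftInvOn_invFunOn hy]
    exact hf2 x hx y hy
  obtain ⟨g, hgL, hgg⟩ := hg0.extend_finite_dimension
  have hgf : ∀ x ∈ S, g (f x) = x := fun x hx => by
    rw [← hgg (mem_image_of_mem f hx), hinj.leftInvOn_invFunOn hx]
  have hdiff := hgL.ae_differentiableAt (μ := volume)
  let D := {z | DifferentiableAt ℝ g z}
  have hDm : MeasurableSet D := measurableSet_of_differentiableAt ℝ g
  have hr : 0 < η / (K + 1) := by positivity
  let rr : ℝ≥0 := ⟨η / (K + 1), hr.le⟩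
  have hrr : rr ≠ 0 := by intro h; exact hr.ne' (congrArg NNReal.toReal h)
  obtain ⟨t, A, -, htm, hcov, happ, -⟩ := exists_partition_approximatesLinearOn_of_hasFDerivWithinAt
    g D (fderiv ℝ g) (fun z hz => (DifferentiableAt.hasFDerivAt hz).hasFDerivWithinAt)
    (fun _ => rr) (fun _ => hrr)
  obtain ⟨q, hq⟩ := TopologicalSpace.exists_dense_seq (Euc n)
  have hfm : Measurable f := hfL.continuous.measurable
  refine ⟨fun m => S ∩ f ⁻¹' (D ∩ t m.unpair.1) ∩ ball (q m.unpair.2) (η / 2), fun m => ⟨?_, ?_⟩, ?_⟩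
  · exact (hS.measurableSet.inter (hfm (hDm.inter (htm _)))).inter measurableSet_ball
  · obtain ⟨L, hL⟩ := exists_isometry_range hdn (A m.unpair.1)
    refine ⟨L, ?_⟩
    rintro x ⟨⟨hx, hx2⟩, hx3⟩ y ⟨⟨hy, hy2⟩, hy3⟩
    constructor
    · obtain ⟨w, hw⟩ := hL (f x - f y)
      refine (norm_sub_proj_le L _ w).trans ?_
      have h1 := happ m.unpair.1 _ hx2 _ hy2
      rw [hgf x hx, hgf y hy, hw] at h1
      refine h1.trans ?_
      rw [← dist_eq_norm]
      have h2 := hf1 x hx y hy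
      have h3 : (rr : ℝ) = η / (K + 1) := rfl
      rw [h3]
      calc η / (K + 1) * dist (f x) (f y) ≤ η / (K + 1) * ((K + 1) * dist x y) := by
            gcongr; refine h2.trans ?_; gcongr; linarith
        _ = η * dist x y := by field_simp
    · have := dist_triangle_right x y (q m.unpair.2)
      have h1 := mem_ball.1 hx3
      have h2 := mem_ball.1 hy3
      linarith
  · have hnull : μH[(d : ℝ)] (g '' Dᶜ) = 0 := by
      have h0 : μH[(d : ℝ)] Dᶜ = 0 := hausdorff_null_of_volume_null hdiff
      have := hgL.hausdorffMeasure_image_le (d := d) (by positivity) Dᶜ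
      rw [h0, mul_zero] at this
      exact le_antisymm this zero_le
    refine measure_mono_null ?_ hnull
    rintro x ⟨hx, hx2⟩
    refine ⟨f x, fun hD => hx2 ?_, hgf x hx⟩
    obtain ⟨i, hi⟩ := mem_iUnion.1 (hcov hD)
    obtain ⟨j, hj⟩ := hq.exists_dist_lt x (half_pos hη)
    exact mem_iUnion.2 ⟨Nat.pair i j, by simpa using ⟨⟨hx, hD, hi⟩, hj⟩⟩

lemma BiLip.mono {n d : ℕ} {S T : Set (Euc n)} (h : BiLip d S) (hT : T ⊆ S) : BiLip d T := by
  obtain ⟨f, K, hf⟩ := h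
  exact ⟨f, K, fun x hx y hy => hf x (hT hx) y (hT hy)⟩

lemma BiLip.closureSet {n d : ℕ} {S : Set (Euc n)} (h : BiLip d S) : BiLip d (closure S) := by
  obtain ⟨f₀, K, hf₀⟩ := h
  obtain ⟨f, hfL, hff⟩ := (LipschitzOnWith.of_dist_le_mul fun x hx y hy => (hf₀ x hx y hy).1 :
    LipschitzOnWith K f₀ S).extend_finite_dimension
  have hc := hfL.continuous
  refine ⟨f, K, ?_⟩
  let Z : Set (Euc n × Euc n) := {p | dist (f p.1) (f p.2) ≤ K * dist p.1 p.2 ∧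
      dist p.1 p.2 ≤ K * dist (f p.1) (f p.2)}
  have hZ : IsClosed Z := by
    refine isClosed_and (isClosed_le ?_ ?_) (isClosed_le ?_ ?_)
    · exact (hc.comp continuous_fst).dist (hc.comp continuous_snd)
    · exact continuous_const.mul continuous_dist
    · exact continuous_dist
    · exact continuous_const.mul ((hc.comp continuous_fst).dist (hc.comp continuous_snd))
  have h0 : S ×ˢ S ⊆ Z := by
    rintro ⟨x, y⟩ ⟨hx, hy⟩
    have := hf₀ x hx y hy
    rw [hff hx, hff hy] at this
    exact this
  have h1 : closure S ×ˢ closure S ⊆ Z := by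
    rw [← closure_prod_eq]
    exact closure_minimal h0 hZ
  intro x hx y hy
  have h2 : (x, y) ∈ Z := h1 (mk_mem_prod hx hy)
  exact h2

/-- Exhaustion: a set of finite measure splits into countably many bi-Lipschitz pieces and
a purely unrectifiable remainder. -/
lemma exists_biLip_exhaustion {n d : ℕ} {F : Set (Euc n)}
    (hFf : μH[(d : ℝ)] F ≠ ⊤) : ∃ S : ℕ → Set (Euc n), (∀ k, IsClosed (S k) ∧ BiLip d (S k)) ∧
      PU d (F \ ⋃ k, S k) := by
  let ν : Measure (Euc n) := μH[(d : ℝ)].restrict F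
  have : IsFiniteMeasure ν := ⟨by simpa [ν] using hFf.lt_top⟩
  let V : Set ℝ≥0∞ := {c | ∃ S : ℕ → Set (Euc n), (∀ k, IsClosed (S k) ∧ BiLip d (S k)) ∧
    c = ν (⋃ k, S k)}
  have hemp : BiLip d (∅ : Set (Euc n)) := ⟨fun _ => 0, 0, by simp⟩
  have hV : V.Nonempty := ⟨_, fun _ => ∅, fun _ => ⟨isClosed_empty, hemp⟩, rfl⟩
  obtain ⟨u, -, hu, huV⟩ := exists_seq_tendsto_sSup hV (OrderTop.bddAbove V)
  choose S hS hSu using huV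
  let R : ℕ → Set (Euc n) := fun m => S m.unpair.1 m.unpair.2
  have hRm : MeasurableSet (⋃ k, R k) := MeasurableSet.iUnion fun k => (hS _ _).1.measurableSet
  have hsup : sSup V ≤ ν (⋃ k, R k) := by
    refine le_of_tendsto' hu fun m => ?_
    rw [hSu]
    refine measure_mono (iUnion_subset fun k => ?_)
    refine subset_trans ?_ (subset_iUnion R (Nat.pair m k))
    simp [R]
  refine ⟨R, fun k => hS _ _, ?_⟩
  intro B hB hBL
  let R' : ℕ → Set (Euc n) := fun m => Nat.casesOn m (closure B) R
  have h1 : ν (⋃ k, R' k) ≤ sSup V := by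
    refine le_sSup ⟨R', fun k => ?_, rfl⟩
    cases k with
    | zero => exact ⟨isClosed_closure, hBL.closureSet⟩
    | succ k => exact hS _ _
  have hR' : (⋃ k, R' k) = (⋃ k, R k) ∪ closure B := by
    ext x
    simp only [mem_iUnion, mem_union]
    constructor
    · rintro ⟨k, hk⟩
      cases k with
      | zero => exact Or.inr hk
      | succ k => exact Or.inl ⟨k, hk⟩
    · rintro (⟨k, hk⟩ | hk)
      · exact ⟨k + 1, hk⟩
      · exact ⟨0, hk⟩
  have h2 : ν (((⋃ k, R k) ∪ closure B) \ ⋃ k, R k) = 0 := by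
    rw [measure_sdiff subset_union_left hRm.nullMeasurableSet (measure_ne_top _ _), ← hR']
    exact tsub_eq_zero_of_le (h1.trans hsup)
  have hsub : B ⊆ ((⋃ k, R k) ∪ closure B) \ ⋃ k, R k := fun x hx =>
    ⟨Or.inr (subset_closure hx), (hB hx).2⟩
  have h3 : ν B = 0 := measure_mono_null hsub h2
  rw [Measure.restrict_eq_self _ (fun x hx => (hB hx).1)] at h3
  exact h3

lemma measurableSet_of_minimal {n d : ℕ} {b : ℝ} {E : Set (Euc n)} {h : ℝ → ℝ≥0∞}
    (hE : IsAAlmostMinimal n d (ball 0 b) E h) : MeasurableSet E := by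
  have : E = closure E ∩ ball 0 b :=
    subset_antisymm (fun x hx => ⟨subset_closure hx, hE.1 hx⟩) hE.2.1
  rw [this]; exact isClosed_closure.measurableSet.inter measurableSet_ball

/-- The trace of `E` on a smaller closed ball is compact. -/
lemma isCompact_inter_closedBall {n d : ℕ} {b r : ℝ} {E : Set (Euc n)} {h : ℝ → ℝ≥0∞}
    (hE : IsAAlmostMinimal n d (ball 0 b) E h) (hr : r < b) :
    IsCompact (E ∩ closedBall 0 r) := by
  have : E ∩ closedBall 0 r = closure E ∩ closedBall 0 r :=
    subset_antisymm (inter_subset_inter_left _ subset_closure) fun x hx =>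
      ⟨hE.2.1 ⟨hx.1, closedBall_subset_ball hr hx.2⟩, hx.2⟩
  rw [this]
  exact (isCompact_closedBall _ _).inter_left isClosed_closure

/-- Exhausting `E` by bi-Lipschitz images and decomposing those into almost flat pieces leaves a
purely unrectifiable rest, which is null by `minimal_PU_null`. -/
lemma flatCov_of_minimal {n d : ℕ} (hd : 1 ≤ d) (hdn : d ≤ n) {b : ℝ} (hb : 0 < b)
    {E : Set (Euc n)} (hE : IsAAlmostMinimal n d (ball 0 b) E (fun _ => 0)) {η : ℝ} (hη : 0 < η) :
    FlatCov d η E := by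
  have hEk : E ⊆ ⋃ k : ℕ, E ∩ closedBall 0 (b - 1 / (k + 1)) := by
    intro x hx
    have hxb : ‖x‖ < b := by simpa using hE.1 hx
    obtain ⟨k, hk⟩ := exists_nat_one_div_lt (sub_pos.2 hxb)
    exact mem_iUnion.2 ⟨k, hx, by rw [mem_closedBall_zero_iff]; linarith⟩
  refine FlatCov.of_null_diff (FlatCov.iUnion (S := fun k : ℕ => E ∩ closedBall 0 (b - 1 / (k + 1))) 
    fun k => ?_) (by rw [sdiff_eq_empty.2 hEk]; simp)
  have hlt : b - 1 / ((k : ℝ) + 1) < b := by linarith [Nat.one_div_pos_of_nat (n := k) (α := ℝ)]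
  have hFc := isCompact_inter_closedBall hE hlt
  have hFf : μH[(d : ℝ)] (E ∩ closedBall 0 (b - 1 / ((k : ℝ) + 1))) ≠ ⊤ :=
    (hE.2.2.1 _ _ (closedBall_subset_ball hlt)).ne
  rcases Nat.lt_or_ge d n with hlt' | hge
  swap
  · obtain rfl : d = n := le_antisymm hdn hge
    exact flatCov_of_biLip hdn hFc.isClosed ⟨id, 1, by simp⟩ hη
  obtain ⟨S, hS, hPU⟩ := exists_biLip_exhaustion hFf
  refine FlatCov.of_null_diff (FlatCov.iUnion (S := S) fun m => 
    flatCov_of_biLip hdn (hS m).1 (hS m).2 hη) ?_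
  by_contra hne
  set F := E ∩ closedBall 0 (b - 1 / ((k : ℝ) + 1))
  have hm : MeasurableSet (F \ ⋃ m, S m) :=
    hFc.measurableSet.diff (MeasurableSet.iUnion fun m => (hS m).1.measurableSet)
  have hfin : IsFiniteMeasure (μH[(d : ℝ)].restrict F) := ⟨by simpa using hFf.lt_top⟩
  have hpos : 0 < (μH[(d : ℝ)].restrict F) (F \ ⋃ m, S m) := by
    rw [Measure.restrict_eq_self _ sdiff_subset]; exact pos_iff_ne_zero.2 hne
  obtain ⟨A, hA, hAc, hApos⟩ := hm.exists_lt_isCompact hpos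
  rw [Measure.restrict_eq_self _ (hA.trans sdiff_subset)] at hApos
  exact hApos.ne' (minimal_PU_null hd hlt' hb hE hAc (fun x hx => (hA hx).1.1) (hPU.mono hA))

/-- The working form of rectifiability: disjoint almost flat pieces exhausting `E`. -/
lemma exists_flat_pieces {n d : ℕ} (hd : 1 ≤ d) (hdn : d ≤ n) {b : ℝ} (hb : 0 < b)
    {E : Set (Euc n)} (hE : IsAAlmostMinimal n d (ball 0 b) E (fun _ => 0)) {η : ℝ} (hη : 0 < η) :
    ∃ (T : ℕ → Set (Euc n)) (L : ℕ → Euc d →ₗᵢ[ℝ] Euc n), (∀ m, MeasurableSet (T m)) ∧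
      Pairwise (Function.onFun Disjoint T) ∧ (∀ m, Flat d η (T m) (L m)) ∧ (∀ m, T m ⊆ E) ∧
      μH[(d : ℝ)] (E \ ⋃ m, T m) = 0 := by
  obtain ⟨T, hT, hT0⟩ := flatCov_of_minimal hd hdn hb hE hη
  choose hTm L hL using hT
  have hEm := measurableSet_of_minimal hE
  refine ⟨disjointed fun m => T m ∩ E, L, ?_, disjoint_disjointed _, ?_, ?_, ?_⟩
  · exact fun m => MeasurableSet.disjointed (fun m => (hTm m).inter hEm) m
  · exact fun m x hx y hy => hL m x (disjointed_subset _ m hx).1 y (disjointed_subset _ m hy).1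
  · exact fun m x hx => (disjointed_subset _ m hx).2
  · rw [iUnion_disjointed, ← iUnion_inter]
    refine measure_mono_null ?_ hT0
    rintro x ⟨hx, hx2⟩
    exact ⟨hx, fun h => hx2 ⟨h, hx⟩⟩

/-! ### Area of linear and almost linear images -/

/-- A bound for the Jacobian by the trace of `AᵀA`, exact to first order at orthogonal matrices. It
follows from `x ≤ exp (x - 1)` applied to the eigenvalues of `AᵀA`. -/
lemma abs_det_le_exp {d : ℕ} (A : Matrix (Fin d) (Fin d) ℝ) :
    |A.det| ≤ Real.exp ((∑ j, ∑ i, A i j ^ 2 - d) / 2) := by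
  have hH : (A.transpose * A).PosSemidef := by
    simpa using Matrix.posSemidef_conjTranspose_mul_self A
  have hdet : (A.transpose * A).det = A.det ^ 2 := by
    rw [Matrix.det_mul, Matrix.det_transpose, sq]
  have htr : (A.transpose * A).trace = ∑ j, ∑ i, A i j ^ 2 := by
    simp [Matrix.trace, Matrix.mul_apply, sq]
  have h1 : A.det ^ 2 ≤ Real.exp (∑ j, ∑ i, A i j ^ 2 - d) := by
    rw [← hdet, ← htr, hH.1.det_eq_prod_eigenvalues, hH.1.trace_eq_sum_eigenvalues]
    have e : (∑ i, ((hH.1.eigenvalues i : ℝ)) - d) = ∑ i, (hH.1.eigenvalues i - 1) := by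
      rw [Finset.sum_sub_distrib]; simp
    simp only [RCLike.ofReal_real_eq_id, id_eq]
    rw [e, Real.exp_sum]
    refine Finset.prod_le_prod (fun i _ => hH.eigenvalues_nonneg i) fun i _ => ?_
    have := Real.add_one_le_exp (hH.1.eigenvalues i - 1)
    linarith
  refine abs_le_of_sq_le_sq ?_ (Real.exp_pos _).le
  rw [← Real.exp_nat_mul]
  refine h1.trans (le_of_eq ?_)
  congr 1; push_cast; ring

lemma hausdorff_linear_image_le {n d : ℕ} (hdn : d ≤ n) (M : Euc d →L[ℝ] Euc n) (U : Set (Euc d)) :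
    μH[(d : ℝ)] (M '' U) ≤
      ENNReal.ofReal (Real.exp ((∑ j, ‖M (EuclideanSpace.single j 1)‖ ^ 2 - d) / 2)) *
        μH[(d : ℝ)] U := by
  obtain ⟨L, hL⟩ := exists_isometry_range hdn M
  let B : Euc d →ₗ[ℝ] Euc d := ((coordAt L).comp M : Euc d →L[ℝ] Euc d)
  have hMB : ∀ z, M z = L (B z) := by
    intro z
    obtain ⟨w, hw⟩ := hL z
    change M z = L (coordAt L (M z))
    rw [hw, coordAt_apply]
  have himg : M '' U = L '' (B '' U) := by
    rw [image_image]; exact image_congr fun z _ => hMB z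
  rw [himg, L.isometry.hausdorffMeasure_image (Or.inl (by positivity)),
    Measure.addHaar_image_linearMap]
  gcongr
  let e := (EuclideanSpace.basisFun (Fin d) ℝ).toBasis
  rw [← LinearMap.det_toMatrix e]
  refine (abs_det_le_exp _).trans (le_of_eq ?_)
  congr 3
  refine Finset.sum_congr rfl fun j _ => ?_
  rw [hMB, L.norm_map, EuclideanSpace.norm_sq_eq]
  refine Finset.sum_congr rfl fun i _ => ?_
  simp [e, LinearMap.toMatrix_apply, sq_abs]

lemma hausdorff_image_le_of_dist_le {X Y Z : Type*} [MetricSpace X] [MetricSpace Y] [MetricSpace Z]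
    [MeasurableSpace Y] [BorelSpace Y] [MeasurableSpace Z] [BorelSpace Z]
    {d : ℕ} {S : Set X} {f : X → Y} {g : X → Z} {K : ℝ≥0}
    (h : ∀ x ∈ S, ∀ y ∈ S, dist (f x) (f y) ≤ K * dist (g x) (g y)) :
    μH[(d : ℝ)] (f '' S) ≤ (K : ℝ≥0∞) ^ d * μH[(d : ℝ)] (g '' S) := by
  rcases S.eq_empty_or_nonempty with rfl | ⟨x₀, hx₀⟩
  · simp
  have : Nonempty X := ⟨x₀⟩
  have hinv : ∀ x ∈ S, f (Function.invFunOn g S (g x)) = f x := by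
    intro x hx
    have hm := Function.invFunOn_mem (f := g) (s := S) ⟨x, hx, rfl⟩
    have he := Function.invFunOn_eq (f := g) (s := S) ⟨x, hx, rfl⟩
    have := h _ hm _ hx
    rw [he, dist_self, mul_zero] at this
    exact dist_le_zero.1 this
  have himg : f '' S = (f ∘ Function.invFunOn g S) '' (g '' S) := by
    rw [image_image]; exact image_congr fun x hx => (hinv x hx).symm
  have hlip : LipschitzOnWith K (f ∘ Function.invFunOn g S) (g '' S) := by
    refine LipschitzOnWith.of_dist_le_mul ?_
    rintro _ ⟨x, hx, rfl⟩ _ ⟨y, hy, rfl⟩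
    simp only [Function.comp]
    rw [hinv x hx, hinv y hy]; exact h x hx y hy
  rw [himg]
  have := hlip.hausdorffMeasure_image_le (d := d) (by positivity)
  simpa using this

/-- Area of the image of an almost flat piece under an almost linear perturbation of the identity. -/
lemma flat_image_le {n d : ℕ} (hdn : d ≤ n) {S : Set (Euc n)} {L : Euc d →ₗᵢ[ℝ] Euc n} {η τ : ℝ}
    (hη : 0 ≤ η) (hη4 : η ≤ 1 / 4) (hτ : 0 ≤ τ) (hS : Flat d η S L)
    {Φ : Euc n → Euc n} {D : Euc n →L[ℝ] Euc n} (hD : ‖D‖ ≤ 1 / 4)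
    (hΦ : ∀ x ∈ S, ∀ y ∈ S, ‖Φ x - Φ y - (x - y) - D (x - y)‖ ≤ τ * dist x y) :
    μH[(d : ℝ)] (Φ '' S) ≤ ENNReal.ofReal ((1 + 4 * η + 2 * τ) ^ d * Real.exp
      (∑ j, inner ℝ (L (EuclideanSpace.single j 1)) (D (L (EuclideanSpace.single j 1))) +
        d * ‖D‖ ^ 2 / 2)) * μH[(d : ℝ)] S := by
  let M : Euc d →L[ℝ] Euc n :=
    (ContinuousLinearMap.id ℝ (Euc n) + D).comp L.toContinuousLinearMap
  have hM : ∀ z, M z = L z + D (L z) := fun z => by simp [M]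
  have hDle : ∀ z, ‖D z‖ ≤ 1 / 4 * ‖z‖ := fun z => D.le_of_opNorm_le hD z
  let K : ℝ≥0 := ⟨1 + 4 * η + 2 * τ, by positivity⟩
  have key : ∀ x ∈ S, ∀ y ∈ S, dist (Φ x) (Φ y) ≤ K * dist (M (coordAt L x)) (M (coordAt L y)) := by
    intro x hx y hy
    obtain ⟨h1, -⟩ := hS x hx y hy
    have h2 := hΦ x hx y hy
    rw [dist_eq_norm (M _), ← map_sub, ← map_sub, dist_eq_norm]
    rw [dist_eq_norm] at h1 h2
    set w := coordAt L (x - y)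
    set p := x - y
    have h3 : ‖L w‖ ≥ 3 / 4 * ‖p‖ := by
      have : ‖p‖ ≤ ‖p - L w‖ + ‖L w‖ := by simpa using norm_add_le (p - L w) (L w)
      nlinarith [norm_nonneg p]
    have h4 : ‖M w‖ ≥ 3 / 4 * ‖L w‖ := by
      rw [hM]
      have : ‖L w‖ ≤ ‖L w + D (L w)‖ + ‖D (L w)‖ := by
        simpa using norm_sub_le (L w + D (L w)) (D (L w))
      linarith [hDle (L w)]
    have h5 : Φ x - Φ y = M w + ((p - L w) + D (p - L w)) + (Φ x - Φ y - p - D p) := by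
      rw [hM, map_sub]; abel
    have h6 : ‖Φ x - Φ y‖ ≤ ‖M w‖ + (‖p - L w‖ + 1 / 4 * ‖p - L w‖) + τ * ‖p‖ := by
      rw [h5]
      refine (norm_add_le _ _).trans (add_le_add ((norm_add_le _ _).trans
        (add_le_add le_rfl ((norm_add_le _ _).trans (add_le_add le_rfl (hDle _))))) ?_)
      exact h2
    have h7 : ‖p‖ ≤ 16 / 9 * ‖M w‖ := by linarith
    have hK : (K : ℝ) = 1 + 4 * η + 2 * τ := rfl
    rw [hK]
    have h8 : η * ‖p‖ ≤ η * (16 / 9 * ‖M w‖) := by gcongr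
    have h9 : τ * ‖p‖ ≤ τ * (16 / 9 * ‖M w‖) := by gcongr
    have h10 : 0 ≤ η * ‖M w‖ := by positivity
    have h11 : 0 ≤ τ * ‖M w‖ := by positivity
    nlinarith
  refine (hausdorff_image_le_of_dist_le (d := d) key).trans ?_
  have himg : (fun x => M (coordAt L x)) '' S = M '' (coordAt L '' S) := by rw [image_image]
  have h1 : μH[(d : ℝ)] (coordAt L '' S) ≤ μH[(d : ℝ)] S := by
    have hl : LipschitzWith 1 (coordAt L) := LipschitzWith.of_dist_le_mul fun x y => by
      rw [dist_eq_norm, dist_eq_norm, ← map_sub]; simpa using norm_coordAt_le L (x - y)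
    simpa using hl.hausdorffMeasure_image_le (d := d) (by positivity) S
  rw [himg]
  refine (mul_le_mul_right ((hausdorff_linear_image_le hdn M _).trans (mul_le_mul_right h1 _)) _).trans ?_
  rw [← mul_assoc]
  refine mul_le_mul_left ?_ _
  have hKe : (K : ℝ≥0∞) ^ d = ENNReal.ofReal ((1 + 4 * η + 2 * τ) ^ d) := by
    rw [ENNReal.ofReal_pow (by positivity)]; congr 1
    rw [← ENNReal.ofReal_coe_nnreal]; rfl
  rw [hKe, ← ENNReal.ofReal_mul (by positivity)]
  refine ENNReal.ofReal_le_ofReal ?_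
  gcongr
  have h2 : ∑ j : Fin d, ‖M (EuclideanSpace.single j 1)‖ ^ 2 ≤ ∑ j : Fin d,
      (1 + 2 * inner ℝ (L (EuclideanSpace.single j 1)) (D (L (EuclideanSpace.single j 1))) + ‖D‖ ^ 2) := by
    refine Finset.sum_le_sum fun j _ => ?_
    have hn : ‖L (EuclideanSpace.single j (1:ℝ))‖ = 1 := by rw [L.norm_map]; simp
    rw [hM, norm_add_sq_real, hn]
    have h3 : ‖D (L (EuclideanSpace.single j (1:ℝ)))‖ ≤ ‖D‖ := by
      have := D.le_opNorm (L (EuclideanSpace.single j (1:ℝ))); rwa [hn, mul_one] at this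
    have h4 : ‖D (L (EuclideanSpace.single j (1:ℝ)))‖ ^ 2 ≤ ‖D‖ ^ 2 := by gcongr
    linarith
  rw [Finset.sum_add_distrib, Finset.sum_add_distrib, ← Finset.mul_sum] at h2
  simp only [Finset.sum_const, Finset.card_univ, Fintype.card_fin, nsmul_eq_mul, mul_one] at h2
  linarith

/-! ### The first variation of area -/

/-- Nonnegative test functions of class `C^{1,1}` with gradient `G`, vanishing outside the ball of
radius `r`. -/
structure TestFn {n : ℕ} (r : ℝ) (ψ : Euc n → ℝ) (G : Euc n → Euc n) : Prop where
  grad : ∀ y, HasGradientAt ψ (G y) y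
  lip : ∃ Λ : ℝ, ∀ y z, ‖G y - G z‖ ≤ Λ * ‖y - z‖
  nonneg : ∀ y, 0 ≤ ψ y
  supp : ∀ y, r ≤ ‖y‖ → ψ y = 0

lemma TestFn.grad_zero {n : ℕ} {r : ℝ} {ψ : Euc n → ℝ} {G : Euc n → Euc n} (h : TestFn r ψ G)
    {y : Euc n} (hy : ψ y = 0) : G y = 0 := by
  have hm : IsLocalMin ψ y := Eventually.of_forall fun z => by rw [hy]; exact h.nonneg z
  have := hm.hasFDerivAt_eq_zero (h.grad y).hasFDerivAt
  simpa using this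

lemma TestFn.continuous_grad {n : ℕ} {r : ℝ} {ψ : Euc n → ℝ} {G : Euc n → Euc n}
    (h : TestFn r ψ G) : Continuous G := by
  obtain ⟨Λ, hΛ⟩ := h.lip
  refine (LipschitzWith.of_dist_le_mul (K := Λ.toNNReal) fun y z => ?_).continuous
  rw [dist_eq_norm, dist_eq_norm]
  exact (hΛ y z).trans (mul_le_mul_of_nonneg_right (Real.le_coe_toNNReal Λ) (norm_nonneg _))

lemma TestFn.continuous {n : ℕ} {r : ℝ} {ψ : Euc n → ℝ} {G : Euc n → Euc n}
    (h : TestFn r ψ G) : Continuous ψ :=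
  continuous_iff_continuousAt.2 fun y => (h.grad y).hasFDerivAt.continuousAt

lemma TestFn.bounds {n : ℕ} {r : ℝ} {ψ : Euc n → ℝ} {G : Euc n → Euc n} (h : TestFn r ψ G) :
    ∃ C : ℝ, 0 ≤ C ∧ (∀ y, |ψ y| ≤ C) ∧ (∀ y, ‖G y‖ ≤ C) ∧
      (∀ y z, ‖G y - G z‖ ≤ C * ‖y - z‖) ∧ (∀ y z, |ψ y - ψ z| ≤ C * ‖y - z‖) := by
  obtain ⟨Λ, hΛ⟩ := h.lip
  obtain ⟨C1, hC1⟩ := (isCompact_closedBall (0 : Euc n) r).exists_bound_of_continuousOn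
    h.continuous.continuousOn
  obtain ⟨C2, hC2⟩ := (isCompact_closedBall (0 : Euc n) r).exists_bound_of_continuousOn
    h.continuous_grad.continuousOn
  have hC0 : 0 ≤ max (max C1 C2) (max Λ 0) := le_max_of_le_right (le_max_right _ _)
  have hG : ∀ y, ‖G y‖ ≤ max (max C1 C2) (max Λ 0) := fun y => by
    by_cases hy : ‖y‖ ≤ r
    · exact (hC2 y (by simpa using hy)).trans (le_max_of_le_left (le_max_right _ _))
    · rw [h.grad_zero (h.supp y (le_of_not_ge hy))]; simp [hC0]
  refine ⟨max (max C1 C2) (max Λ 0), hC0, fun y => ?_, hG, fun y z => ?_, fun y z => ?_⟩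
  · by_cases hy : ‖y‖ ≤ r
    · exact (hC1 y (by simpa using hy)).trans (le_max_of_le_left (le_max_left _ _))
    · rw [h.supp y (le_of_not_ge hy)]; simp [hC0]
  · exact (hΛ y z).trans (mul_le_mul_of_nonneg_right (le_max_of_le_right (le_max_left _ _))
      (norm_nonneg _))
  · have := Convex.norm_image_sub_le_of_norm_hasFDerivWithin_le (f := ψ) (s := univ)
      (f' := fun y => InnerProductSpace.toDual ℝ (Euc n) (G y))
      (C := max (max C1 C2) (max Λ 0)) (x := z) (y := y)
      (fun x _ => (h.grad x).hasFDerivAt.hasFDerivWithinAt)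
      (fun x _ => by simpa using hG x) convex_univ (mem_univ _) (mem_univ _)
    simpa using this

/-- The derivative at `y` of the vector field `y ↦ ψ(y) y`. -/
def DX {n : ℕ} (ψ : Euc n → ℝ) (G : Euc n → Euc n) (y : Euc n) : Euc n →L[ℝ] Euc n :=
  ψ y • ContinuousLinearMap.id ℝ (Euc n) + (innerSL ℝ (G y)).smulRight y

lemma DX_apply {n : ℕ} (ψ : Euc n → ℝ) (G : Euc n → Euc n) (y w : Euc n) :
    DX ψ G y w = ψ y • w + (inner ℝ (G y) w : ℝ) • y := by
  simp [DX]

lemma TestFn.hasFDerivAt_field {n : ℕ} {r : ℝ} {ψ : Euc n → ℝ} {G : Euc n → Euc n}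
    (h : TestFn r ψ G) (y : Euc n) : HasFDerivAt (fun y => ψ y • y) (DX ψ G y) y := by
  have := (h.grad y).hasFDerivAt.smul (hasFDerivAt_id y)
  exact this

lemma norm_DX_le {n : ℕ} {ψ : Euc n → ℝ} {G : Euc n → Euc n} {C b : ℝ} (hC : 0 ≤ C)
    {y : Euc n} (h1 : |ψ y| ≤ C) (h2 : ‖G y‖ ≤ C) (hy : ‖y‖ ≤ b) : ‖DX ψ G y‖ ≤ C * (1 + b) := by
  have hb : 0 ≤ b := (norm_nonneg _).trans hy
  refine ContinuousLinearMap.opNorm_le_bound _ (by positivity) fun w => ?_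
  rw [DX_apply]
  refine (norm_add_le _ _).trans ?_
  rw [norm_smul, norm_smul, Real.norm_eq_abs, Real.norm_eq_abs]
  have e1 : |ψ y| * ‖w‖ ≤ C * ‖w‖ := mul_le_mul_of_nonneg_right h1 (norm_nonneg _)
  have e2 : |(inner ℝ (G y) w : ℝ)| ≤ C * ‖w‖ := (abs_real_inner_le_norm _ _).trans
    (mul_le_mul_of_nonneg_right h2 (norm_nonneg _))
  have e3 : |(inner ℝ (G y) w : ℝ)| * ‖y‖ ≤ C * ‖w‖ * b := mul_le_mul e2 hy (norm_nonneg _)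
    (by positivity)
  nlinarith

lemma norm_DX_sub_le {n : ℕ} {ψ : Euc n → ℝ} {G : Euc n → Euc n} {C b : ℝ} (hC : 0 ≤ C)
    {y z : Euc n} (h1 : |ψ y - ψ z| ≤ C * ‖y - z‖) (h2 : ‖G y‖ ≤ C)
    (h3 : ‖G y - G z‖ ≤ C * ‖y - z‖) (hz : ‖z‖ ≤ b) :
    ‖DX ψ G y - DX ψ G z‖ ≤ C * (2 + b) * ‖y - z‖ := by
  have hb : 0 ≤ b := (norm_nonneg _).trans hz
  refine ContinuousLinearMap.opNorm_le_bound _ (by positivity) fun w => ?_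
  rw [_root_.sub_apply, DX_apply, DX_apply]
  have e : ψ y • w + (inner ℝ (G y) w : ℝ) • y - (ψ z • w + (inner ℝ (G z) w : ℝ) • z)
      = (ψ y - ψ z) • w + (inner ℝ (G y) w : ℝ) • (y - z) + (inner ℝ (G y - G z) w : ℝ) • z := by
    rw [inner_sub_left]; module
  rw [e]
  refine (norm_add₃_le).trans ?_
  rw [norm_smul, norm_smul, norm_smul, Real.norm_eq_abs, Real.norm_eq_abs, Real.norm_eq_abs]
  have e1 : |ψ y - ψ z| * ‖w‖ ≤ C * ‖y - z‖ * ‖w‖ := mul_le_mul_of_nonneg_right h1 (norm_nonneg _)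
  have e2 : |(inner ℝ (G y) w : ℝ)| ≤ C * ‖w‖ := (abs_real_inner_le_norm _ _).trans
    (mul_le_mul_of_nonneg_right h2 (norm_nonneg _))
  have e2' := mul_le_mul_of_nonneg_right e2 (norm_nonneg (y - z))
  have e3 : |(inner ℝ (G y - G z) w : ℝ)| ≤ C * ‖y - z‖ * ‖w‖ := (abs_real_inner_le_norm _ _).trans
    (mul_le_mul_of_nonneg_right h3 (norm_nonneg _))
  have e4 : |(inner ℝ (G y - G z) w : ℝ)| * ‖z‖ ≤ C * ‖y - z‖ * ‖w‖ * b :=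
    mul_le_mul e3 hz (norm_nonneg _) (by positivity)
  nlinarith

/-- The divergence of the vector field `y ↦ ψ(y) y` along the plane `range L`. -/
lemma trace_DX {n d : ℕ} (ψ : Euc n → ℝ) (G : Euc n → Euc n) (y : Euc n)
    (L : Euc d →ₗᵢ[ℝ] Euc n) :
    ∑ j, inner ℝ (L (EuclideanSpace.single j 1)) (DX ψ G y (L (EuclideanSpace.single j 1)))
      = d * ψ y + inner ℝ (L (coordAt L y)) (G y) := by
  have e1 : ∀ j : Fin d, inner ℝ (L (EuclideanSpace.single j 1))
      (DX ψ G y (L (EuclideanSpace.single j 1)))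
      = ψ y + coordAt L (G y) j * coordAt L y j := fun j => by
    have e2 : ∀ x : Euc n, (inner ℝ x (L (EuclideanSpace.single j 1)) : ℝ) = coordAt L x j :=
      fun x => by rw [← coordAt_inner]; simp [EuclideanSpace.inner_single_right]
    rw [DX_apply, inner_add_right, inner_smul_right, inner_smul_right, real_inner_self_eq_norm_sq,
      L.norm_map, e2, real_inner_comm, e2]
    simp
  rw [Finset.sum_congr rfl fun j _ => e1 j, Finset.sum_add_distrib]
  simp only [Finset.sum_const, Finset.card_univ, Fintype.card_fin, nsmul_eq_mul]
  congr 1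
  rw [real_inner_comm, ← coordAt_inner, PiLp.inner_apply]
  simp [mul_comm]

lemma norm_proj_le {n d : ℕ} (L : Euc d →ₗᵢ[ℝ] Euc n) (x : Euc n) : ‖L (coordAt L x)‖ ≤ ‖x‖ := by
  rw [L.norm_map]; exact norm_coordAt_le L x

/-- Area of the image of an almost flat piece under `id + ε ψ(y) y`, to second order in `ε`. -/
lemma first_variation_piece {n d : ℕ} (hdn : d ≤ n) {b r : ℝ} (hb : 0 < b)
    {ψ : Euc n → ℝ} {G : Euc n → Euc n} (h : TestFn r ψ G) :
    ∃ K e₀ : ℝ, 0 ≤ K ∧ 0 < e₀ ∧ ∀ ε : ℝ, |ε| ≤ e₀ → ∀ (S : Set (Euc n)) (L : Euc d →ₗᵢ[ℝ] Euc n),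
      Flat d (ε ^ 2) S L → S ⊆ ball 0 b → ∀ y ∈ S,
      0 ≤ 1 + ε * (d * ψ y + inner ℝ (L (coordAt L y)) (G y)) + K * ε ^ 2 ∧
      μH[(d : ℝ)] ((fun y => y + ε • ψ y • y) '' S) ≤
        ENNReal.ofReal (1 + ε * (d * ψ y + inner ℝ (L (coordAt L y)) (G y)) + K * ε ^ 2)
          * μH[(d : ℝ)] S := by
  obtain ⟨C, hC, hψ, hG, hGl, hψl⟩ := h.bounds
  set K1 : ℝ := d * (C * (1 + b)) ^ 2 / 2 + d * (4 + 2 * (C * (2 + b))) with hK1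
  set Q : ℝ := (d + b) * C with hQ
  have hK1n : 0 ≤ K1 := by positivity
  have hQn : 0 ≤ Q := by positivity
  refine ⟨K1 + (Q + K1) ^ 2, 1 / (2 + 4 * (C * (1 + b)) + (Q + K1)), by positivity, by positivity,
    ?_⟩
  intro ε hε S L hS hSb y hy
  have hden : 0 < 2 + 4 * (C * (1 + b)) + (Q + K1) := by positivity
  rw [le_div_iff₀ hden] at hε
  have hε0 := abs_nonneg ε
  have p1 : 0 ≤ |ε| * (4 * (C * (1 + b))) := by positivity
  have p2 : 0 ≤ |ε| * (Q + K1) := by positivity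
  have hε2 : |ε| ≤ 1 / 2 := by nlinarith
  have hεD : |ε| * (C * (1 + b)) ≤ 1 / 4 := by nlinarith
  have hεQ : |ε| * (Q + K1) ≤ 1 := by nlinarith
  have hsq : ε ^ 2 = |ε| * |ε| := by rw [← sq, sq_abs]
  have hyb : ‖y‖ ≤ b := by simpa using (mem_ball_zero_iff.1 (hSb hy)).le
  have hDn : ‖ε • DX ψ G y‖ ≤ |ε| * (C * (1 + b)) := by
    rw [norm_smul, Real.norm_eq_abs]
    exact mul_le_mul_of_nonneg_left (norm_DX_le hC (hψ y) (hG y) hyb) hε0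
  have hlin : ∀ x ∈ S, ∀ z ∈ S, ‖(x + ε • ψ x • x) - (z + ε • ψ z • z) - (x - z)
      - (ε • DX ψ G y) (x - z)‖ ≤ (|ε| * (C * (2 + b) * ε ^ 2)) * dist x z := by
    intro x hx z hz
    have hx' := (hS x hx y hy).2
    have hz' := (hS z hz y hy).2
    have := Convex.norm_image_sub_le_of_norm_hasFDerivWithin_le' (f := fun y => ψ y • y)
      (s := closedBall y (ε ^ 2)) (f' := DX ψ G) (φ := DX ψ G y)
      (C := C * (2 + b) * ε ^ 2) (x := z) (y := x)
      (fun w _ => (h.hasFDerivAt_field w).hasFDerivWithinAt)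
      (fun w hw => by
        refine (norm_DX_sub_le hC (hψl w y) (hG w) (hGl w y) hyb).trans ?_
        rw [← dist_eq_norm]
        exact mul_le_mul_of_nonneg_left hw (by positivity))
      (convex_closedBall _ _) hz' hx'
    have e : (x + ε • ψ x • x) - (z + ε • ψ z • z) - (x - z) - (ε • DX ψ G y) (x - z)
        = ε • (ψ x • x - ψ z • z - DX ψ G y (x - z)) := by
      rw [_root_.smul_apply]; module
    rw [e, norm_smul, Real.norm_eq_abs, mul_assoc, dist_eq_norm]
    exact mul_le_mul_of_nonneg_left this hε0
  have key := flat_image_le hdn (sq_nonneg ε) (by nlinarith) (by positivity) hS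
    (hDn.trans hεD) hlin
  set q := d * ψ y + inner ℝ (L (coordAt L y)) (G y) with hq
  have htr : ∑ j, inner ℝ (L (EuclideanSpace.single j 1))
      ((ε • DX ψ G y) (L (EuclideanSpace.single j 1))) = ε * q := by
    rw [hq, ← trace_DX, Finset.mul_sum]
    refine Finset.sum_congr rfl fun j _ => ?_
    rw [_root_.smul_apply, inner_smul_right]
  rw [htr] at key
  have hqQ : |q| ≤ Q := by
    rw [hq, hQ, add_mul]
    refine (abs_add_le _ _).trans (add_le_add ?_ ?_)
    · rw [abs_mul, Nat.abs_cast]; exact mul_le_mul_of_nonneg_left (hψ y) (Nat.cast_nonneg d)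
    · refine (abs_real_inner_le_norm _ _).trans (mul_le_mul ((norm_proj_le L y).trans hyb) (hG y)
        (norm_nonneg _) hb.le)
  have hexp : (1 + 4 * ε ^ 2 + 2 * (|ε| * (C * (2 + b) * ε ^ 2))) ^ d *
      Real.exp (ε * q + d * ‖ε • DX ψ G y‖ ^ 2 / 2) ≤ Real.exp (ε * q + K1 * ε ^ 2) := by
    have e1 : (1 + 4 * ε ^ 2 + 2 * (|ε| * (C * (2 + b) * ε ^ 2))) ^ d ≤
        Real.exp (d * (4 * ε ^ 2 + 2 * (C * (2 + b) * ε ^ 2))) := by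
      rw [Real.exp_nat_mul]
      refine pow_le_pow_left₀ (by positivity) ?_ d
      have := Real.add_one_le_exp (4 * ε ^ 2 + 2 * (C * (2 + b) * ε ^ 2))
      have : |ε| * (C * (2 + b) * ε ^ 2) ≤ 1 * (C * (2 + b) * ε ^ 2) :=
        mul_le_mul_of_nonneg_right (by linarith) (by positivity)
      linarith
    refine (mul_le_mul_of_nonneg_right e1 (Real.exp_nonneg _)).trans ?_
    rw [← Real.exp_add]
    refine Real.exp_le_exp.2 ?_
    have e2 : ‖ε • DX ψ G y‖ ^ 2 ≤ (C * (1 + b)) ^ 2 * ε ^ 2 := by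
      refine (pow_le_pow_left₀ (norm_nonneg _) hDn 2).trans (le_of_eq ?_)
      rw [mul_pow, sq_abs]; ring
    have e3 := mul_le_mul_of_nonneg_left e2 (Nat.cast_nonneg (α := ℝ) d)
    rw [hK1]; linarith
  have habs : |ε * q + K1 * ε ^ 2| ≤ |ε| * (Q + K1) := by
    refine (abs_add_le _ _).trans ?_
    rw [abs_mul, abs_mul, abs_of_nonneg hK1n, abs_of_nonneg (sq_nonneg ε), hsq]
    have := mul_le_mul_of_nonneg_left hqQ hε0
    have : K1 * (|ε| * |ε|) ≤ |ε| * K1 := by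
      have := mul_le_mul_of_nonneg_left (show |ε| ≤ 1 by linarith) (mul_nonneg hK1n hε0)
      linarith
    linarith
  have hquad : Real.exp (ε * q + K1 * ε ^ 2) ≤ 1 + ε * q + (K1 + (Q + K1) ^ 2) * ε ^ 2 := by
    have := Real.abs_exp_sub_one_sub_id_le (habs.trans hεQ)
    have h2 := (abs_le.1 this).2
    have h3 : (ε * q + K1 * ε ^ 2) ^ 2 ≤ (Q + K1) ^ 2 * ε ^ 2 := by
      have := pow_le_pow_left₀ (abs_nonneg _) habs 2
      rw [sq_abs, mul_pow, sq_abs] at this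
      linarith
    linarith
  refine ⟨(Real.exp_nonneg _).trans hquad, key.trans ?_⟩
  gcongr
  exact hexp.trans hquad

/-- The first variation formula for the field `y ↦ ψ(y) y`, up to an error `K e`, where the
tangential part `v` of the position vector is measured with respect to a decomposition of `E` into
pieces that are flat up to `e ^ 2`. The constant `K` does not depend on the decomposition. -/
theorem first_variation {n d : ℕ} (hd : 1 ≤ d) (hdn : d ≤ n) {b r : ℝ} (hr : 0 < r) (hrb : r < b)
    {E : Set (Euc n)} (hE : IsAAlmostMinimal n d (ball 0 b) E (fun _ => 0))
    {ψ : Euc n → ℝ} {G : Euc n → Euc n} (h : TestFn r ψ G) :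
    ∃ K e₀ : ℝ, 0 ≤ K ∧ 0 < e₀ ∧ ∀ e : ℝ, 0 < e → e ≤ e₀ →
      ∀ (T : ℕ → Set (Euc n)) (L : ℕ → Euc d →ₗᵢ[ℝ] Euc n) (v : Euc n → Euc n),
      (∀ m, MeasurableSet (T m)) → Pairwise (Function.onFun Disjoint T) →
      (∀ m, Flat d (e ^ 2) (T m) (L m)) → (∀ m, T m ⊆ E) →
      μH[(d : ℝ)] (E \ ⋃ m, T m) = 0 →
      (∀ m, ∀ y ∈ T m, v y = L m (coordAt (L m) y)) →
      |∫ y in ⋃ m, T m, (d * ψ y + inner ℝ (v y) (G y)) ∂μH[(d : ℝ)]| ≤ K * e := by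
  have hb : 0 < b := hr.trans hrb
  obtain ⟨C, hC, hψ, hG, hGl, hψl⟩ := h.bounds
  obtain ⟨K, e₁, hK, he₁, hpiece⟩ := first_variation_piece hdn hb h
  set A := (μH[(d : ℝ)] (E ∩ closedBall 0 r)).toReal with hA
  have hAfin : μH[(d : ℝ)] (E ∩ closedBall 0 r) < ⊤ :=
    finite_of_compact hb hE (isCompact_closedBall _ _) (closedBall_subset_ball hrb)
  set W : Set (Euc n) := {y | ψ y • y ≠ 0} with hW
  have hWo : IsOpen W := isOpen_ne_fun (h.continuous.smul continuous_id) continuous_const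
  have hWr : W ⊆ ball 0 r := fun y hy => by
    by_contra hc
    apply hy
    rw [h.supp y (by simpa using hc), zero_smul]
  refine ⟨K * A, min e₁ ((b - r) / 2 / (C * r + 1)), by positivity, ?_, ?_⟩
  · refine lt_min he₁ (div_pos (by linarith) (by positivity))
  intro e he hee₀ T L v hTm hTd hTf hTE hTn hv
  have hee₁ : e ≤ e₁ := hee₀.trans (min_le_left _ _)
  have heC : e * (C * r) ≤ (b - r) / 2 := by
    have h1 := hee₀.trans (min_le_right _ _)
    rw [le_div_iff₀ (by positivity)] at h1
    nlinarith
  set F : Euc n → ℝ := fun y => d * ψ y + inner ℝ (v y) (G y) with hF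
  set E0 : Set (Euc n) := ⋃ m, T m ∩ W with hE0
  have hE0m : MeasurableSet E0 := MeasurableSet.iUnion fun m => (hTm m).inter hWo.measurableSet
  have hE0s : E0 ⊆ E ∩ closedBall 0 r := iUnion_subset fun m y hy =>
    ⟨hTE m hy.1, ball_subset_closedBall (hWr hy.2)⟩
  have hE0fin : μH[(d : ℝ)] E0 < ⊤ := (measure_mono hE0s).trans_lt hAfin
  -- `v` coincides on each piece with a linear map
  have hFm : AEStronglyMeasurable F (μH[(d : ℝ)].restrict (⋃ m, T m ∩ W)) := by
    rw [aestronglyMeasurable_iUnion_iff]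
    intro m
    have hc : Continuous fun y => d * ψ y + inner ℝ (L m (coordAt (L m) y)) (G y) := by
      have := h.continuous
      have := h.continuous_grad
      fun_prop
    refine hc.aestronglyMeasurable.congr ?_
    filter_upwards [ae_restrict_mem ((hTm m).inter hWo.measurableSet)] with y hy
    simp only [hF]
    rw [hv m y hy.1]
  have hFb : ∀ y ∈ E0, |F y| ≤ d * C + b * C := fun y hy => by
    obtain ⟨m, hm⟩ := mem_iUnion.1 hy
    have hyr : ‖y‖ ≤ b := by
      have := mem_ball_zero_iff.1 (hWr hm.2); linarith
    rw [hF]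
    refine (abs_add_le _ _).trans (add_le_add ?_ ?_)
    · rw [abs_mul, Nat.abs_cast]; exact mul_le_mul_of_nonneg_left (hψ y) (Nat.cast_nonneg d)
    · rw [hv m y hm.1]
      exact (abs_real_inner_le_norm _ _).trans (mul_le_mul ((norm_proj_le (L m) y).trans hyr) (hG y)
        (norm_nonneg _) hb.le)
  have hFi : IntegrableOn F E0 μH[(d : ℝ)] := by
    have : IsFiniteMeasure (μH[(d : ℝ)].restrict E0) := ⟨by simpa using hE0fin⟩
    refine Integrable.of_bound hFm (d * C + b * C) ?_
    filter_upwards [ae_restrict_mem hE0m] with y hy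
    exact hFb y hy
  have hsame : ∫ y in ⋃ m, T m, F y ∂μH[(d : ℝ)] = ∫ y in E0, F y ∂μH[(d : ℝ)] := by
    refine setIntegral_eq_of_subset_of_ae_sdiff_eq_zero
      (MeasurableSet.iUnion hTm).nullMeasurableSet
      (iUnion_mono fun m => inter_subset_left) ?_
    have hnull : ∀ᵐ y ∂μH[(d : ℝ)], y ≠ (0 : Euc n) := by
      have := Measure.nullSingletonClass_hausdorff (Euc n) (d := (d : ℝ)) (by positivity)
      exact Measure.ae_ne _ _
    filter_upwards [hnull] with y hy0 hy
    obtain ⟨m, hm⟩ := mem_iUnion.1 hy.1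
    have hyW : y ∉ W := fun hw => hy.2 (mem_iUnion.2 ⟨m, hm, hw⟩)
    have hψ0 : ψ y = 0 := by
      by_contra hc
      exact hyW (smul_ne_zero hc hy0)
    simp [hF, hψ0, h.grad_zero hψ0]
  rw [hsame]
  have main : ∀ ε : ℝ, |ε| = e → - (K * ε ^ 2 * A) ≤ ε * ∫ y in E0, F y ∂μH[(d : ℝ)] := by
    intro ε hε
    have hε0 : ε ≠ 0 := by
      rintro rfl
      simp at hε; linarith
    have hεsq : ε ^ 2 = e ^ 2 := by rw [← hε, sq_abs]
    set Φ : Euc n → Euc n := fun y => y + ε • ψ y • y with hΦ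
    have hfix : {x | Φ x ≠ x} = W := by
      ext x
      simp [hΦ, hW, hε0]
    -- the displacement field is Lipschitz since it vanishes outside the ball of radius `r`
    have hXlip : ∀ x y : Euc n, ‖ψ x • x - ψ y • y‖ ≤ (C + C * r) * ‖x - y‖ := by
      have aux : ∀ x y : Euc n, ‖y‖ ≤ r → ‖ψ x • x - ψ y • y‖ ≤ (C + C * r) * ‖x - y‖ := by
        intro x y hy
        refine (norm_smul_sub_smul_le _ _ _ _).trans ?_
        have e1 := mul_le_mul_of_nonneg_right (hψ x) (norm_nonneg (x - y))
        have e2 := mul_le_mul (hψl x y) hy (norm_nonneg _) (by positivity)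
        nlinarith
      intro x y
      by_cases hy : ‖y‖ ≤ r
      · exact aux x y hy
      by_cases hx : ‖x‖ ≤ r
      · rw [norm_sub_rev, norm_sub_rev x]; exact aux y x hx
      · rw [h.supp x (le_of_not_ge hx), h.supp y (le_of_not_ge hy)]
        simp only [zero_smul, sub_zero, norm_zero]
        positivity
    have hΦl : LipschitzWith (1 + (e * (C + C * r)).toNNReal) Φ := by
      refine LipschitzWith.of_dist_le_mul fun x y => ?_
      rw [dist_eq_norm, dist_eq_norm]
      have e1 : Φ x - Φ y = (x - y) + ε • (ψ x • x - ψ y • y) := by simp only [hΦ]; module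
      rw [e1]
      refine (norm_add_le _ _).trans ?_
      rw [norm_smul, Real.norm_eq_abs, hε, NNReal.coe_add, Real.coe_toNNReal _ (by positivity)]
      have := mul_le_mul_of_nonneg_left (hXlip x y) he.le
      push_cast
      linarith
    have hdisp : ∀ x, ‖Φ x - x‖ ≤ (b - r) / 2 := fun x => by
      have e1 : Φ x - x = ε • ψ x • x := by simp only [hΦ]; module
      rw [e1, norm_smul, Real.norm_eq_abs, hε, norm_smul, Real.norm_eq_abs]
      by_cases hx : r ≤ ‖x‖
      · rw [h.supp x hx]; simp; linarith
      · refine le_trans ?_ heC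
        exact mul_le_mul_of_nonneg_left (mul_le_mul (hψ x) (not_le.1 hx).le (norm_nonneg _) hC) he.le
    have hout : ∀ x, r ≤ ‖x‖ → Φ x = x := fun x hx => by
      simp [hΦ, h.supp x hx]
    have hmin := minimal_apply (r := (r + b) / 2) hE (by linarith) hΦl
      (fun x hx => hout x (by
        have : (r + b) / 2 < ‖x‖ := by simpa using hx
        linarith))
      (fun x hx => by
        have hx' : ‖x‖ ≤ (r + b) / 2 := by simpa using hx
        by_cases hxr : r ≤ ‖x‖
        · rw [hout x hxr]; exact hx
        · have e1 : ‖Φ x‖ ≤ ‖Φ x - x‖ + ‖x‖ := by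
            simpa using norm_add_le (Φ x - x) x
          have := hdisp x
          simp only [mem_closedBall_zero_iff]
          linarith [not_le.1 hxr])
    rw [hfix] at hmin
    have hsplit : E ∩ W ⊆ (⋃ m, T m ∩ W) ∪ (E \ ⋃ m, T m) := fun y hy => by
      by_cases hyT : y ∈ ⋃ m, T m
      · obtain ⟨m, hm⟩ := mem_iUnion.1 hyT
        exact Or.inl (mem_iUnion.2 ⟨m, hm, hy.2⟩)
      · exact Or.inr ⟨hy.1, hyT⟩
    have hnullim : μH[(d : ℝ)] (Φ '' (E \ ⋃ m, T m)) = 0 := by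
      have := hΦl.hausdorffMeasure_image_le (d := (d : ℝ)) (by positivity) (E \ ⋃ m, T m)
      rw [hTn, mul_zero] at this
      exact le_antisymm this zero_le
    set g : Euc n → ℝ := fun y => 1 + ε * F y + K * ε ^ 2 with hg
    have hpc : ∀ m, ∀ y ∈ T m ∩ W, 0 ≤ g y ∧
        μH[(d : ℝ)] (Φ '' (T m ∩ W)) ≤ ENNReal.ofReal (g y) * μH[(d : ℝ)] (T m ∩ W) := by
      intro m y hy
      have hfl : Flat d (ε ^ 2) (T m ∩ W) (L m) := by
        rw [hεsq]; exact fun x hx z hz => hTf m x hx.1 z hz.1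
      have := hpiece ε (hε.le.trans hee₁) (T m ∩ W) (L m) hfl
        (fun z hz => ball_subset_ball hrb.le (hWr hz.2)) y hy
      simp only [hg, hF]
      rw [hv m y hy.1]
      exact this
    have hlint : ∀ m, μH[(d : ℝ)] (Φ '' (T m ∩ W)) ≤
        ∫⁻ y in T m ∩ W, ENNReal.ofReal (g y) ∂μH[(d : ℝ)] := by
      intro m
      have hTWm := (hTm m).inter hWo.measurableSet
      have hTWfin : μH[(d : ℝ)] (T m ∩ W) < ⊤ :=
        (measure_mono (subset_iUnion (fun m => T m ∩ W) m)).trans_lt hE0fin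
      by_cases h0 : μH[(d : ℝ)] (T m ∩ W) = 0
      · have := hΦl.hausdorffMeasure_image_le (d := (d : ℝ)) (by positivity) (T m ∩ W)
        rw [h0, mul_zero] at this
        exact this.trans zero_le
      set c := μH[(d : ℝ)] (Φ '' (T m ∩ W)) / μH[(d : ℝ)] (T m ∩ W) with hc
      have e1 : μH[(d : ℝ)] (Φ '' (T m ∩ W)) = ∫⁻ _ in T m ∩ W, c ∂μH[(d : ℝ)] := by
        rw [setLIntegral_const, hc, ENNReal.div_mul_cancel h0 hTWfin.ne]
      rw [e1]
      refine setLIntegral_mono' hTWm fun y hy => ?_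
      exact ENNReal.div_le_of_le_mul (hpc m y hy).2
    have htotal : μH[(d : ℝ)] E0 ≤ ∫⁻ y in E0, ENNReal.ofReal (g y) ∂μH[(d : ℝ)] := by
      calc μH[(d : ℝ)] E0 ≤ μH[(d : ℝ)] (E ∩ W) :=
            measure_mono (iUnion_subset fun m y hy => ⟨hTE m hy.1, hy.2⟩)
        _ ≤ μH[(d : ℝ)] (Φ '' (E ∩ W)) := hmin
        _ ≤ μH[(d : ℝ)] ((⋃ m, Φ '' (T m ∩ W)) ∪ Φ '' (E \ ⋃ m, T m)) := by
            refine measure_mono ?_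
            rw [← image_iUnion, ← image_union]
            exact image_mono hsplit
        _ ≤ μH[(d : ℝ)] (⋃ m, Φ '' (T m ∩ W)) + μH[(d : ℝ)] (Φ '' (E \ ⋃ m, T m)) :=
            measure_union_le _ _
        _ = μH[(d : ℝ)] (⋃ m, Φ '' (T m ∩ W)) := by rw [hnullim, add_zero]
        _ ≤ ∑' m, μH[(d : ℝ)] (Φ '' (T m ∩ W)) := measure_iUnion_le _
        _ ≤ ∑' m, ∫⁻ y in T m ∩ W, ENNReal.ofReal (g y) ∂μH[(d : ℝ)] := ENNReal.tsum_le_tsum hlint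
        _ = ∫⁻ y in E0, ENNReal.ofReal (g y) ∂μH[(d : ℝ)] := by
            rw [hE0, lintegral_iUnion (fun m => (hTm m).inter hWo.measurableSet)]
            intro i j hij
            exact (hTd hij).mono inter_subset_left inter_subset_left
    have hci : ∀ c : ℝ, IntegrableOn (fun _ => c) E0 μH[(d : ℝ)] := fun c =>
      integrableOn_const hE0fin.ne
    have hgi : IntegrableOn g E0 μH[(d : ℝ)] := ((hci 1).add (hFi.const_mul ε)).add (hci _)
    have hgn : 0 ≤ᵐ[μH[(d : ℝ)].restrict E0] g := by
      filter_upwards [ae_restrict_mem hE0m] with y hy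
      obtain ⟨m, hm⟩ := mem_iUnion.1 hy
      exact (hpc m y hm).1
    rw [← ofReal_integral_eq_lintegral_ofReal hgi hgn] at htotal
    have h2 : (μH[(d : ℝ)] E0).toReal ≤ ∫ y in E0, g y ∂μH[(d : ℝ)] := by
      rw [← ENNReal.ofReal_toReal hE0fin.ne] at htotal
      exact (ENNReal.ofReal_le_ofReal_iff (integral_nonneg_of_ae hgn)).1 htotal
    have h3 : ∫ y in E0, g y ∂μH[(d : ℝ)] = (μH[(d : ℝ)] E0).toReal
        + ε * ∫ y in E0, F y ∂μH[(d : ℝ)] + (μH[(d : ℝ)] E0).toReal * (K * ε ^ 2) := by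
      simp only [hg]
      have hi : IntegrableOn (fun y => 1 + ε * F y) E0 μH[(d : ℝ)] :=
        (hci 1).add (hFi.const_mul ε)
      rw [integral_add hi (hci _),
        integral_add (hci 1) (hFi.const_mul ε), integral_const_mul, setIntegral_const,
        setIntegral_const]
      simp [Measure.real]
    have h4 : (μH[(d : ℝ)] E0).toReal ≤ A := ENNReal.toReal_mono hAfin.ne (measure_mono hE0s)
    have h5 := mul_le_mul_of_nonneg_right h4 (show 0 ≤ K * ε ^ 2 by positivity)
    rw [h3] at h2
    linarith
  have m1 := main e (abs_of_pos he)
  have m2 := main (-e) (by rw [abs_neg, abs_of_pos he])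
  rw [abs_le]
  constructor
  · have : e * (-(K * A * e)) ≤ e * ∫ y in E0, F y ∂μH[(d : ℝ)] := by linarith
    exact le_of_mul_le_mul_left this he
  · have : e * (∫ y in E0, F y ∂μH[(d : ℝ)]) ≤ e * (K * A * e) := by
      rw [neg_sq] at m2; linarith
    exact le_of_mul_le_mul_left this he

/-! ### Test functions and their dilations -/

lemma smul_field_lip {n : ℕ} {f : Euc n → ℝ} {M R : ℝ} (hR : 0 ≤ R) (hM : ∀ y, |f y| ≤ M)
    (hl : ∀ y z, |f y - f z| ≤ M * ‖y - z‖) (h0 : ∀ y, R ≤ ‖y‖ → f y = 0) (y z : Euc n) :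
    ‖f y • y - f z • z‖ ≤ (M + M * R) * ‖y - z‖ := by
  have hMn : 0 ≤ M := (abs_nonneg _).trans (hM y)
  have aux : ∀ x y : Euc n, ‖y‖ ≤ R → ‖f x • x - f y • y‖ ≤ (M + M * R) * ‖x - y‖ := by
    intro x y hy
    refine (norm_smul_sub_smul_le _ _ _ _).trans ?_
    have e1 := mul_le_mul_of_nonneg_right (hM x) (norm_nonneg (x - y))
    have e2 := mul_le_mul (hl x y) hy (norm_nonneg _) (by positivity)
    nlinarith
  by_cases hz : ‖z‖ ≤ R
  · exact aux y z hz
  by_cases hy : ‖y‖ ≤ R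
  · rw [norm_sub_rev, norm_sub_rev y]; exact aux z y hy
  · rw [h0 y (le_of_not_ge hy), h0 z (le_of_not_ge hz)]
    simp only [zero_smul, sub_zero, norm_zero]
    positivity

/-- The primitive of a Lipschitz weight `w` supported in `(-∞, R²]`, evaluated at `|y - x₀|²`, is a
test function. -/
lemma testFn_of_weight {n : ℕ} {w : ℝ → ℝ} (hw : LipschitzWith 1 w) (hw0 : ∀ s, 0 ≤ w s) {R r : ℝ}
    (hR : 0 ≤ R) (hwR : ∀ s, R ^ 2 ≤ s → w s = 0) {x₀ : Euc n} (hr : ‖x₀‖ + R ≤ r) :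
    TestFn r (fun y => ∫ s in ‖y - x₀‖ ^ 2..R ^ 2, w s)
      (fun y => (-(2 * w (‖y - x₀‖ ^ 2))) • (y - x₀)) := by
  have hwl : ∀ s t, |w s - w t| ≤ |s - t| := fun s t => by
    simpa [Real.dist_eq] using hw.dist_le_mul s t
  have hzero : ∀ t, R ^ 2 ≤ t → ∫ s in t..R ^ 2, w s = 0 := fun t ht => by
    rw [intervalIntegral.integral_congr (g := fun _ => 0)]
    · simp
    · intro s hs
      rw [uIcc_of_ge ht] at hs
      exact hwR s hs.1
  constructor
  · intro y
    have h1 : HasDerivAt (fun t => ∫ s in t..R ^ 2, w s) (-w (‖y - x₀‖ ^ 2)) (‖y - x₀‖ ^ 2) :=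
      intervalIntegral.integral_hasDerivAt_left (hw.continuous.intervalIntegrable _ _)
        (hw.continuous.stronglyMeasurableAtFilter _ _) hw.continuous.continuousAt
    have h2 : HasFDerivAt (fun y : Euc n => ‖y - x₀‖ ^ 2) (2 • (innerSL ℝ (y - x₀))) y := by
      have := ((hasFDerivAt_id (𝕜 := ℝ) y).sub_const x₀).norm_sq
      exact this
    have h3 := h1.comp_hasFDerivAt y h2
    rw [hasGradientAt_iff_hasFDerivAt]
    refine h3.congr_fderiv ?_
    ext z
    simp
    ring
  · set M : ℝ := max (R ^ 2) (2 * R) with hM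
    have hM0 : 0 ≤ M := le_max_of_le_left (sq_nonneg R)
    set f : Euc n → ℝ := fun y => w ((‖y‖) ^ 2) with hf
    have hmin : ∀ y : Euc n, f y = w ((min ‖y‖ R) ^ 2) := fun y => by
      rcases le_total ‖y‖ R with h | h
      · rw [min_eq_left h]
      · rw [min_eq_right h, hwR _ le_rfl, hf]
        exact hwR _ (pow_le_pow_left₀ hR h 2)
    have hsupp : ∀ y : Euc n, R ≤ ‖y‖ → f y = 0 := fun y hy =>
      hwR _ (pow_le_pow_left₀ hR hy 2)
    have hb : ∀ y : Euc n, |f y| ≤ M := fun y => by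
      have h1 := hwl ((min ‖y‖ R) ^ 2) (R ^ 2)
      rw [hwR (R ^ 2) le_rfl, sub_zero, ← hmin] at h1
      refine h1.trans (le_max_of_le_left ?_)
      have h2 : (min ‖y‖ R) ^ 2 ≤ R ^ 2 :=
        pow_le_pow_left₀ (le_min (norm_nonneg _) hR) (min_le_right _ _) 2
      rw [abs_le]
      constructor
      · nlinarith [sq_nonneg (min ‖y‖ R)]
      · nlinarith [sq_nonneg R]
    have hl : ∀ y z : Euc n, |f y - f z| ≤ M * ‖y - z‖ := fun y z => by
      rw [hmin, hmin]
      refine (hwl _ _).trans ?_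
      have e1 : |min ‖y‖ R - min ‖z‖ R| ≤ ‖y - z‖ := by
        refine (abs_min_sub_min_le_max _ _ _ _).trans ?_
        rw [sub_self, abs_zero, max_eq_left (abs_nonneg _)]
        exact abs_norm_sub_norm_le y z
      have e2 : (min ‖y‖ R) ^ 2 - (min ‖z‖ R) ^ 2
          = (min ‖y‖ R + min ‖z‖ R) * (min ‖y‖ R - min ‖z‖ R) := by ring
      rw [e2, abs_mul]
      refine mul_le_mul (le_max_of_le_right ?_) e1 (abs_nonneg _) hM0
      rw [abs_of_nonneg (add_nonneg (le_min (norm_nonneg _) hR) (le_min (norm_nonneg _) hR))]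
      linarith [min_le_right ‖y‖ R, min_le_right ‖z‖ R]
    refine ⟨2 * (M + M * R), fun y z => ?_⟩
    have h1 := smul_field_lip hR hb hl hsupp (y - x₀) (z - x₀)
    have e : (-(2 * w (‖y - x₀‖ ^ 2))) • (y - x₀) - (-(2 * w (‖z - x₀‖ ^ 2))) • (z - x₀)
        = (-2 : ℝ) • (f (y - x₀) • (y - x₀) - f (z - x₀) • (z - x₀)) := by
      simp only [hf]; module
    rw [e, norm_smul]
    simp only [sub_sub_sub_cancel_right] at h1
    norm_num
    linarith
  · intro y
    rcases le_total (‖y - x₀‖ ^ 2) (R ^ 2) with h | h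
    · exact intervalIntegral.integral_nonneg h fun s _ => hw0 s
    · exact (hzero _ h).ge
  · intro y hy
    refine hzero _ (pow_le_pow_left₀ hR ?_ 2)
    have := norm_sub_norm_le y x₀
    linarith

lemma TestFn.scale {n : ℕ} {r : ℝ} {ψ : Euc n → ℝ} {G : Euc n → Euc n} (h : TestFn r ψ G) {l : ℝ}
    (hl : 0 < l) : TestFn (r / l) (fun y => ψ (l • y)) (fun y => l • G (l • y)) := by
  constructor
  · intro y
    rw [hasGradientAt_iff_hasFDerivAt]
    have h2 : HasFDerivAt (fun y : Euc n => l • y) (l • ContinuousLinearMap.id ℝ (Euc n)) y :=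
      (hasFDerivAt_id y).const_smul l
    refine ((h.grad (l • y)).hasFDerivAt.comp y h2).congr_fderiv ?_
    ext z
    simp
  · obtain ⟨Λ, hΛ⟩ := h.lip
    refine ⟨l * (Λ * l), fun y z => ?_⟩
    rw [← smul_sub, norm_smul, Real.norm_eq_abs, abs_of_pos hl, mul_assoc]
    refine mul_le_mul_of_nonneg_left ?_ hl.le
    refine (hΛ _ _).trans (le_of_eq ?_)
    rw [← smul_sub, norm_smul, Real.norm_eq_abs, abs_of_pos hl, mul_assoc]
  · exact fun y => h.nonneg _
  · intro y hy
    refine h.supp _ ?_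
    rw [norm_smul, Real.norm_eq_abs, abs_of_pos hl]
    rw [div_le_iff₀ hl] at hy
    linarith

lemma integrable_of_supp {n d : ℕ} {b r : ℝ} (hb : 0 < b) (hrb : r < b) {E : Set (Euc n)}
    (hE : IsAAlmostMinimal n d (ball 0 b) E (fun _ => 0)) {f : Euc n → ℝ}
    (hf : AEStronglyMeasurable f (μH[(d : ℝ)].restrict E)) {C : ℝ}
    (hC : ∀ᵐ y ∂(μH[(d : ℝ)].restrict E), |f y| ≤ C)
    (h0 : ∀ y, r ≤ ‖y‖ → f y = 0) : Integrable f (μH[(d : ℝ)].restrict E) := by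
  have hfin : μH[(d : ℝ)].restrict E (closedBall 0 r) < ⊤ := by
    rw [Measure.restrict_apply isClosed_closedBall.measurableSet, inter_comm]
    exact finite_of_compact hb hE (isCompact_closedBall _ _) (closedBall_subset_ball hrb)
  have hi : Integrable ((closedBall (0 : Euc n) r).indicator fun _ => |C|)
      (μH[(d : ℝ)].restrict E) := by
    rw [integrable_indicator_iff isClosed_closedBall.measurableSet]
    exact integrableOn_const hfin.ne
  refine hi.mono' hf ?_
  filter_upwards [hC] with y hy
  by_cases hyr : y ∈ closedBall (0 : Euc n) r
  · rw [indicator_of_mem hyr, Real.norm_eq_abs]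
    exact hy.trans (le_abs_self C)
  · rw [indicator_of_notMem hyr, h0 y (by simpa using (not_le.1 (by simpa using hyr)).le)]
    simp

lemma TestFn.integrable {n d : ℕ} {b r : ℝ} (hb : 0 < b) (hrb : r < b) {E : Set (Euc n)}
    (hE : IsAAlmostMinimal n d (ball 0 b) E (fun _ => 0)) {ψ : Euc n → ℝ} {G : Euc n → Euc n}
    (h : TestFn r ψ G) : Integrable ψ (μH[(d : ℝ)].restrict E) ∧
      Integrable (fun y => (inner ℝ y (G y) : ℝ)) (μH[(d : ℝ)].restrict E) := by
  obtain ⟨C, hC, hψ, hG, -, -⟩ := h.bounds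
  refine ⟨integrable_of_supp hb hrb hE h.continuous.aestronglyMeasurable
    (Eventually.of_forall hψ) h.supp, integrable_of_supp (C := |r| * C) hb hrb hE
      ((continuous_id.inner h.continuous_grad).aestronglyMeasurable)
      (Eventually.of_forall fun y => ?_) fun y hy => by simp [h.grad_zero (h.supp y hy)]⟩
  by_cases hy : r ≤ ‖y‖
  · rw [h.grad_zero (h.supp y hy)]; simp; positivity
  · refine (abs_real_inner_le_norm _ _).trans (mul_le_mul ?_ (hG y) (norm_nonneg _) (abs_nonneg _))
    exact (not_le.1 hy).le.trans (le_abs_self r)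

/-- Differentiation under the integral sign; `r / l < b` keeps the support of `y ↦ ψ (l y)` inside
the ball where `E` has locally finite measure. -/
lemma hasDerivAt_dilation {n d : ℕ} {b r : ℝ} (hr : 0 < r) {E : Set (Euc n)} (hb : 0 < b)
    (hE : IsAAlmostMinimal n d (ball 0 b) E (fun _ => 0)) {ψ : Euc n → ℝ} {G : Euc n → Euc n}
    (h : TestFn r ψ G) {l : ℝ} (hl : 0 < l) (hlb : r / l < b) :
    HasDerivAt (fun t : ℝ => ∫ y in E, ψ (t • y) ∂μH[(d : ℝ)])
      (∫ y in E, inner ℝ y (G (l • y)) ∂μH[(d : ℝ)]) l := by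
  obtain ⟨C, hC, hψ, hG, -, -⟩ := h.bounds
  -- dilation factors larger than `l₁` keep the support inside `B(0, ρ)`, `ρ = r / l₁ < b`
  obtain ⟨ρ, hρ1, hρb⟩ := exists_between hlb
  have hρ : 0 < ρ := (div_pos hr hl).trans hρ1
  have hl1 : r / ρ < l := by rwa [div_lt_iff₀ hρ, mul_comm, ← div_lt_iff₀ hl]
  have hsupp : ∀ t : ℝ, r / ρ < t → ∀ y : Euc n, ρ ≤ ‖y‖ → r ≤ ‖t • y‖ := by
    intro t ht y hy
    have ht0 : 0 < t := (div_pos hr hρ).trans ht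
    rw [norm_smul, Real.norm_eq_abs, abs_of_pos ht0]
    rw [div_lt_iff₀ hρ] at ht
    nlinarith
  have hfin : μH[(d : ℝ)].restrict E (closedBall 0 ρ) < ⊤ := by
    rw [Measure.restrict_apply isClosed_closedBall.measurableSet, inter_comm]
    exact finite_of_compact hb hE (isCompact_closedBall _ _) (closedBall_subset_ball hρb)
  have hi : Integrable ((closedBall (0 : Euc n) ρ).indicator fun _ => ρ * C)
      (μH[(d : ℝ)].restrict E) := by
    rw [integrable_indicator_iff isClosed_closedBall.measurableSet]
    exact integrableOn_const hfin.ne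
  refine (hasDerivAt_integral_of_dominated_loc_of_deriv_le (s := Ioi (r / ρ))
    (F := fun t y => ψ (t • y)) (F' := fun t y => inner ℝ y (G (t • y)))
    (bound := (closedBall (0 : Euc n) ρ).indicator fun _ => ρ * C)
    (Ioi_mem_nhds hl1) ?_ ?_ ?_ ?_ hi ?_).2
  · refine Eventually.of_forall fun t => Continuous.aestronglyMeasurable ?_
    exact h.continuous.comp (continuous_const_smul t)
  · exact ((h.scale hl).integrable hb hlb hE).1
  · refine Continuous.aestronglyMeasurable ?_
    exact continuous_id.inner (h.continuous_grad.comp (continuous_const_smul l))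
  · refine Eventually.of_forall fun y t ht => ?_
    by_cases hyr : ρ ≤ ‖y‖
    · rw [h.grad_zero (h.supp _ (hsupp t ht y hyr)), inner_zero_right, norm_zero]
      exact indicator_nonneg (fun _ _ => by positivity) _
    · have hmem : y ∈ closedBall (0 : Euc n) ρ := by simpa using (not_le.1 hyr).le
      rw [indicator_of_mem hmem]
      exact (abs_real_inner_le_norm _ _).trans (mul_le_mul (by simpa using hmem) (hG _)
        (norm_nonneg _) hρ.le)
  · refine Eventually.of_forall fun y t _ => ?_
    have h2 : HasDerivAt (fun t : ℝ => t • y) y t := by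
      simpa using (hasDerivAt_id t).smul_const y
    have := (h.grad (t • y)).hasFDerivAt.comp_hasDerivAt t h2
    refine this.congr_deriv ?_
    rw [InnerProductSpace.toDual_apply_apply]
    exact real_inner_comm _ _

/-- Derivative of the normalised integrals `l^d ∫_E ψ(l y)`. -/
lemma hasDerivAt_normalised {n d : ℕ} (hd : 1 ≤ d) {b r : ℝ} (hr : 0 < r) {E : Set (Euc n)}
    (hb : 0 < b) (hE : IsAAlmostMinimal n d (ball 0 b) E (fun _ => 0)) {ψ : Euc n → ℝ}
    {G : Euc n → Euc n} (h : TestFn r ψ G) {l : ℝ} (hl : 0 < l) (hlb : r / l < b) :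
    HasDerivAt (fun t : ℝ => t ^ d * ∫ y in E, ψ (t • y) ∂μH[(d : ℝ)])
      (l ^ (d - 1) * ∫ y in E, (d * ψ (l • y) + inner ℝ y (l • G (l • y))) ∂μH[(d : ℝ)]) l := by
  have h1 := (hasDerivAt_pow d l).mul (hasDerivAt_dilation hr hb hE h hl hlb)
  refine h1.congr_deriv ?_
  obtain ⟨i1, i2⟩ := (h.scale hl).integrable hb hlb hE
  rw [integral_add (i1.const_mul _) i2, integral_const_mul]
  have e1 : ∫ y in E, inner ℝ y (l • G (l • y)) ∂μH[(d : ℝ)]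
      = l * ∫ y in E, inner ℝ y (G (l • y)) ∂μH[(d : ℝ)] := by
    rw [← integral_const_mul]
    simp only [inner_smul_right]
  rw [e1]
  obtain ⟨k, rfl⟩ : ∃ k, d = k + 1 := ⟨d - 1, by omega⟩
  simp only [Nat.add_sub_cancel]
  ring

/-! ### Radial test functions and the constant density hypothesis -/

/-- The hat function supported in `[α, β]`. -/
def hat (α β s : ℝ) : ℝ := max 0 (min (s - α) (β - s))

lemma hat_nonneg (α β s : ℝ) : 0 ≤ hat α β s := le_max_left _ _

lemma hat_lip (α β : ℝ) : LipschitzWith 1 (hat α β) := by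
  have h1 : LipschitzWith 1 fun s : ℝ => s - α := LipschitzWith.of_dist_le_mul fun s t => by
    simp [Real.dist_eq]
  have h2 : LipschitzWith 1 fun s : ℝ => β - s := LipschitzWith.of_dist_le_mul fun s t => by
    rw [Real.dist_eq, Real.dist_eq, NNReal.coe_one, one_mul, abs_sub_comm s t]
    exact le_of_eq (congrArg _ (by ring))
  have h3 := (h1.min h2).const_max 0
  rw [max_self] at h3
  exact h3

lemma hat_of_le {α β s : ℝ} (h : s ≤ α) : hat α β s = 0 :=
  max_eq_left (min_le_of_left_le (by linarith))

lemma hat_of_ge {α β s : ℝ} (h : β ≤ s) : hat α β s = 0 :=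
  max_eq_left (min_le_of_right_le (by linarith))

/-- The radial test function attached to the annulus `a₀ ≤ |y| ≤ b₀`. -/
def radFn {n : ℕ} (a₀ b₀ : ℝ) (y : Euc n) : ℝ := ∫ s in ‖y‖ ^ 2..b₀ ^ 2, hat (a₀ ^ 2) (b₀ ^ 2) s

/-- The gradient of `radFn`. -/
def radGrad {n : ℕ} (a₀ b₀ : ℝ) (y : Euc n) : Euc n :=
  (-(2 * hat (a₀ ^ 2) (b₀ ^ 2) (‖y‖ ^ 2))) • y

lemma testFn_rad {n : ℕ} {a₀ b₀ : ℝ} (hb₀ : 0 ≤ b₀) :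
    TestFn b₀ (radFn (n := n) a₀ b₀) (radGrad a₀ b₀) := by
  have := testFn_of_weight (n := n) (hat_lip (a₀ ^ 2) (b₀ ^ 2)) (hat_nonneg _ _) hb₀
    (fun s hs => hat_of_ge hs) (x₀ := 0) (r := b₀) (by simp)
  simp only [sub_zero] at this
  exact this

/-- The superlevel sets of the radial profile are empty or balls with radius in `[a₀, b₀]`, where the
density hypothesis applies. -/
lemma superlevel {a₀ b₀ t : ℝ} (ha₀ : 0 ≤ a₀) (hab : a₀ ≤ b₀) (ht : 0 ≤ t) :
    (∀ s, (∫ x in s..b₀ ^ 2, hat (a₀ ^ 2) (b₀ ^ 2) x) ≤ t) ∨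
    ∃ ρ, a₀ ≤ ρ ∧ ρ ≤ b₀ ∧ ∀ s, t < (∫ x in s..b₀ ^ 2, hat (a₀ ^ 2) (b₀ ^ 2) x) ↔ s < ρ ^ 2 := by
  set w := hat (a₀ ^ 2) (b₀ ^ 2) with hw
  have hwc : Continuous w := (hat_lip _ _).continuous
  have hwi : ∀ x y, IntervalIntegrable w volume x y := fun x y => hwc.intervalIntegrable x y
  set k : ℝ → ℝ := fun s => ∫ x in s..b₀ ^ 2, w x with hk
  have hαβ : a₀ ^ 2 ≤ b₀ ^ 2 := pow_le_pow_left₀ ha₀ hab 2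
  have hkanti : Antitone k := fun s u hsu => by
    have e : k s = (∫ x in s..u, w x) + k u :=
      (intervalIntegral.integral_add_adjacent_intervals (hwi _ _) (hwi _ _)).symm
    have := intervalIntegral.integral_nonneg (μ := volume) hsu fun x _ => hat_nonneg (a₀ ^ 2) (b₀ ^ 2) x
    rw [e]; linarith
  have hkα : ∀ s, s ≤ a₀ ^ 2 → k s = k (a₀ ^ 2) := fun s hs => by
    have e : k s = (∫ x in s..a₀ ^ 2, w x) + k (a₀ ^ 2) :=
      (intervalIntegral.integral_add_adjacent_intervals (hwi _ _) (hwi _ _)).symm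
    rw [e, intervalIntegral.integral_congr (g := fun _ => 0)]
    · simp
    · intro x hx
      rw [uIcc_of_le hs] at hx
      exact hat_of_le hx.2
  have hkc : Continuous k := by
    have : k = fun s => -∫ x in b₀ ^ 2..s, w x := by
      ext s; exact intervalIntegral.integral_symm _ _
    rw [this]
    exact (intervalIntegral.continuous_primitive hwi _).neg
  by_cases h1 : k (a₀ ^ 2) ≤ t
  · left
    intro s
    rcases le_total s (a₀ ^ 2) with h | h
    · exact (hkα s h).le.trans h1
    · exact (hkanti h).trans h1
  right
  push Not at h1
  obtain ⟨m, ⟨hm1, hm2⟩, hmin⟩ : ∃ m, IsLeast (Icc (a₀ ^ 2) (b₀ ^ 2) ∩ k ⁻¹' Iic t) m := by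
    refine IsCompact.exists_isLeast (isCompact_Icc.inter_right (isClosed_Iic.preimage hkc))
      ⟨b₀ ^ 2, ⟨hαβ, le_rfl⟩, ?_⟩
    simpa [hk] using ht
  have hm0 : 0 ≤ m := (sq_nonneg a₀).trans hm1.1
  refine ⟨√m, Real.le_sqrt_of_sq_le hm1.1, (Real.sqrt_le_left (ha₀.trans hab)).2 hm1.2,
    fun s => ?_⟩
  rw [Real.sq_sqrt hm0]
  constructor
  · intro hs
    by_contra hc
    exact absurd ((hkanti (not_lt.1 hc)).trans hm2) (not_le.2 hs)
  · intro hs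
    rcases le_total s (a₀ ^ 2) with h | h
    · exact h1.trans_le (hkα s h).ge
    · by_contra hc
      exact absurd (hmin ⟨⟨h, hs.le.trans hm1.2⟩, not_lt.1 hc⟩) (not_le.2 hs)

/-- The constant density of balls, integrated over the superlevel sets of `radFn`. -/
lemma rad_scaling {n d : ℕ} {b a θ₀ a₀ b₀ : ℝ} {E : Set (Euc n)} (ha : 0 ≤ a)
    (hconst : ∀ r : ℝ, a < r → r < b →
      μH[(d : ℝ)] (E ∩ ball (0 : Euc n) r) = ENNReal.ofReal (θ₀ * r ^ d))
    (haa : a < a₀) (hab : a₀ ≤ b₀) (hbb : b₀ < b) {l : ℝ} (hl : 0 < l) (hla : a < a₀ / l)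
    (hlb : b₀ / l < b) :
    l ^ d * ∫ y in E, radFn a₀ b₀ (l • y) ∂μH[(d : ℝ)] = ∫ y in E, radFn a₀ b₀ y ∂μH[(d : ℝ)] := by
  have ha₀ : 0 ≤ a₀ := ha.trans haa.le
  have hT := testFn_rad (n := n) (a₀ := a₀) (ha₀.trans hab)
  have hT' := hT.scale hl
  have key : ENNReal.ofReal (l ^ d) * ∫⁻ y in E, ENNReal.ofReal (radFn a₀ b₀ (l • y)) ∂μH[(d : ℝ)]
      = ∫⁻ y in E, ENNReal.ofReal (radFn a₀ b₀ y) ∂μH[(d : ℝ)] := by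
    rw [lintegral_eq_lintegral_meas_lt _ (Eventually.of_forall hT'.nonneg)
      hT'.continuous.aemeasurable, lintegral_eq_lintegral_meas_lt _ (Eventually.of_forall hT.nonneg)
      hT.continuous.aemeasurable, ← lintegral_const_mul' _ _ ENNReal.ofReal_ne_top]
    refine setLIntegral_congr_fun measurableSet_Ioi fun t ht => ?_
    beta_reduce
    rcases superlevel (t := t) ha₀ hab (le_of_lt ht) with h | ⟨ρ, h1, h2, h3⟩
    · have e1 : {y : Euc n | t < radFn a₀ b₀ (l • y)} = ∅ := by
        ext y; simpa [radFn] using h _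
      have e2 : {y : Euc n | t < radFn a₀ b₀ y} = ∅ := by
        ext y; simpa [radFn] using h _
      rw [e1, e2]; simp
    · have hρ : 0 ≤ ρ := ha₀.trans h1
      have e1 : {y : Euc n | t < radFn a₀ b₀ (l • y)} = ball 0 (ρ / l) := by
        ext y
        rw [mem_ball_zero_iff, lt_div_iff₀ hl, Set.mem_ofPred_eq, radFn, h3, sq_lt_sq₀ (norm_nonneg _) hρ,
          norm_smul, Real.norm_eq_abs, abs_of_pos hl, mul_comm]
      have e2 : {y : Euc n | t < radFn a₀ b₀ y} = ball 0 ρ := by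
        ext y
        rw [mem_ball_zero_iff, Set.mem_ofPred_eq, radFn, h3, sq_lt_sq₀ (norm_nonneg _) hρ]
      rw [e1, e2, Measure.restrict_apply isOpen_ball.measurableSet,
        Measure.restrict_apply isOpen_ball.measurableSet, inter_comm, inter_comm _ E,
        hconst _ (hla.trans_le (by gcongr)) (lt_of_le_of_lt (by gcongr) hlb),
        hconst _ (haa.trans_le h1) (h2.trans_lt hbb), ← ENNReal.ofReal_mul (by positivity)]
      congr 1
      rw [div_pow]
      field_simp
  rw [integral_eq_lintegral_of_nonneg_ae (Eventually.of_forall hT'.nonneg)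
      hT'.continuous.aestronglyMeasurable,
    integral_eq_lintegral_of_nonneg_ae (Eventually.of_forall hT.nonneg)
      hT.continuous.aestronglyMeasurable, ← key, ENNReal.toReal_mul,
    ENNReal.toReal_ofReal (by positivity)]

/-- The derivative at `l = 1` of the identity `rad_scaling`. -/
lemma rad_stationary {n d : ℕ} (hd : 1 ≤ d) {b a θ₀ a₀ b₀ : ℝ} {E : Set (Euc n)} (ha : 0 ≤ a)
    (hE : IsAAlmostMinimal n d (ball 0 b) E (fun _ => 0))
    (hconst : ∀ r : ℝ, a < r → r < b →
      μH[(d : ℝ)] (E ∩ ball (0 : Euc n) r) = ENNReal.ofReal (θ₀ * r ^ d))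
    (haa : a < a₀) (hab : a₀ ≤ b₀) (hbb : b₀ < b) :
    ∫ y in E, (d * radFn a₀ b₀ y + inner ℝ y (radGrad a₀ b₀ y)) ∂μH[(d : ℝ)] = 0 := by
  have ha₀ : 0 < a₀ := ha.trans_lt haa
  have hb₀ : 0 < b₀ := ha₀.trans_le hab
  have h1 := hasDerivAt_normalised hd hb₀ (hb₀.trans hbb) hE (testFn_rad (n := n) (a₀ := a₀) hb₀.le)
    one_pos (by simpa using hbb)
  have c1 : ContinuousAt (fun l : ℝ => a₀ / l) 1 :=
    continuousAt_const.div continuousAt_id one_ne_zero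
  have c2 : ContinuousAt (fun l : ℝ => b₀ / l) 1 :=
    continuousAt_const.div continuousAt_id one_ne_zero
  have h2 : HasDerivAt (fun t : ℝ => t ^ d * ∫ y in E, radFn a₀ b₀ (t • y) ∂μH[(d : ℝ)]) 0 1 := by
    refine (hasDerivAt_const (1 : ℝ) (∫ y in E, radFn a₀ b₀ y ∂μH[(d : ℝ)])).congr_of_eventuallyEq ?_
    filter_upwards [c1.eventually (lt_mem_nhds (show a < a₀ / 1 by simpa using haa)),
      c2.eventually (gt_mem_nhds (show b₀ / 1 < b by simpa using hbb)),
      lt_mem_nhds (show (0 : ℝ) < 1 by norm_num)] with l l1 l2 l3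
    exact rad_scaling ha hconst haa hab hbb l3 l1 l2
  have := h1.unique h2
  simpa using this

/-! ### Invariance along rays -/

lemma TestFn.integrable_inner {n d : ℕ} {b r : ℝ} (hb : 0 < b) (hrb : r < b) {E : Set (Euc n)}
    (hE : IsAAlmostMinimal n d (ball 0 b) E (fun _ => 0)) {ψ : Euc n → ℝ} {G : Euc n → Euc n}
    (h : TestFn r ψ G) {u : Euc n → Euc n} {B : ℝ}
    (hu : AEStronglyMeasurable u (μH[(d : ℝ)].restrict E))
    (hB : ∀ᵐ y ∂(μH[(d : ℝ)].restrict E), ‖u y‖ ≤ B) :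
    Integrable (fun y => (inner ℝ (u y) (G y) : ℝ)) (μH[(d : ℝ)].restrict E) := by
  obtain ⟨C, hC, hψ, hG, -, -⟩ := h.bounds
  refine integrable_of_supp (C := B * C) hb hrb hE
    (hu.inner h.continuous_grad.aestronglyMeasurable) ?_ fun y hy => by
      simp [h.grad_zero (h.supp y hy)]
  filter_upwards [hB] with y hy
  exact (abs_real_inner_le_norm _ _).trans (mul_le_mul hy (hG y) (norm_nonneg _)
    ((norm_nonneg _).trans hy))

/-- Test functions supported in the annulus see no dilation defect: the radial first variation shows
that the tangent planes of `E` contain the radial direction there. -/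
lemma annulus_stationary {n d : ℕ} (hd : 1 ≤ d) (hdn : d ≤ n) {b a θ₀ : ℝ} {E : Set (Euc n)}
    (ha : 0 ≤ a) (hE : IsAAlmostMinimal n d (ball 0 b) E (fun _ => 0))
    (hconst : ∀ r : ℝ, a < r → r < b →
      μH[(d : ℝ)] (E ∩ ball (0 : Euc n) r) = ENNReal.ofReal (θ₀ * r ^ d))
    {a₁ b₁ r : ℝ} (haa : a < a₁) (hab : a₁ ≤ b₁) (hbb : b₁ < b) (hr : 0 < r) (hrb : r < b)
    {φ : Euc n → ℝ} {G : Euc n → Euc n} (h : TestFn r φ G)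
    (hsupp : ∀ y, φ y ≠ 0 → a₁ ≤ ‖y‖ ∧ ‖y‖ ≤ b₁) :
    ∫ y in E, (d * φ y + inner ℝ y (G y)) ∂μH[(d : ℝ)] = 0 := by
  have hb : 0 < b := hr.trans hrb
  set a₀ := (a + a₁) / 2 with ha₀
  set b₀ := (b₁ + b) / 2 with hb₀
  have ha₀0 : 0 < a₀ := by rw [ha₀]; linarith
  have hb₀0 : 0 < b₀ := by rw [hb₀]; linarith
  have haa0 : a < a₀ := by rw [ha₀]; linarith
  have hbb0 : b₀ < b := by rw [hb₀]; linarith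
  have hab0 : a₀ ≤ b₀ := by rw [ha₀, hb₀]; linarith
  have hψ := testFn_rad (n := n) (a₀ := a₀) hb₀0.le
  have hstat := rad_stationary hd ha hE hconst haa0 hab0 hbb0
  obtain ⟨C, hC, -, hGC, -, -⟩ := h.bounds
  set w : Euc n → ℝ := fun y => hat (a₀ ^ 2) (b₀ ^ 2) (‖y‖ ^ 2) with hw
  have hw0 : ∀ y, 0 ≤ w y := fun y => hat_nonneg _ _ _
  have hwb : ∀ y, w y ≤ b₀ ^ 2 := fun y => by
    refine max_le (sq_nonneg _) ((min_le_right _ _).trans ?_)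
    linarith [sq_nonneg ‖y‖]
  have hwc : Continuous w := (hat_lip _ _).continuous.comp (continuous_norm.pow 2)
  have hws : ∀ y, b₀ ≤ ‖y‖ → w y = 0 := fun y hy => hat_of_ge (pow_le_pow_left₀ hb₀0.le hy 2)
  set c := min (a₁ ^ 2 - a₀ ^ 2) (b₀ ^ 2 - b₁ ^ 2) with hc
  have hc0 : 0 < c := by
    refine lt_min ?_ ?_
    · have : a₀ < a₁ := by rw [ha₀]; linarith
      nlinarith
    · have : b₁ < b₀ := by rw [hb₀]; linarith
      nlinarith
  have hGw : ∀ y, ‖G y‖ ≤ C / c * w y := fun y => by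
    by_cases hy : φ y = 0
    · rw [h.grad_zero hy, norm_zero]; exact mul_nonneg (by positivity) (hw0 y)
    · obtain ⟨h1, h2⟩ := hsupp y hy
      have hcw : c ≤ w y := by
        refine le_max_of_le_right (min_le_min ?_ ?_)
        · have := pow_le_pow_left₀ (by linarith) h1 2
          linarith
        · have := pow_le_pow_left₀ (norm_nonneg _) h2 2
          linarith
      calc ‖G y‖ ≤ C := hGC y
        _ = C / c * c := by field_simp
        _ ≤ C / c * w y := mul_le_mul_of_nonneg_left hcw (by positivity)
  obtain ⟨K₁, e₁, hK₁, he₁, hv₁⟩ := first_variation hd hdn hb₀0 hbb0 hE hψ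
  obtain ⟨K₂, e₂, hK₂, he₂, hv₂⟩ := first_variation hd hdn hr hrb hE h
  set I := ∫ y in E, (d * φ y + inner ℝ y (G y)) ∂μH[(d : ℝ)] with hI
  set B := ∫ y in E, w y ∂μH[(d : ℝ)] with hB
  have hB0 : 0 ≤ B := integral_nonneg hw0
  have main : ∀ s : ℝ, 0 < s → s ≤ 1 → s ^ 2 ≤ e₁ → s ^ 2 ≤ e₂ →
      |I| ≤ s * (K₂ + C / c * B + C / c * K₁) := by
    intro s hs hs1 hse₁ hse₂
    have he : 0 < s ^ 2 := by positivity
    obtain ⟨T, L, hTm, hTd, hTf, hTE, hTn⟩ := exists_flat_pieces hd hdn hb hE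
      (η := (s ^ 2) ^ 2) (by positivity)
    classical
    -- the projection of `y` to the approximate tangent plane at `y`
    set v : Euc n → Euc n := fun y => if hy : ∃ m, y ∈ T m then L hy.choose (coordAt (L hy.choose) y)
      else 0 with hvdef
    have hv : ∀ m, ∀ y ∈ T m, v y = L m (coordAt (L m) y) := by
      intro m y hy
      have hex : ∃ m, y ∈ T m := ⟨m, hy⟩
      have hm : hex.choose = m := by
        by_contra hne
        exact Set.disjoint_left.1 (hTd hne) hex.choose_spec hy
      simp only [hvdef]
      rw [dif_pos hex, hm]
    have hres : μH[(d : ℝ)].restrict (⋃ m, T m) = μH[(d : ℝ)].restrict E := by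
      refine Measure.restrict_congr_set (ae_eq_set.2 ⟨?_, hTn⟩)
      rw [sdiff_eq_empty.2 (iUnion_subset hTE)]
      exact measure_empty
    have f1 := hv₁ (s ^ 2) he hse₁ T L v hTm hTd hTf hTE hTn hv
    have f2 := hv₂ (s ^ 2) he hse₂ T L v hTm hTd hTf hTE hTn hv
    rw [hres] at f1 f2
    set ν := μH[(d : ℝ)].restrict E with hν
    have hvm : AEStronglyMeasurable v ν := by
      rw [← hres, aestronglyMeasurable_iUnion_iff]
      intro m
      have hcm : Continuous fun y => L m (coordAt (L m) y) := by fun_prop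
      refine hcm.aestronglyMeasurable.congr ?_
      filter_upwards [ae_restrict_mem (hTm m)] with y hy
      rw [hv m y hy]
    have hmem : ∀ᵐ y ∂ν, ∃ m, y ∈ T m := by
      rw [← hres]
      filter_upwards [ae_restrict_mem (MeasurableSet.iUnion hTm)] with y hy
      exact mem_iUnion.1 hy
    have hyb : ∀ᵐ y ∂ν, ‖y‖ ≤ b := by
      filter_upwards [hmem] with y ⟨m, hm⟩
      exact (mem_ball_zero_iff.1 (hE.1 (hTE m hm))).le
    have hvy : ∀ᵐ y ∂ν, ‖v y‖ ≤ ‖y‖ := by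
      filter_upwards [hmem] with y ⟨m, hm⟩
      rw [hv m y hm]; exact norm_proj_le _ _
    have hperp : ∀ᵐ y ∂ν, (inner ℝ (y - v y) y : ℝ) = ‖y - v y‖ ^ 2 := by
      filter_upwards [hmem] with y ⟨m, hm⟩
      rw [hv m y hm]; exact inner_sub_proj _ _
    have hum : AEStronglyMeasurable (fun y => y - v y) ν :=
      continuous_id.aestronglyMeasurable.sub hvm
    have hub : ∀ᵐ y ∂ν, ‖y - v y‖ ≤ 2 * b := by
      filter_upwards [hyb, hvy] with y h1 h2
      exact (norm_sub_le _ _).trans (by linarith)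
    have hvb : ∀ᵐ y ∂ν, ‖v y‖ ≤ b := by
      filter_upwards [hyb, hvy] with y h1 h2 using h2.trans h1
    have split : ∀ {r' : ℝ} {ψ' : Euc n → ℝ} {G' : Euc n → Euc n}, r' < b → TestFn r' ψ' G' →
        ∫ y, (d * ψ' y + inner ℝ y (G' y)) ∂ν = ∫ y, (d * ψ' y + inner ℝ (v y) (G' y)) ∂ν
          + ∫ y, inner ℝ (y - v y) (G' y) ∂ν := by
      intro r' ψ' G' hr' ht
      rw [← integral_add]
      · refine integral_congr_ae (Eventually.of_forall fun y => ?_)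
        simp only [inner_sub_left]
        ring
      · exact ((ht.integrable hb hr' hE).1.const_mul _).add (ht.integrable_inner hb hr' hE hvm hvb)
      · exact ht.integrable_inner hb hr' hE hum hub
    have s1 := split hbb0 hψ
    have s2 := split hrb h
    -- the radial variation controls the normal part of the position vector
    have hdef : ∫ y, inner ℝ (y - v y) (radGrad a₀ b₀ y) ∂ν = -2 * ∫ y, w y * ‖y - v y‖ ^ 2 ∂ν := by
      rw [← integral_const_mul]
      refine integral_congr_ae ?_
      filter_upwards [hperp] with y hy
      rw [radGrad, inner_smul_right, hy]
      simp only [hw]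
      ring
    have hN : ∫ y, w y * ‖y - v y‖ ^ 2 ∂ν ≤ K₁ * s ^ 2 := by
      have h0 : 0 ≤ ∫ y, w y * ‖y - v y‖ ^ 2 ∂ν :=
        integral_nonneg fun y => mul_nonneg (hw0 y) (sq_nonneg _)
      rw [hstat, hdef] at s1
      have := (abs_le.1 f1).2
      linarith
    have i1 : Integrable w ν := integrable_of_supp hb hbb0 hE hwc.aestronglyMeasurable
      (Eventually.of_forall fun y => by rw [abs_of_nonneg (hw0 y)]; exact hwb y) hws
    have i2 : Integrable (fun y => w y * ‖y - v y‖ ^ 2) ν := by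
      refine integrable_of_supp (C := b₀ ^ 2 * (2 * b) ^ 2) hb hbb0 hE
        (hwc.aestronglyMeasurable.mul (hum.norm.pow 2)) ?_ fun y hy => by simp [hws y hy]
      filter_upwards [hub] with y hy
      rw [abs_of_nonneg (mul_nonneg (hw0 y) (sq_nonneg _))]
      exact mul_le_mul (hwb y) (pow_le_pow_left₀ (norm_nonneg _) hy 2) (sq_nonneg _) (sq_nonneg _)
    have hR : |∫ y, inner ℝ (y - v y) (G y) ∂ν| ≤ C / c * (s * B + K₁ * s) := by
      have e1 : |∫ y, inner ℝ (y - v y) (G y) ∂ν| ≤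
          ∫ y, C / c * (s * w y + s⁻¹ * (w y * ‖y - v y‖ ^ 2)) ∂ν := by
        have hbnd : Integrable (fun y => C / c * (s * w y + s⁻¹ * (w y * ‖y - v y‖ ^ 2))) ν :=
          ((i1.const_mul s).add (i2.const_mul s⁻¹)).const_mul (C / c)
        rw [← Real.norm_eq_abs]
        refine norm_integral_le_of_norm_le hbnd (Eventually.of_forall fun y => ?_)
        rw [Real.norm_eq_abs]
        refine (abs_real_inner_le_norm _ _).trans ?_
        have hD : ‖y - v y‖ ≤ s + s⁻¹ * ‖y - v y‖ ^ 2 := by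
          set D := ‖y - v y‖
          have e : s + s⁻¹ * D ^ 2 - D = s⁻¹ * ((D - s) ^ 2 + D * s) := by field_simp; ring
          have : 0 ≤ s⁻¹ * ((D - s) ^ 2 + D * s) := by
            have : 0 ≤ D := norm_nonneg _
            positivity
          linarith
        calc ‖y - v y‖ * ‖G y‖ ≤ (s + s⁻¹ * ‖y - v y‖ ^ 2) * (C / c * w y) :=
              mul_le_mul hD (hGw y) (norm_nonneg _) (by positivity)
          _ = C / c * (s * w y + s⁻¹ * (w y * ‖y - v y‖ ^ 2)) := by ring
      refine e1.trans ?_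
      rw [integral_const_mul, integral_add (i1.const_mul _) (i2.const_mul _), integral_const_mul,
        integral_const_mul]
      refine mul_le_mul_of_nonneg_left (add_le_add le_rfl ?_) (by positivity)
      calc s⁻¹ * ∫ y, w y * ‖y - v y‖ ^ 2 ∂ν ≤ s⁻¹ * (K₁ * s ^ 2) :=
            mul_le_mul_of_nonneg_left hN (by positivity)
        _ = K₁ * s := by field_simp
    have hIle : |I| ≤ K₂ * s ^ 2 + C / c * (s * B + K₁ * s) := by
      rw [hI, s2]
      exact (abs_add_le _ _).trans (add_le_add f2 hR)
    have : K₂ * s ^ 2 ≤ K₂ * s := by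
      refine mul_le_mul_of_nonneg_left ?_ hK₂
      nlinarith
    linarith
  by_contra hne
  have hpos : 0 < |I| := abs_pos.2 hne
  set Q := K₂ + C / c * B + C / c * K₁ with hQ
  have hQ0 : 0 ≤ Q := by positivity
  set s := min (min 1 (min e₁ e₂)) (|I| / (2 * (Q + 1))) with hs
  have hs0 : 0 < s := lt_min (lt_min one_pos (lt_min he₁ he₂)) (by positivity)
  have hs1 : s ≤ 1 := (min_le_left _ _).trans (min_le_left _ _)
  have hss : s ^ 2 ≤ s := by nlinarith
  have hse : s ≤ min e₁ e₂ := (min_le_left _ _).trans (min_le_right _ _)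
  have h1 := main s hs0 hs1 (hss.trans (hse.trans (min_le_left _ _)))
    (hss.trans (hse.trans (min_le_right _ _)))
  have h2 : s ≤ |I| / (2 * (Q + 1)) := min_le_right _ _
  rw [le_div_iff₀ (by positivity)] at h2
  nlinarith

/-- If `t x ∉ E`, a bump function supported near `t x` has zero integral over `E`. Its dilates along
the segment to `x` have supports in the annulus, so by `annulus_stationary` their integrals vanish
too, which contradicts `E` having positive measure near `x`. -/
lemma ray_invariant {n d : ℕ} (hd : 1 ≤ d) (hdn : d ≤ n) {b a θ₀ : ℝ} {E : Set (Euc n)}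
    (ha : 0 ≤ a) (hb : 0 < b) (hE : IsAAlmostMinimal n d (ball 0 b) E (fun _ => 0))
    (hred : IsReducedSet n d E)
    (hconst : ∀ r : ℝ, a < r → r < b →
      μH[(d : ℝ)] (E ∩ ball (0 : Euc n) r) = ENNReal.ofReal (θ₀ * r ^ d))
    {x : Euc n} (hx : x ∈ E) (hxa : a < ‖x‖) {t : ℝ} (ht : 0 < t) (hta : a < t * ‖x‖)
    (htb : t * ‖x‖ < b) : t • x ∈ E := by
  by_contra hc
  have hxb : ‖x‖ < b := mem_ball_zero_iff.1 (hE.1 hx)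
  have hx0 : 0 < ‖x‖ := ha.trans_lt hxa
  -- a ball around `t x` misses `E`
  obtain ⟨δ, hδ, hdisj⟩ : ∃ δ > 0, Disjoint (ball (t • x) δ) E := by
    have h1 : t • x ∉ closure E := fun h => hc (hE.2.1 ⟨h, by
      rwa [mem_ball_zero_iff, norm_smul, Real.norm_eq_abs, abs_of_pos ht]⟩)
    rw [Metric.mem_closure_iff] at h1
    push Not at h1
    obtain ⟨δ, hδ, h2⟩ := h1
    refine ⟨δ, hδ, Set.disjoint_left.2 fun y hy hyE => ?_⟩
    have := h2 y hyE
    rw [mem_ball, dist_comm] at hy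
    linarith
  set l := 1 / t with hl
  have hl0 : 0 < l := by positivity
  -- the radius is small enough for all intermediate dilates to stay in the annulus
  set M := max 1 t with hM
  have hM0 : 0 < M := one_pos.trans_le (le_max_left _ _)
  set m := min 1 t with hm
  have hm0 : 0 < m := lt_min one_pos ht
  have hma : a < m * ‖x‖ := by
    rcases min_choice 1 t with h | h <;> rw [hm, h] <;> linarith
  have hMb : M * ‖x‖ < b := by
    rcases max_choice 1 t with h | h <;> rw [hM, h] <;> linarith
  obtain ⟨R, hR0, hR1⟩ : ∃ R, 0 < R ∧ R < min (min ((m * ‖x‖ - a) / m) ((b - M * ‖x‖) / M)) (δ / t) :=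
    exists_between (lt_min (lt_min (div_pos (by linarith) hm0) (div_pos (by linarith) hM0))
      (div_pos hδ ht))
  have hRa : R * m < m * ‖x‖ - a := by
    rw [← lt_div_iff₀ hm0]; exact hR1.trans_le ((min_le_left _ _).trans (min_le_left _ _))
  have hRb : R * M < b - M * ‖x‖ := by
    rw [← lt_div_iff₀ hM0]; exact hR1.trans_le ((min_le_left _ _).trans (min_le_right _ _))
  have hRδ : R * t < δ := by
    rw [← lt_div_iff₀ ht]; exact hR1.trans_le (min_le_right _ _)
  set w : ℝ → ℝ := fun s => max 0 (R ^ 2 - s) with hw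
  have hwl : LipschitzWith 1 w := by
    have h2 : LipschitzWith 1 fun s : ℝ => R ^ 2 - s := LipschitzWith.of_dist_le_mul fun s t => by
      rw [Real.dist_eq, Real.dist_eq, NNReal.coe_one, one_mul, abs_sub_comm s t]
      exact le_of_eq (congrArg _ (by ring))
    exact h2.const_max 0
  have hT := testFn_of_weight (n := n) hwl (fun s => le_max_left _ _) hR0.le
    (fun s hs => max_eq_left (by linarith)) (x₀ := x) (r := ‖x‖ + R) le_rfl
  set φ : Euc n → ℝ := fun y => ∫ s in ‖y - x‖ ^ 2..R ^ 2, w s with hφ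
  set G : Euc n → Euc n := fun y => (-(2 * w (‖y - x‖ ^ 2))) • (y - x) with hG
  have hφ0 : ∀ y, φ y ≠ 0 → ‖y - x‖ < R := by
    intro y hy
    by_contra hcc
    apply hy
    have h1 : R ^ 2 ≤ ‖y - x‖ ^ 2 := pow_le_pow_left₀ hR0.le (not_lt.1 hcc) 2
    rw [hφ]
    beta_reduce
    rw [intervalIntegral.integral_congr (g := fun _ => 0)]
    · simp
    · intro s hs
      rw [uIcc_of_ge h1] at hs
      exact max_eq_left (by linarith [hs.1])
  have hφpos : ∀ y, ‖y - x‖ < R → 0 < φ y := by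
    intro y hy
    have h1 : ‖y - x‖ ^ 2 < R ^ 2 := pow_lt_pow_left₀ hy (norm_nonneg _) two_ne_zero
    refine intervalIntegral.intervalIntegral_pos_of_pos_on (hwl.continuous.intervalIntegrable _ _)
      (fun s hs => ?_) h1
    exact lt_max_of_lt_right (by linarith [hs.2])
  set f : ℝ → ℝ := fun u => u ^ d * ∫ y in E, φ (u • y) ∂μH[(d : ℝ)] with hf
  -- for the dilation factor `u = 1/τ`, `τ` between `1` and `t`, the derivative vanishes
  have hr0 : 0 < ‖x‖ + R := by positivity
  have hder : ∀ u ∈ uIcc 1 l, HasDerivAt f 0 u := by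
    intro u hu
    have hul : min 1 l ≤ u := by rw [mem_uIcc] at hu; rcases hu with h | h <;> simp [h]
    have huM : u ≤ max 1 l := by rw [mem_uIcc] at hu; rcases hu with h | h <;> simp [h]
    have hu0 : 0 < u := (lt_min one_pos hl0).trans_le hul
    have hmu : m ≤ 1 / u := by
      rw [le_div_iff₀ hu0]
      rcases max_choice 1 l with h' | h'
      · rw [h'] at huM
        have : m ≤ 1 := min_le_left _ _
        nlinarith
      · rw [h'] at huM
        have : m ≤ t := min_le_right _ _
        calc m * u ≤ t * l := mul_le_mul this huM hu0.le ht.le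
          _ = 1 := by rw [hl]; field_simp
    have hMu : 1 / u ≤ M := by
      rw [div_le_iff₀ hu0]
      rcases min_choice 1 l with h' | h'
      · rw [h'] at hul
        have : 1 ≤ M := le_max_left _ _
        nlinarith
      · rw [h'] at hul
        have : t ≤ M := le_max_right _ _
        calc (1 : ℝ) = t * l := by rw [hl]; field_simp
          _ ≤ M * u := mul_le_mul this hul hl0.le hM0.le
    have hbu : (‖x‖ + R) / u < b := by
      calc (‖x‖ + R) / u = (1 / u) * (‖x‖ + R) := by ring
        _ ≤ M * (‖x‖ + R) := mul_le_mul_of_nonneg_right hMu hr0.le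
        _ < b := by linarith
    have hRx : 0 < ‖x‖ - R := by
      have : 0 < m * (‖x‖ - R) := by linarith
      exact pos_of_mul_pos_right this hm0.le
    have hau : a < (‖x‖ - R) / u := by
      calc a < m * (‖x‖ - R) := by linarith
        _ ≤ (1 / u) * (‖x‖ - R) := mul_le_mul_of_nonneg_right hmu hRx.le
        _ = (‖x‖ - R) / u := by ring
    have h1 := hasDerivAt_normalised hd hr0 hb hE hT hu0 hbu
    have h2 := annulus_stationary hd hdn ha hE hconst hau (by gcongr; linarith) hbu
      (div_pos hr0 hu0) hbu (hT.scale hu0) (fun y hy => by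
        have hyx := hφ0 _ hy
        have e1 : ‖u • y‖ = u * ‖y‖ := by rw [norm_smul, Real.norm_eq_abs, abs_of_pos hu0]
        have e2 := abs_norm_sub_norm_le (u • y) x
        rw [e1, abs_le] at e2
        rw [div_le_iff₀ hu0, le_div_iff₀ hu0]
        constructor <;> linarith)
    rw [h2, mul_zero] at h1
    exact h1
  have hconstf : f l = f 1 := by
    have := (convex_uIcc (1 : ℝ) l).norm_image_sub_le_of_norm_hasDerivWithin_le (f := f)
      (f' := fun _ => 0) (C := 0) (fun u hu => (hder u hu).hasDerivWithinAt) (by simp)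
      left_mem_uIcc right_mem_uIcc
    rw [zero_mul, norm_le_zero_iff, sub_eq_zero] at this
    exact this
  have hfl : f l = 0 := by
    have : ∫ y in E, φ (l • y) ∂μH[(d : ℝ)] = 0 := by
      rw [setIntegral_congr_fun (g := fun _ => 0) (measurableSet_of_minimal hE)]
      · simp
      · intro y hy
        by_contra hne
        have h1 := hφ0 _ hne
        refine Set.disjoint_left.1 hdisj ?_ hy
        rw [mem_ball, dist_eq_norm]
        have e : y - t • x = t • (l • y - x) := by
          rw [smul_sub, smul_smul, hl, mul_one_div_cancel ht.ne', one_smul]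
        rw [e, norm_smul, Real.norm_eq_abs, abs_of_pos ht]
        nlinarith
    simp only [hf]
    rw [this, mul_zero]
  have hf1 : 0 < f 1 := by
    simp only [hf, one_pow, one_mul, one_smul]
    have hi := (hT.integrable (d := d) hb (by
      have : 1 ≤ M := le_max_left _ _
      nlinarith) hE).1
    rw [integral_pos_iff_support_of_nonneg hT.nonneg hi]
    have hsup : ball x R ⊆ Function.support φ := fun y hy =>
      (hφpos y (by rwa [mem_ball, dist_eq_norm] at hy)).ne'
    refine lt_of_lt_of_le ?_ (measure_mono hsup)
    rw [Measure.restrict_apply isOpen_ball.measurableSet, inter_comm]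
    exact hred x hx R hR0
  linarith

/-! ### The cone over a spherical slice -/

/-- The cone with vertex `0` over the slice of `E` by the sphere of radius `r₀`. It is written as
`{y : r₀ y = ‖y‖ ω for some ω in the slice}`, so that it contains the vertex exactly when the slice
is nonempty. -/
def sliceCone {n : ℕ} (E : Set (Euc n)) (r₀ : ℝ) : Set (Euc n) :=
  {y | ∃ ω ∈ E ∩ sphere 0 r₀, r₀ • y = ‖y‖ • ω}

lemma sliceCone_cone {n : ℕ} (E : Set (Euc n)) (r₀ : ℝ) : IsConeAt0 (sliceCone E r₀) := by
  rintro y ⟨ω, hω, h⟩ l hl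
  refine ⟨ω, hω, ?_⟩
  rw [smul_comm, h, norm_smul, Real.norm_eq_abs, abs_of_pos hl, smul_smul]

lemma zero_mem_sliceCone {n : ℕ} {E : Set (Euc n)} {r₀ : ℝ} {y : Euc n}
    (hy : y ∈ sliceCone E r₀) : (0 : Euc n) ∈ sliceCone E r₀ := by
  obtain ⟨ω, hω, -⟩ := hy
  exact ⟨ω, hω, by simp⟩

lemma smul_mem_sliceCone {n : ℕ} {E : Set (Euc n)} {r₀ : ℝ} {y : Euc n}
    (hy : y ∈ sliceCone E r₀) {l : ℝ} (hl : 0 ≤ l) : l • y ∈ sliceCone E r₀ := by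
  rcases hl.eq_or_lt with rfl | hl
  · rw [zero_smul]
    exact zero_mem_sliceCone hy
  · exact sliceCone_cone E r₀ y hy l hl

lemma isClosed_sliceCone {n : ℕ} {E : Set (Euc n)} {r₀ : ℝ} (hc : IsCompact (E ∩ sphere 0 r₀)) :
    IsClosed (sliceCone E r₀) := by
  have := isCompact_iff_compactSpace.1 hc
  let Z : Set ((E ∩ sphere (0 : Euc n) r₀ : Set (Euc n)) × Euc n) :=
    {p | r₀ • p.2 = ‖p.2‖ • (p.1 : Euc n)}
  have hZ : IsClosed Z := isClosed_eq (by fun_prop) (by fun_prop)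
  have : sliceCone E r₀ = Prod.snd '' Z := by
    ext y
    constructor
    · rintro ⟨ω, hω, h⟩
      exact ⟨(⟨ω, hω⟩, y), h, rfl⟩
    · rintro ⟨⟨⟨ω, hω⟩, y⟩, h, rfl⟩
      exact ⟨ω, hω, h⟩
  rw [this]
  exact isClosedMap_snd_of_compactSpace _ hZ

/-- `E` is invariant under dilations inside the annulus `a < ‖x‖ < b`. -/
def RayInv {n : ℕ} (a b : ℝ) (E : Set (Euc n)) : Prop :=
  ∀ x ∈ E, a < ‖x‖ → ∀ t : ℝ, 0 < t → a < t * ‖x‖ → t * ‖x‖ < b → t • x ∈ E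

lemma mem_sliceCone_iff {n : ℕ} {E : Set (Euc n)} {a b r₀ : ℝ} (ha : 0 ≤ a)
    (h0 : a < r₀) (h0' : r₀ < b) (hE : RayInv a b E) {y : Euc n} (hya : a < ‖y‖) (hyb : ‖y‖ < b) :
    y ∈ sliceCone E r₀ ↔ y ∈ E := by
  have hr : 0 < r₀ := by linarith
  have hy : 0 < ‖y‖ := by linarith
  constructor
  · rintro ⟨ω, ⟨hω, hωs⟩, h⟩
    rw [mem_sphere_zero_iff_norm] at hωs
    have e : y = (‖y‖ / r₀) • ω := by
      rw [div_eq_inv_mul, mul_smul, ← h, inv_smul_smul₀ hr.ne']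
    have e2 : ‖y‖ / r₀ * ‖ω‖ = ‖y‖ := by rw [hωs]; field_simp
    rw [e]
    exact hE ω hω (by linarith) _ (by positivity) (by rwa [e2]) (by rwa [e2])
  · intro h
    have e2 : r₀ / ‖y‖ * ‖y‖ = r₀ := by field_simp
    refine ⟨(r₀ / ‖y‖) • y, ⟨hE y h hya _ (by positivity) (by rwa [e2]) (by rwa [e2]), ?_⟩, ?_⟩
    · rw [mem_sphere_zero_iff_norm, norm_smul, Real.norm_eq_abs, abs_of_pos (by positivity), e2]
    · rw [smul_smul, mul_div_cancel₀ _ hy.ne']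

open scoped Pointwise in
lemma smul_inter_ball {n : ℕ} {C : Set (Euc n)} (hC : IsConeAt0 C) {l : ℝ} (hl : 0 < l)
    (x : Euc n) (r : ℝ) : l • (C ∩ ball x r) = C ∩ ball (l • x) (l * r) := by
  ext y
  rw [mem_smul_set_iff_inv_smul_mem₀ hl.ne']
  have e : dist (l⁻¹ • y) x = l⁻¹ * dist y (l • x) := by
    have : x = l⁻¹ • (l • x) := by rw [inv_smul_smul₀ hl.ne']
    conv_lhs => rw [this]
    rw [dist_smul₀, Real.norm_eq_abs, abs_of_pos (by positivity)]
  simp only [mem_inter_iff, mem_ball, e, inv_mul_lt_iff₀ hl]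
  refine and_congr_left fun _ => ⟨fun h => ?_, fun h => hC y h _ (by positivity)⟩
  have := hC _ h l hl
  rwa [smul_inv_smul₀ hl.ne'] at this

open scoped Pointwise in
lemma hausdorff_smul_cone {n d : ℕ} {l : ℝ} (hl : 0 < l)
    (S : Set (Euc n)) : μH[(d : ℝ)] (l • S) = ENNReal.ofReal (l ^ d) * μH[(d : ℝ)] S := by
  rw [Measure.hausdorffMeasure_smul₀ (by positivity) hl.ne', NNReal.rpow_natCast, ENNReal.smul_def,
    smul_eq_mul]
  congr 1
  rw [ENNReal.ofReal_pow hl.le, ENNReal.coe_pow, Real.nnnorm_of_nonneg hl.le, ENNReal.ofReal,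
    Real.toNNReal_of_nonneg hl.le]

open scoped Pointwise in
lemma reduced_sliceCone {n d : ℕ} {E : Set (Euc n)} {a b r₀ : ℝ} (ha : 0 ≤ a)
    (h0 : a < r₀) (h0' : r₀ < b) (hE : RayInv a b E) (hred : IsReducedSet n d E) :
    IsReducedSet n d (sliceCone E r₀) := by
  have hr : 0 < r₀ := by linarith
  set C := sliceCone E r₀ with hC
  have key : ∀ x ∈ C, x ≠ 0 → ∀ r : ℝ, 0 < r → 0 < μH[(d : ℝ)] (C ∩ ball x r) := by
    intro x hx hx0 r hr0
    have hxn : 0 < ‖x‖ := norm_pos_iff.2 hx0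
    set l := r₀ / ‖x‖ with hl
    have hl0 : 0 < l := by positivity
    have hn : ‖l • x‖ = r₀ := by
      rw [norm_smul, Real.norm_eq_abs, abs_of_pos hl0, hl]; field_simp
    have hlx : l • x ∈ E :=
      (mem_sliceCone_iff ha h0 h0' hE (by rwa [hn]) (by rwa [hn])).1 (sliceCone_cone E r₀ x hx l hl0)
    set s := min (l * r) (min (r₀ - a) (b - r₀)) with hs
    have hs0 : 0 < s := lt_min (by positivity) (lt_min (by linarith) (by linarith))
    have hpos := hred _ hlx s hs0
    have hsub : E ∩ ball (l • x) s ⊆ C ∩ ball (l • x) (l * r) := by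
      rintro y ⟨hyE, hy⟩
      have h1 : s ≤ l * r := min_le_left _ _
      have h2 : s ≤ r₀ - a := (min_le_right _ _).trans (min_le_left _ _)
      have h3 : s ≤ b - r₀ := (min_le_right _ _).trans (min_le_right _ _)
      refine ⟨?_, ball_subset_ball h1 hy⟩
      rw [mem_ball, dist_eq_norm] at hy
      have h4 := abs_norm_sub_norm_le y (l • x)
      rw [hn, abs_le] at h4
      exact (mem_sliceCone_iff ha h0 h0' hE (by linarith) (by linarith)).2 hyE
    have h5 := hpos.trans_le (measure_mono hsub)
    rw [← smul_inter_ball (sliceCone_cone E r₀) hl0, hausdorff_smul_cone hl0] at h5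
    exact pos_of_mul_pos_right h5 (zero_le)
  intro x hx r hr0
  by_cases hx0 : x = 0
  · obtain ⟨ω, ⟨hω, hωs⟩, -⟩ := hx
    rw [mem_sphere_zero_iff_norm] at hωs
    have hωC : ω ∈ C := (mem_sliceCone_iff ha h0 h0' hE (by rwa [hωs]) (by rwa [hωs])).2 hω
    set t := r / (2 * r₀) with ht
    have ht0 : 0 < t := by positivity
    have hn : ‖t • ω‖ = r / 2 := by
      rw [norm_smul, Real.norm_eq_abs, abs_of_pos ht0, hωs, ht]; field_simp
    refine (key (t • ω) (sliceCone_cone E r₀ ω hωC t ht0)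
      (norm_pos_iff.1 (by rw [hn]; positivity)) (r / 2) (by positivity)).trans_le
      (measure_mono (inter_subset_inter_right _ ?_))
    refine ball_subset_ball' ?_
    rw [hx0, dist_zero_right, hn]
    linarith
  · exact key x hx hx0 r hr0

/-! ### The radial stretching of an annulus onto a punctured ball -/

/-- The factor of the radial map `stretch`. -/
def stretchFactor (s r t : ℝ) : ℝ := max 0 (min 1 (r / (r - s) * (1 - s / max t s)))

/-- The Lipschitz radial map that collapses the ball of radius `s` to the origin, stretches the
annulus `s ≤ ‖x‖ ≤ r` affinely onto the ball of radius `r`, and fixes everything else. -/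
def stretch {n : ℕ} (s r : ℝ) (x : Euc n) : Euc n := stretchFactor s r ‖x‖ • x

/-- The scaling factor, at a point of norm `t`, of the inverse of `stretch`. -/
def shrinkFactor (s r t : ℝ) : ℝ := s / t + (r - s) / r

section Stretch

variable {s r : ℝ}

lemma stretchFactor_nonneg (t : ℝ) : 0 ≤ stretchFactor s r t := le_max_left _ _

lemma stretchFactor_le_one (t : ℝ) : stretchFactor s r t ≤ 1 :=
  max_le zero_le_one (min_le_left _ _)

lemma stretchFactor_of_le (hs : 0 < s) {t : ℝ} (ht : t ≤ s) : stretchFactor s r t = 0 := by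
  rw [stretchFactor, max_eq_right ht, div_self hs.ne', sub_self, mul_zero]
  simp

lemma stretchFactor_of_ge (hs : 0 < s) (hsr : s < r) {t : ℝ} (ht : r ≤ t) :
    stretchFactor s r t = 1 := by
  have h : 1 ≤ r / (r - s) * (1 - s / t) := by
    have ht0 : 0 < t := by linarith
    have h1 : 0 < r - s := by linarith
    have e : r / (r - s) * (1 - s / t) = r * (t - s) / ((r - s) * t) := by field_simp
    rw [e, le_div_iff₀ (by positivity)]
    nlinarith
  rw [stretchFactor, max_eq_left (show s ≤ t by linarith), min_eq_left h]
  simp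

lemma stretchFactor_mid (hs : 0 < s) (hsr : s < r) {t : ℝ} (hst : s ≤ t) (ht : t ≤ r) :
    stretchFactor s r t = r / (r - s) * (1 - s / t) := by
  have ht0 : 0 < t := by linarith
  have h1 : 0 < r - s := by linarith
  have h : r / (r - s) * (1 - s / t) ≤ 1 := by
    have e : r / (r - s) * (1 - s / t) = r * (t - s) / ((r - s) * t) := by field_simp
    rw [e, div_le_iff₀ (by positivity)]
    nlinarith
  have hr : 0 < r := by linarith
  have h' : 0 ≤ r / (r - s) * (1 - s / t) :=
    mul_nonneg (by positivity) (by rw [sub_nonneg, div_le_one ht0]; exact hst)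
  rw [stretchFactor, max_eq_left hst, min_eq_right h, max_eq_right h']

lemma abs_stretchFactor_sub_le (hs : 0 < s) (hsr : s < r) (t u : ℝ) :
    |stretchFactor s r t - stretchFactor s r u| ≤ r / (r - s) * s⁻¹ * |t - u| := by
  have h1 : 0 < r - s := by linarith
  have hr : 0 < r := by linarith
  set M := max t s
  set N := max u s
  have hM : s ≤ M := le_max_right _ _
  have hN : s ≤ N := le_max_right _ _
  have hMN : |M - N| ≤ |t - u| := abs_max_sub_max_le_abs _ _ _
  have h2 : |stretchFactor s r t - stretchFactor s r u| ≤
      |r / (r - s) * (1 - s / M) - r / (r - s) * (1 - s / N)| := by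
    refine (abs_max_sub_max_le_max _ _ _ _).trans ?_
    rw [sub_self, abs_zero, max_eq_right (abs_nonneg _)]
    refine (abs_min_sub_min_le_max _ _ _ _).trans ?_
    rw [sub_self, abs_zero, max_eq_right (abs_nonneg _)]
  have hM0 : 0 < M := by linarith
  have hN0 : 0 < N := by linarith
  have e : r / (r - s) * (1 - s / M) - r / (r - s) * (1 - s / N) =
      r / (r - s) * (s / (M * N)) * (M - N) := by field_simp; ring
  refine h2.trans ?_
  rw [e, abs_mul, abs_of_pos (by positivity)]
  gcongr
  rw [div_le_iff₀ (by positivity), inv_mul_eq_div, le_div_iff₀ hs]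
  exact mul_le_mul hM hN hs.le hM0.le

lemma exists_lipschitz_stretch {n : ℕ} (hs : 0 < s) (hsr : s < r) :
    ∃ K : ℝ≥0, LipschitzWith K (stretch s r : Euc n → Euc n) := by
  have h1 : 0 < r - s := by linarith
  have hr : 0 < r := by linarith
  set L := r / (r - s) * s⁻¹
  have hL : 0 ≤ L := by positivity
  refine ⟨⟨1 + L * r, by positivity⟩, LipschitzWith.of_dist_le_mul fun p q => ?_⟩
  change dist (stretch s r p) (stretch s r q) ≤ (1 + L * r) * dist p q
  wlog hpq : ‖q‖ ≤ ‖p‖ generalizing p q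
  · rw [dist_comm, dist_comm p]
    exact this q p (not_le.1 hpq).le
  rw [dist_eq_norm, dist_eq_norm]
  refine (norm_smul_sub_smul_le _ _ p q).trans ?_
  rw [add_mul]
  refine add_le_add (mul_le_mul_of_nonneg_right ?_ (norm_nonneg _)) ?_
  · rw [abs_of_nonneg (stretchFactor_nonneg _)]
    exact stretchFactor_le_one _
  · by_cases hq : r ≤ ‖q‖
    · rw [stretchFactor_of_ge hs hsr hq, stretchFactor_of_ge hs hsr (hq.trans hpq)]
      simp only [sub_self, abs_zero, zero_mul]
      positivity
    · calc |stretchFactor s r ‖p‖ - stretchFactor s r ‖q‖| * ‖q‖ ≤ (L * ‖p - q‖) * r := by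
            refine mul_le_mul ((abs_stretchFactor_sub_le hs hsr _ _).trans ?_) (not_le.1 hq).le
              (norm_nonneg _) (by positivity)
            exact mul_le_mul_of_nonneg_left (abs_norm_sub_norm_le p q) hL
        _ = L * r * ‖p - q‖ := by ring

lemma norm_stretch_le {n : ℕ} (x : Euc n) : ‖stretch s r x‖ ≤ ‖x‖ := by
  rw [stretch, norm_smul, Real.norm_eq_abs, abs_of_nonneg (stretchFactor_nonneg _)]
  exact mul_le_of_le_one_left (norm_nonneg _) (stretchFactor_le_one _)

/-- On `s < ‖x‖ ≤ r` the map `stretch` has norm `r (‖x‖ - s) / (r - s)` and is inverted by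
`shrinkFactor`. -/
lemma shrink_stretch {n : ℕ} (hs : 0 < s) (hsr : s < r) {x : Euc n} (hx : s < ‖x‖) (hx' : ‖x‖ ≤ r) :
    ‖stretch s r x‖ = r * (‖x‖ - s) / (r - s) ∧
      shrinkFactor s r ‖stretch s r x‖ • stretch s r x = x := by
  have h1 : 0 < r - s := by linarith
  have hr : 0 < r := by linarith
  have hx0 : 0 < ‖x‖ := by linarith
  have h2 : 0 < ‖x‖ - s := by linarith
  have e : ‖stretch s r x‖ = r * (‖x‖ - s) / (r - s) := by
    rw [stretch, norm_smul, Real.norm_eq_abs, abs_of_nonneg (stretchFactor_nonneg _),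
      stretchFactor_mid hs hsr hx.le hx']
    field_simp
  refine ⟨e, ?_⟩
  rw [e, stretch, smul_smul, stretchFactor_mid hs hsr hx.le hx', shrinkFactor]
  have : (s / (r * (‖x‖ - s) / (r - s)) + (r - s) / r) * (r / (r - s) * (1 - s / ‖x‖)) = 1 := by
    field_simp
    ring
  rw [this, one_smul]

lemma stretch_shrink {n : ℕ} (hs : 0 < s) (hsr : s < r) {y : Euc n} (hy : y ≠ 0) (hy' : ‖y‖ ≤ r) :
    0 < shrinkFactor s r ‖y‖ ∧ ‖shrinkFactor s r ‖y‖ • y‖ = s + (r - s) / r * ‖y‖ ∧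
      stretch s r (shrinkFactor s r ‖y‖ • y) = y := by
  have h1 : 0 < r - s := by linarith
  have hr : 0 < r := by linarith
  have hy0 : 0 < ‖y‖ := norm_pos_iff.2 hy
  have hp : 0 < shrinkFactor s r ‖y‖ := by rw [shrinkFactor]; positivity
  have e : ‖shrinkFactor s r ‖y‖ • y‖ = s + (r - s) / r * ‖y‖ := by
    rw [norm_smul, Real.norm_eq_abs, abs_of_pos hp, shrinkFactor]
    field_simp
  refine ⟨hp, e, ?_⟩
  have h2 : s ≤ s + (r - s) / r * ‖y‖ := by
    have : 0 ≤ (r - s) / r * ‖y‖ := by positivity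
    linarith
  have h3 : s + (r - s) / r * ‖y‖ ≤ r := by
    have : (r - s) / r * ‖y‖ ≤ (r - s) / r * r := by gcongr
    rw [div_mul_cancel₀ _ hr.ne'] at this
    linarith
  rw [stretch, e, stretchFactor_mid hs hsr h2 h3, smul_smul, shrinkFactor]
  have : r / (r - s) * (1 - s / (s + (r - s) / r * ‖y‖)) * (s / ‖y‖ + (r - s) / r) = 1 := by
    have h4 : r * s + ‖y‖ * (r - s) ≠ 0 := by positivity
    have : s + (r - s) / r * ‖y‖ = (r * s + ‖y‖ * (r - s)) / r := by field_simp
    rw [this]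
    field_simp
    ring
  rw [this, one_smul]

end Stretch

/-! ### Minimality of the cone -/

lemma hausdorff_singleton {n d : ℕ} (hd : 1 ≤ d) (x : Euc n) : μH[(d : ℝ)] {x} = 0 := by
  have := Measure.nullSingletonClass_hausdorff (Euc n) (d := (d : ℝ)) (by positivity)
  exact measure_singleton x

/-- The cone has locally finite measure: apart from its vertex, its part in a ball is the image of
a piece of `E` under `stretch`. -/
lemma finite_sliceCone {n d : ℕ} (hd : 1 ≤ d) {E : Set (Euc n)} {a b r₀ r : ℝ} (ha : 0 ≤ a)
    (hE : IsAAlmostMinimal n d (ball 0 b) E (fun _ => 0)) (hinv : RayInv a b E)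
    (h0 : a < r₀) (h0' : r₀ < b) (har : a < r) (hrb : r < b) :
    μH[(d : ℝ)] (sliceCone E r₀ ∩ closedBall 0 r) < ⊤ := by
  set s := (a + r) / 2 with hs
  have has : a < s := by linarith
  have hsr : s < r := by linarith
  have hs0 : 0 < s := by linarith
  have hr0 : 0 < r := by linarith
  obtain ⟨K, hK⟩ := exists_lipschitz_stretch (n := n) hs0 hsr
  have hsub : sliceCone E r₀ ∩ closedBall 0 r ⊆ {0} ∪ stretch s r '' (E ∩ closedBall 0 r) := by
    rintro y ⟨hy, hyr⟩
    rw [mem_closedBall_zero_iff] at hyr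
    by_cases hy0 : y = 0
    · exact Or.inl hy0
    right
    obtain ⟨hp, hn, he⟩ := stretch_shrink hs0 hsr hy0 hyr
    have hyn : 0 < ‖y‖ := norm_pos_iff.2 hy0
    have h1 : 0 < (r - s) / r * ‖y‖ := by
      have : 0 < r - s := by linarith
      positivity
    have h3 : s + (r - s) / r * ‖y‖ ≤ r := by
      have : (r - s) / r * ‖y‖ ≤ (r - s) / r * r :=
        mul_le_mul_of_nonneg_left hyr (div_nonneg (by linarith) hr0.le)
      rw [div_mul_cancel₀ _ hr0.ne'] at this
      linarith
    refine ⟨shrinkFactor s r ‖y‖ • y, ⟨?_, ?_⟩, he⟩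
    · refine (mem_sliceCone_iff ha h0 h0' hinv (by rw [hn]; linarith) (by rw [hn]; linarith)).1 ?_
      exact smul_mem_sliceCone hy hp.le
    · rw [mem_closedBall_zero_iff, hn]
      exact h3
  refine (measure_mono hsub).trans_lt ((measure_union_le _ _).trans_lt ?_)
  rw [hausdorff_singleton hd, zero_add]
  refine ((hK.hausdorffMeasure_image_le (d := (d : ℝ)) (by positivity) _)).trans_lt ?_
  refine ENNReal.mul_lt_top (by simp) ?_
  exact finite_of_compact (by linarith) hE (isCompact_closedBall _ _) (closedBall_subset_ball hrb)

lemma measure_sliceCone_ball {n d : ℕ} {E : Set (Euc n)} {r₀ t : ℝ} (ht : 0 < t) :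
    μH[(d : ℝ)] (sliceCone E r₀ ∩ ball 0 t) =
      ENNReal.ofReal (t ^ d) * μH[(d : ℝ)] (sliceCone E r₀ ∩ ball 0 1) := by
  rw [← hausdorff_smul_cone ht, smul_inter_ball (sliceCone_cone E r₀) ht, smul_zero, mul_one]

/-- The cone and `E` have the same density: the two sets agree on the annulus, and both
measures of `B(0,r)` are multiples of `r ^ d`. -/
lemma measure_sliceCone_eq {n d : ℕ} (hd : 1 ≤ d) {E : Set (Euc n)} {a b r₀ r θ₀ : ℝ} (ha : 0 ≤ a)
    (hE : IsAAlmostMinimal n d (ball 0 b) E (fun _ => 0)) (hinv : RayInv a b E) (hθ : 0 ≤ θ₀)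
    (hconst : ∀ r : ℝ, a < r → r < b → μH[(d : ℝ)] (E ∩ ball 0 r) = ENNReal.ofReal (θ₀ * r ^ d))
    (h0 : a < r₀) (h0' : r₀ < b) (har : a < r) (hrb : r < b) :
    μH[(d : ℝ)] (sliceCone E r₀ ∩ closedBall 0 r) = μH[(d : ℝ)] (E ∩ closedBall 0 r) := by
  set C := sliceCone E r₀ with hC
  set s := (a + r) / 2 with hs
  have has : a < s := by linarith
  have hsr : s < r := by linarith
  have hs0 : 0 < s := by linarith
  have hr0 : 0 < r := by linarith
  have hagree : ∀ S : Set (Euc n), (∀ x ∈ S, a < ‖x‖ ∧ ‖x‖ < b) → C ∩ S = E ∩ S := by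
    intro S hS
    ext x
    refine and_congr_left fun hx => ?_
    exact mem_sliceCone_iff ha h0 h0' hinv (hS x hx).1 (hS x hx).2
  have hball : μH[(d : ℝ)] (C ∩ ball 0 r) = μH[(d : ℝ)] (E ∩ ball 0 r) := by
    set M := μH[(d : ℝ)] (C ∩ ball 0 1) with hM
    have hfin : μH[(d : ℝ)] (C ∩ ball 0 r) < ⊤ :=
      (measure_mono (inter_subset_inter_right _ ball_subset_closedBall)).trans_lt
        (finite_sliceCone hd ha hE hinv h0 h0' har hrb)
    have hMr := measure_sliceCone_ball (n := n) (d := d) (E := E) (r₀ := r₀) hr0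
    have hMs := measure_sliceCone_ball (n := n) (d := d) (E := E) (r₀ := r₀) hs0
    have hMfin : M ≠ ⊤ := by
      intro h
      rw [hMr, ← hC, ← hM, h, ENNReal.mul_top (by simp; positivity)] at hfin
      exact lt_irrefl _ hfin
    have cut : ∀ S : Set (Euc n), μH[(d : ℝ)] (S ∩ ball 0 r) =
        μH[(d : ℝ)] (S ∩ ball 0 s) + μH[(d : ℝ)] (S ∩ (ball 0 r \ ball 0 s)) := by
      intro S
      rw [← measure_inter_add_sdiff (S ∩ ball 0 r) (isOpen_ball (x := (0 : Euc n)) (ε := s)).measurableSet,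
        inter_assoc, inter_eq_self_of_subset_right (ball_subset_ball hsr.le), inter_sdiff_assoc]
    have c1 := cut C
    have c2 := cut E
    rw [hagree (ball 0 r \ ball 0 s) (fun x hx => by
      rw [Set.mem_sdiff, mem_ball_zero_iff, mem_ball_zero_iff] at hx
      constructor <;> linarith [hx.1, hx.2])] at c1
    set X := μH[(d : ℝ)] (E ∩ (ball 0 r \ ball 0 s)) with hX
    rw [hMr, hMs] at c1
    rw [hconst r har hrb, hconst s has (by linarith)] at c2
    have hXfin : X ≠ ⊤ := by
      intro h
      rw [h, add_top] at c2
      exact ENNReal.ofReal_ne_top c2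
    have c1' := congrArg ENNReal.toReal c1
    have c2' := congrArg ENNReal.toReal c2
    rw [ENNReal.toReal_add (ENNReal.mul_ne_top ENNReal.ofReal_ne_top hMfin) hXfin,
      ENNReal.toReal_mul, ENNReal.toReal_mul, ENNReal.toReal_ofReal (by positivity),
      ENNReal.toReal_ofReal (by positivity)] at c1'
    rw [ENNReal.toReal_add ENNReal.ofReal_ne_top hXfin,
      ENNReal.toReal_ofReal (by positivity), ENNReal.toReal_ofReal (by positivity)] at c2'
    have hpow : s ^ d < r ^ d := pow_lt_pow_left₀ hsr hs0.le (by omega)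
    have hm : M.toReal = θ₀ := by
      have : (M.toReal - θ₀) * (r ^ d - s ^ d) = 0 := by
        simp only [← hC, ← hM] at c1'
        linear_combination c1' - c2'
      rcases mul_eq_zero.1 this with h | h <;> linarith
    rw [hMr, ← hC, ← hM, hconst r har hrb, ← ENNReal.ofReal_toReal hMfin, hm, ← ENNReal.ofReal_mul
      (by positivity), mul_comm]
  have cut : ∀ S : Set (Euc n), μH[(d : ℝ)] (S ∩ closedBall 0 r) =
      μH[(d : ℝ)] (S ∩ ball 0 r) + μH[(d : ℝ)] (S ∩ sphere 0 r) := by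
    intro S
    rw [← measure_inter_add_sdiff (S ∩ closedBall 0 r)
      (isOpen_ball (x := (0 : Euc n)) (ε := r)).measurableSet,
      inter_assoc, inter_eq_self_of_subset_right ball_subset_closedBall, inter_sdiff_assoc,
      closedBall_sdiff_ball]
  rw [cut, cut, hball, hagree (sphere 0 r)]
  intro x hx
  rw [mem_sphere_zero_iff_norm] at hx
  rw [hx]
  exact ⟨har, hrb⟩

/-- Spheres inside the annulus do not charge `E`. -/
lemma null_sphere {n d : ℕ} {E : Set (Euc n)} {a b r θ₀ : ℝ}
    (hconst : ∀ r : ℝ, a < r → r < b → μH[(d : ℝ)] (E ∩ ball 0 r) = ENNReal.ofReal (θ₀ * r ^ d))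
    (har : a < r) (hrb : r < b) : μH[(d : ℝ)] (E ∩ sphere 0 r) = 0 := by
  have hle : ∀ᶠ t in 𝓝[>] r, ENNReal.ofReal (θ₀ * r ^ d) + μH[(d : ℝ)] (E ∩ sphere 0 r) ≤
      ENNReal.ofReal (θ₀ * t ^ d) := by
    filter_upwards [Ioo_mem_nhdsGT hrb] with t ht
    rw [← hconst r har hrb, ← hconst t (har.trans ht.1) ht.2,
      ← measure_inter_add_sdiff (E ∩ ball 0 t)
        (isOpen_ball (x := (0 : Euc n)) (ε := r)).measurableSet]
    refine add_le_add (measure_mono ?_) (measure_mono ?_)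
    · exact fun x hx => ⟨⟨hx.1, ball_subset_ball ht.1.le hx.2⟩, hx.2⟩
    · rintro x ⟨hx, hxs⟩
      rw [mem_sphere_zero_iff_norm] at hxs
      refine ⟨⟨hx, ?_⟩, ?_⟩
      · rw [mem_ball_zero_iff, hxs]
        exact ht.1
      · rw [mem_ball_zero_iff, hxs]
        exact lt_irrefl _
  have hcont : Tendsto (fun t : ℝ => ENNReal.ofReal (θ₀ * t ^ d)) (𝓝[>] r)
      (𝓝 (ENNReal.ofReal (θ₀ * r ^ d))) :=
    (ENNReal.continuous_ofReal.comp (by fun_prop : Continuous fun t : ℝ => θ₀ * t ^ d)).continuousAt.tendsto.mono_left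
      nhdsWithin_le_nhds
  have := ge_of_tendsto hcont hle
  by_contra hne
  exact absurd this (not_le.2 (ENNReal.lt_add_right ENNReal.ofReal_ne_top hne))

/-- Some stretching radius `s ∈ (a, r)` is generic for `φ`: the points `y` of `C` that `φ` sends to
their preimage under `stretch s r` form a null set. For distinct `s` these sets are disjoint, so only
countably many of them have positive measure. -/
lemma exists_stretch_radius {n d : ℕ} {C : Set (Euc n)} {r a : ℝ} (har : a < r) (hr : 0 < r)
    (hC : μH[(d : ℝ)] (C ∩ closedBall 0 r) < ⊤) {φ : Euc n → Euc n} (hφ : Continuous φ) :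
    ∃ s, a < s ∧ s < r ∧ μH[(d : ℝ)] (C ∩ closedBall 0 r ∩
      {y | (y ≠ 0 ∧ ‖y‖ < r) ∧ φ y = shrinkFactor s r ‖y‖ • y}) = 0 := by
  set ν := μH[(d : ℝ)].restrict (C ∩ closedBall (0 : Euc n) r) with hν
  have hfin : IsFiniteMeasure ν := ⟨by rwa [hν, Measure.restrict_apply_univ]⟩
  let Y : ℝ → Set (Euc n) := fun s => {y | (y ≠ 0 ∧ ‖y‖ < r) ∧ φ y = shrinkFactor s r ‖y‖ • y}
  have hYm : ∀ s, MeasurableSet (Y s) := by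
    intro s
    refine measurableSet_and (measurableSet_and ?_ ?_) ?_
    · exact (isOpen_ne (x := (0 : Euc n))).measurableSet
    · exact measurableSet_lt measurable_norm measurable_const
    · have hm : Measurable fun y : Euc n => shrinkFactor s r ‖y‖ :=
        (measurable_const.div measurable_norm).add_const _
      exact measurableSet_eq_fun hφ.measurable (hm.smul measurable_id)
  have hYd : Pairwise (Function.onFun Disjoint Y) := by
    intro s s' hss
    refine Set.disjoint_left.2 ?_
    rintro y ⟨⟨hy0, hyr⟩, h1⟩ ⟨-, h2⟩
    have h3 := smul_left_injective ℝ hy0 (h1.symm.trans h2)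
    have hyn : 0 < ‖y‖ := norm_pos_iff.2 hy0
    simp only [shrinkFactor] at h3
    have h4 : (s - s') * (r - ‖y‖) = 0 := by
      field_simp at h3
      linear_combination h3
    rcases mul_eq_zero.1 h4 with h | h
    · exact hss (by linarith)
    · linarith
  have hcount := Measure.countable_meas_pos_of_disjoint_iUnion (μ := ν) hYm hYd
  obtain ⟨s, hs, has, hsr⟩ := (hcount.dense_compl ℝ).exists_between har
  refine ⟨s, has, hsr, ?_⟩
  have : ν (Y s) = 0 := by
    by_contra h
    exact hs (pos_iff_ne_zero.2 h)
  rw [hν, Measure.restrict_apply (hYm s), inter_comm] at this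
  exact this

/-- The cone does not lose measure under a Lipschitz deformation of a ball of radius `r ∈ (a,b)`:
the deformation, precomposed with `stretch`, is a competitor for `E`. -/
lemma sliceCone_le_image {n d : ℕ} (hd : 1 ≤ d) {E : Set (Euc n)} {a b r₀ r θ₀ : ℝ} (ha : 0 ≤ a)
    (hE : IsAAlmostMinimal n d (ball 0 b) E (fun _ => 0)) (hinv : RayInv a b E) (hθ : 0 ≤ θ₀)
    (hconst : ∀ r : ℝ, a < r → r < b → μH[(d : ℝ)] (E ∩ ball 0 r) = ENNReal.ofReal (θ₀ * r ^ d))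
    (h0 : a < r₀) (h0' : r₀ < b) (har : a < r) (hrb : r < b) {φ : Euc n → Euc n} {K : ℝ≥0}
    (hφ : LipschitzWith K φ) (hid : ∀ x, x ∉ closedBall 0 r → φ x = x)
    (hmap : MapsTo φ (closedBall 0 r) (closedBall 0 r)) :
    μH[(d : ℝ)] (sliceCone E r₀ ∩ closedBall 0 r) ≤
      μH[(d : ℝ)] (φ '' (sliceCone E r₀ ∩ closedBall 0 r)) := by
  have hr0 : 0 < r := by linarith
  have hfin := finite_sliceCone hd ha hE hinv h0 h0' har hrb
  have hmeas := measure_sliceCone_eq hd ha hE hinv hθ hconst h0 h0' har hrb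
  set C := sliceCone E r₀ with hC
  rcases C.eq_empty_or_nonempty with hCe | ⟨y₀, hy₀⟩
  · simp [hCe]
  have h0C : (0 : Euc n) ∈ C := zero_mem_sliceCone hy₀
  obtain ⟨s, has, hsr, hYs⟩ := exists_stretch_radius har hr0 hfin hφ.continuous
  have hs0 : 0 < s := by linarith
  obtain ⟨L, hL⟩ := exists_lipschitz_stretch (n := n) hs0 hsr
  have hst_map : ∀ x : Euc n, ‖x‖ ≤ r → stretch s r x ∈ closedBall (0 : Euc n) r := fun x hx => by
    rw [mem_closedBall_zero_iff]
    exact (norm_stretch_le x).trans hx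
  have hmin := minimal_apply hE hrb (Φ := φ ∘ stretch s r) (hφ.comp hL)
    (fun x hx => by
      have hx' : r < ‖x‖ := by rwa [mem_closedBall_zero_iff, not_le] at hx
      have : stretch s r x = x := by rw [stretch, stretchFactor_of_ge hs0 hsr hx'.le, one_smul]
      rw [Function.comp_apply, this, hid x hx])
    (fun x hx => hmap (hst_map x (by rwa [mem_closedBall_zero_iff] at hx)))
  set Φ := φ ∘ stretch s r with hΦ
  have hstC : ∀ x ∈ E, ‖x‖ ≤ r → stretch s r x ∈ C := by
    intro x hx hxr
    rcases le_or_gt ‖x‖ s with h | h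
    · rw [stretch, stretchFactor_of_le hs0 h, zero_smul]
      exact h0C
    · exact smul_mem_sliceCone ((mem_sliceCone_iff ha h0 h0' hinv (by linarith) (by linarith)).2 hx)
        (stretchFactor_nonneg _)
  have hW : ∀ x, Φ x ≠ x → ‖x‖ ≤ r := by
    intro x hx
    by_contra h
    have hx' : r < ‖x‖ := not_le.1 h
    refine hx ?_
    have : stretch s r x = x := by rw [stretch, stretchFactor_of_ge hs0 hsr hx'.le, one_smul]
    rw [hΦ, Function.comp_apply, this, hid x (by rwa [mem_closedBall_zero_iff])]
  have himg : Φ '' (E ∩ {x | Φ x ≠ x}) ⊆ φ '' (C ∩ closedBall 0 r) := by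
    rintro _ ⟨x, ⟨hx, hxW⟩, rfl⟩
    exact ⟨stretch s r x, ⟨hstC x hx (hW x hxW), hst_map x (hW x hxW)⟩, rfl⟩
  -- the points of `E` in the ball that `Φ` moves, and three null sets of fixed points
  have hcover : E ∩ closedBall 0 r ⊆ (E ∩ {x | Φ x ≠ x}) ∪ ({φ 0} ∪ (E ∩ sphere 0 r ∪
      φ '' (C ∩ closedBall 0 r ∩
        {y | (y ≠ 0 ∧ ‖y‖ < r) ∧ φ y = shrinkFactor s r ‖y‖ • y}))) := by
    rintro x ⟨hx, hxr⟩
    rw [mem_closedBall_zero_iff] at hxr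
    by_cases hfix : Φ x = x
    swap
    · exact Or.inl ⟨hx, hfix⟩
    right
    rcases le_or_gt ‖x‖ s with h | h
    · left
      rw [hΦ, Function.comp_apply, stretch, stretchFactor_of_le hs0 h, zero_smul] at hfix
      exact hfix.symm
    right
    rcases hxr.eq_or_lt with h' | h'
    · left
      exact ⟨hx, by rwa [mem_sphere_zero_iff_norm]⟩
    right
    obtain ⟨hn, he⟩ := shrink_stretch hs0 hsr h hxr
    have h1 : 0 < r - s := by linarith
    have h2 : 0 < ‖x‖ - s := by linarith
    refine ⟨stretch s r x, ⟨⟨hstC x hx hxr, hst_map x hxr⟩, ⟨?_, ?_⟩, ?_⟩, hfix⟩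
    · rw [← norm_pos_iff, hn]
      positivity
    · rw [hn, div_lt_iff₀ h1]
      exact mul_lt_mul_of_pos_left (by linarith) hr0
    · rw [he]
      exact hfix
  rw [hmeas]
  refine (measure_mono hcover).trans ((measure_union_le _ _).trans ?_)
  have hnull : μH[(d : ℝ)] ({φ 0} ∪ (E ∩ sphere 0 r ∪ φ '' (C ∩ closedBall 0 r ∩
        {y | (y ≠ 0 ∧ ‖y‖ < r) ∧ φ y = shrinkFactor s r ‖y‖ • y}))) = 0 := by
    refine measure_union_null (hausdorff_singleton hd _)
      (measure_union_null (null_sphere hconst har hrb) ?_)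
    have := hφ.hausdorffMeasure_image_le (d := (d : ℝ)) (by positivity) (C ∩ closedBall 0 r ∩
        {y | (y ≠ 0 ∧ ‖y‖ < r) ∧ φ y = shrinkFactor s r ‖y‖ • y})
    rw [hYs, mul_zero] at this
    exact le_antisymm this zero_le
  rw [hnull, add_zero]
  exact hmin.trans (measure_mono himg)

/-- A deformation of a ball of radius `r ∈ (a,b)` decreases the cone no more than it
increases it. -/
lemma sliceCone_minimal_ball {n d : ℕ} (hd : 1 ≤ d) {E : Set (Euc n)} {a b r₀ r θ₀ : ℝ} (ha : 0 ≤ a)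
    (hE : IsAAlmostMinimal n d (ball 0 b) E (fun _ => 0)) (hinv : RayInv a b E) (hθ : 0 ≤ θ₀)
    (hconst : ∀ r : ℝ, a < r → r < b → μH[(d : ℝ)] (E ∩ ball 0 r) = ENNReal.ofReal (θ₀ * r ^ d))
    (h0 : a < r₀) (h0' : r₀ < b) (hclosed : IsClosed (sliceCone E r₀))
    (har : a < r) (hrb : r < b) {φ : Euc n → Euc n} {K : ℝ≥0}
    (hφ : LipschitzWith K φ) (hid : ∀ x, x ∉ closedBall 0 r → φ x = x)
    (hmap : MapsTo φ (closedBall 0 r) (closedBall 0 r)) :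
    μH[(d : ℝ)] (sliceCone E r₀ \ φ '' sliceCone E r₀) ≤
      μH[(d : ℝ)] (φ '' sliceCone E r₀ \ sliceCone E r₀) := by
  have hle := sliceCone_le_image hd ha hE hinv hθ hconst h0 h0' har hrb hφ hid hmap
  have hfin := finite_sliceCone hd ha hE hinv h0 h0' har hrb
  set C := sliceCone E r₀ with hC
  set P := C ∩ closedBall (0 : Euc n) r with hP
  set Q := φ '' P with hQ
  have hPc : IsCompact P := (isCompact_closedBall _ _).inter_left hclosed
  have hQc : IsCompact Q := hPc.image hφ.continuous
  have hPm := hPc.isClosed.measurableSet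
  have hQm := hQc.isClosed.measurableSet
  have s1 : C \ φ '' C ⊆ P \ Q := by
    rintro x ⟨hx, hxφ⟩
    refine ⟨⟨hx, ?_⟩, fun h => hxφ (image_mono inter_subset_left h)⟩
    by_contra h
    exact hxφ ⟨x, hx, hid x h⟩
  have s2 : Q \ P ⊆ φ '' C \ C := by
    rintro x ⟨⟨y, hy, rfl⟩, hxP⟩
    exact ⟨⟨y, hy.1, rfl⟩, fun h => hxP ⟨h, hmap hy.2⟩⟩
  refine (measure_mono s1).trans (le_trans ?_ (measure_mono s2))
  rw [← measure_inter_add_sdiff P hQm, ← measure_inter_add_sdiff Q hPm, inter_comm Q P] at hle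
  refine (ENNReal.add_le_add_iff_left ?_).1 hle
  exact ((measure_mono inter_subset_left).trans_lt hfin).ne

open scoped Pointwise in
/-- By homogeneity, a competitor for the cone in a large ball can be scaled down to a ball of radius
less than `b`, where it is compared with `E`. -/
lemma sliceCone_minimal {n d : ℕ} (hd : 1 ≤ d) {E : Set (Euc n)} {a b r₀ θ₀ : ℝ} (ha : 0 ≤ a)
    (hE : IsAAlmostMinimal n d (ball 0 b) E (fun _ => 0)) (hinv : RayInv a b E) (hθ : 0 ≤ θ₀)
    (hconst : ∀ r : ℝ, a < r → r < b → μH[(d : ℝ)] (E ∩ ball 0 r) = ENNReal.ofReal (θ₀ * r ^ d))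
    (h0 : a < r₀) (h0' : r₀ < b) : IsMinimalSet n d (sliceCone E r₀) := by
  have hr0 : 0 < r₀ := by linarith
  have hclosed : IsClosed (sliceCone E r₀) := by
    refine isClosed_sliceCone ?_
    have := (isCompact_inter_closedBall hE h0').inter_right (isClosed_sphere (x := 0) (ε := r₀))
    rwa [inter_assoc, inter_eq_self_of_subset_right sphere_subset_closedBall] at this
  refine ⟨hclosed, fun R hR => ?_, ?_⟩
  · have h1 := (measure_mono (inter_subset_inter_right _ ball_subset_closedBall)).trans_lt
      (finite_sliceCone hd ha hE hinv h0 h0' h0 h0')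
    rw [measure_sliceCone_ball hr0] at h1
    rw [measure_sliceCone_ball hR]
    refine ENNReal.mul_lt_top ENNReal.ofReal_lt_top (lt_top_iff_ne_top.2 fun h => ?_)
    rw [h, ENNReal.mul_top (by simp; positivity)] at h1
    exact lt_irrefl _ h1
  · rintro φ ⟨K, hK⟩ hbd
    obtain ⟨R₁, hR₁⟩ := hbd.subset_closedBall (0 : Euc n)
    obtain ⟨R₂, hR₂⟩ := ((isCompact_closedBall (0 : Euc n) R₁).image hK.continuous).isBounded.subset_closedBall 0
    set R := max 1 (max R₁ R₂) with hR
    have hR0 : 0 < R := lt_of_lt_of_le one_pos (le_max_left _ _)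
    have hRR₁ : R₁ ≤ R := (le_max_left _ _).trans (le_max_right _ _)
    have hRR₂ : R₂ ≤ R := (le_max_right _ _).trans (le_max_right _ _)
    have hid : ∀ x, R < ‖x‖ → φ x = x := by
      intro x hx
      by_contra h
      have := hR₁ (show x ∈ {x | φ x ≠ x} from h)
      rw [mem_closedBall_zero_iff] at this
      linarith
    have hmap : ∀ x, ‖x‖ ≤ R → ‖φ x‖ ≤ R := by
      intro x hx
      by_cases h : φ x = x
      · rwa [h]
      · have := hR₂ (mem_image_of_mem φ (hR₁ (show x ∈ {x | φ x ≠ x} from h)))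
        rw [mem_closedBall_zero_iff] at this
        linarith
    -- conjugate by the dilation that takes the ball of radius `R` to the ball of radius `r₀`
    set l := r₀ / R with hl
    have hl0 : 0 < l := by positivity
    have hlR : l * R = r₀ := by rw [hl]; field_simp
    have hnl : ∀ x : Euc n, ‖l • x‖ = l * ‖x‖ := fun x => by
      rw [norm_smul, Real.norm_eq_abs, abs_of_pos hl0]
    have hnl' : ∀ x : Euc n, ‖l⁻¹ • x‖ = l⁻¹ * ‖x‖ := fun x => by
      rw [norm_smul, Real.norm_eq_abs, abs_of_pos (by positivity)]
    set φ' : Euc n → Euc n := fun x => l • φ (l⁻¹ • x) with hφ'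
    have hlip : ∃ K', LipschitzWith K' φ' :=
      ⟨_, (lipschitzWith_smul l).comp (hK.comp (lipschitzWith_smul l⁻¹))⟩
    obtain ⟨K', hK'⟩ := hlip
    have key := sliceCone_minimal_ball hd ha hE hinv hθ hconst h0 h0' hclosed h0 h0' hK'
      (fun x hx => by
        rw [mem_closedBall_zero_iff, not_le] at hx
        simp only [hφ']
        rw [hid, smul_inv_smul₀ hl0.ne']
        rw [hnl', lt_inv_mul_iff₀ hl0, hlR]
        exact hx)
      (fun x hx => by
        rw [mem_closedBall_zero_iff] at hx ⊢
        simp only [hφ']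
        rw [hnl, ← hlR]
        refine mul_le_mul_of_nonneg_left (hmap _ ?_) hl0.le
        rw [hnl', inv_mul_le_iff₀ hl0, hlR]
        exact hx)
    set C := sliceCone E r₀ with hC
    have hlC : l • C = C := by
      ext y
      rw [mem_smul_set_iff_inv_smul_mem₀ hl0.ne']
      refine ⟨fun h => ?_, fun h => sliceCone_cone E r₀ y h _ (by positivity)⟩
      have := sliceCone_cone E r₀ _ h l hl0
      rwa [smul_inv_smul₀ hl0.ne'] at this
    have himg : φ' '' C = l • (φ '' C) := by
      conv_lhs => rw [← hlC]
      ext y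
      constructor
      · rintro ⟨_, ⟨x, hx, rfl⟩, rfl⟩
        refine ⟨φ x, ⟨x, hx, rfl⟩, ?_⟩
        simp only [hφ', inv_smul_smul₀ hl0.ne']
      · rintro ⟨_, ⟨x, hx, rfl⟩, rfl⟩
        refine ⟨l • x, ⟨x, hx, rfl⟩, ?_⟩
        simp only [hφ', inv_smul_smul₀ hl0.ne']
    have e1 : C \ φ' '' C = l • (C \ φ '' C) := by
      rw [smul_set_sdiff₀ hl0.ne', hlC, himg]
    have e2 : φ' '' C \ C = l • (φ '' C \ C) := by
      rw [smul_set_sdiff₀ hl0.ne', hlC, himg]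
    rw [e1, e2, hausdorff_smul_cone hl0, hausdorff_smul_cone hl0] at key
    refine (ENNReal.mul_le_mul_iff_right ?_ ENNReal.ofReal_ne_top).1 key
    simp
    positivity

/-! ### Degenerate dimensions and the conclusion -/

lemma empty_minimal (n d : ℕ) : IsMinimalSet n d ∅ := by
  refine ⟨isClosed_empty, fun R _ => by simp, fun φ _ _ => by simp⟩

/-- In dimension `0`, where `H⁰` counts points, constancy of the measure empties the annulus. -/
lemma annulus_empty_of_dim_zero {n : ℕ} {E : Set (Euc n)} {a b θ₀ : ℝ}
    (hconst : ∀ r : ℝ, a < r → r < b →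
      μH[((0 : ℕ) : ℝ)] (E ∩ ball 0 r) = ENNReal.ofReal (θ₀ * r ^ 0))
    {x : Euc n} (hx : x ∈ E) (hxa : a < ‖x‖) (hxb : ‖x‖ < b) : False := by
  obtain ⟨r, hr1, hr2⟩ := exists_between hxb
  have h1 := hconst ‖x‖ hxa hxb
  have h2 := hconst r (hxa.trans hr1) hr2
  rw [pow_zero, mul_one] at h1 h2
  have h3 : ENNReal.ofReal θ₀ + 1 ≤ ENNReal.ofReal θ₀ := by
    conv_rhs => rw [← h2]
    rw [← h1, ← measure_inter_add_sdiff (E ∩ ball 0 r)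
        (isOpen_ball (x := (0 : Euc n)) (ε := ‖x‖)).measurableSet,
        ← Measure.hausdorffMeasure_zero_singleton x]
    rw [Nat.cast_zero]
    refine add_le_add (measure_mono ?_) (measure_mono ?_)
    · exact fun y hy => ⟨⟨hy.1, ball_subset_ball hr1.le hy.2⟩, hy.2⟩
    · rw [singleton_subset_iff]
      refine ⟨⟨hx, by rwa [mem_ball_zero_iff]⟩, ?_⟩
      rw [mem_ball_zero_iff]
      exact lt_irrefl _
  exact absurd h3 (not_le.2 (ENNReal.lt_add_right ENNReal.ofReal_ne_top one_ne_zero))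

lemma hausdorff_eq_zero_of_lt {n d : ℕ} (h : n < d) (S : Set (Euc n)) : μH[(d : ℝ)] S = 0 := by
  have hdim : dimH S < ((d : ℝ≥0) : ℝ≥0∞) := by
    refine (dimH_mono (subset_univ S)).trans_lt ?_
    rw [Real.dimH_univ_eq_finrank, finrank_euclideanSpace_fin]
    exact_mod_cast h
  have := hausdorffMeasure_of_dimH_lt hdim
  simpa using this

/-- **Theorem 6.2.** If `E` is a reduced minimal set of dimension `d` in `B(0,b) ⊆ ℝⁿ`
(i.e. reduced A-almost-minimal with gauge function `h = 0`) whose density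
`r^{-d} H^d(E ∩ B(0,r))` is constant, equal to `θ₀`, on `(a,b)`, then `E` coincides on
the annulus `B(0,b) ∖ B̄(0,a)` with a reduced minimal cone centered at the origin. -/
theorem constant_density_implies_cone (n d : ℕ) (b : ℝ) (hb : 0 < b)
    (E : Set (Euc n))
    (hmin : IsAAlmostMinimal n d (ball (0 : Euc n) b) E (fun _ => 0))
    (hred : IsReducedSet n d E)
    (a θ₀ : ℝ) (ha : 0 ≤ a) (hab : a < b) (hθ₀ : 0 ≤ θ₀)
    (hconst : ∀ r : ℝ, a < r → r < b →
      μH[(d:ℝ)] (E ∩ ball (0 : Euc n) r) = ENNReal.ofReal (θ₀ * r ^ d)) :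
    ∃ C : Set (Euc n), IsMinimalSet n d C ∧ IsReducedSet n d C ∧ IsConeAt0 C ∧
      E ∩ (ball (0 : Euc n) b \ closedBall (0 : Euc n) a) =
        C ∩ (ball (0 : Euc n) b \ closedBall (0 : Euc n) a) := by
  rcases Nat.eq_zero_or_pos d with rfl | hd
  · refine ⟨∅, empty_minimal n 0, fun x hx => hx.elim, fun x hx => hx.elim, ?_⟩
    rw [empty_inter, eq_empty_iff_forall_notMem]
    rintro x ⟨hx, hxb, hxa⟩
    rw [mem_ball_zero_iff] at hxb
    rw [mem_closedBall_zero_iff, not_le] at hxa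
    exact annulus_empty_of_dim_zero hconst hx hxa hxb
  rcases lt_or_ge n d with hnd | hdn
  · refine ⟨∅, empty_minimal n d, fun x hx => hx.elim, fun x hx => hx.elim, ?_⟩
    rw [empty_inter, eq_empty_iff_forall_notMem]
    rintro x ⟨hx, -⟩
    exact (hred x hx 1 one_pos).ne' (hausdorff_eq_zero_of_lt hnd _)
  have hinv : RayInv a b E := fun x hx hxa t ht hta htb =>
    ray_invariant hd hdn ha hb hmin hred hconst hx hxa ht hta htb
  obtain ⟨r₀, h0, h0'⟩ := exists_between hab
  refine ⟨sliceCone E r₀, sliceCone_minimal hd ha hmin hinv hθ₀ hconst h0 h0',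
    reduced_sliceCone ha h0 h0' hinv hred, sliceCone_cone E r₀, ?_⟩
  ext x
  refine and_congr_left fun hx => ?_
  rw [Set.mem_sdiff, mem_ball_zero_iff, mem_closedBall_zero_iff, not_le] at hx
  exact (mem_sliceCone_iff ha h0 h0' hinv hx.2 hx.1).symm
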